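/- Let 1 < p < ∞, 1 ≤ r ≤ 2, r ≤ t < ∞ with (r < 2 or t > r), and N > 0. There exists a constant C such that for every continuous Littlewood–Paley family (f_i)_{i∈ℤ} with band width N and every jump collection (N_k)_{k≥0}, one has ‖ (Σ_{k≥1} |Σ_{N_{k−1}(x) < i ≤ N_k(x)} f_i(x)|^t)^{1/t} ‖_{L^p(dx)} ≤ C ‖ (Σ_{i∈ℤ} |f_i|^r)^{1/r} ‖_{L^p(ℝ)}. -/

import Mathlib

open MeasureTheory ENNReal
open scoped FourierTransform NNReal

noncomputable section

/-- A jump collection: a sequence of measurable integer-valued functions on `ℝ`,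
nondecreasing in the index. -/
def IsJumpCollection (Nk : ℕ → ℝ → ℤ) : Prop :=
  (∀ k, Measurable (Nk k)) ∧ ∀ (k : ℕ) (x : ℝ), Nk k x ≤ Nk (k + 1) x

/-- A continuous Littlewood–Paley family with band width `Nb`: a sequence of Schwartz
functions whose Fourier transforms are supported in the annuli
`{ξ : 2^(i-Nb) < |ξ| < 2^(i+Nb)}`. -/
def IsContLPFamily (Nb : ℝ) (f : ℤ → SchwartzMap ℝ ℂ) : Prop :=
  ∀ i : ℤ, ∀ ξ : ℝ, 𝓕 (⇑(f i)) ξ ≠ 0 →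
    (2 : ℝ) ^ ((i : ℝ) - Nb) < |ξ| ∧ |ξ| < (2 : ℝ) ^ ((i : ℝ) + Nb)

/-!
Write `f i` as the derivative of a Schwartz function and expand it into dyadic martingale
differences. By Bernstein's inequality the difference of generation `i + m` is at most a constant
times `2 ^ (-δ |m|) * (A (|f i| ^ s)) ^ (1 / s)`, where `1 < s < min p r`, `δ = 1 - 1 / s` and `A`
is a Poisson average. For fixed `m` these differences, over all `i`, form a martingale difference
sequence of dyadic type: a swap of the two halves of each dyadic interval changes their sign. For
such sequences orthogonality bounds the integral of the number of greedily chosen jumps, which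
gives the weak type variational inequality, and a good-`λ` argument upgrades it to every exponent
`p`. The Poisson averages are removed by duality with the maximal function, and Minkowski's
inequality sums over `m`.
-/

namespace Lepingle

section Inequalities

variable {α ι : Type*}

theorem lintegral_Lp_finset_sum_le [MeasurableSpace α] {μ : Measure α} (s : Finset ι)
    {g : ι → α → ℝ≥0∞} (hg : ∀ i, Measurable (g i)) {p : ℝ} (hp : 1 ≤ p) :
    (∫⁻ x, (∑ i ∈ s, g i x) ^ p ∂μ) ^ (1 / p) ≤ ∑ i ∈ s, (∫⁻ x, g i x ^ p ∂μ) ^ (1 / p) := by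
  simpa [eLpNorm'] using
    eLpNorm'_sum_le (f := g) (s := s) (μ := μ) (fun i _ => (hg i).aestronglyMeasurable) hp

theorem iSup_rpow {κ : Sort*} (u : κ → ℝ≥0∞) {p : ℝ} (hp : 0 < p) :
    (⨆ i, u i) ^ p = ⨆ i, u i ^ p :=
  (ENNReal.orderIsoRpow p hp).map_iSup u

theorem lintegral_tsum_rpow [Countable ι] [MeasurableSpace α] {μ : Measure α}
    {g : ι → α → ℝ≥0∞} (hg : ∀ i, Measurable (g i)) {p : ℝ} (hp : 0 < p) :
    ∫⁻ x, (∑' i, g i x) ^ p ∂μ = ⨆ s : Finset ι, ∫⁻ x, (∑ i ∈ s, g i x) ^ p ∂μ := by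
  simp_rw [ENNReal.tsum_eq_iSup_sum (f := fun i => g i _), iSup_rpow _ hp]
  refine lintegral_iSup_directed
    (fun s => ((Finset.measurable_sum s fun i _ => hg i).pow_const p).aemeasurable) ?_
  refine directed_of_isDirected_le fun s u hsu x => ?_
  exact ENNReal.rpow_le_rpow (Finset.sum_le_sum_of_subset hsu) hp.le

theorem lintegral_Lp_tsum_le [Countable ι] [MeasurableSpace α] {μ : Measure α}
    {g : ι → α → ℝ≥0∞} (hg : ∀ i, Measurable (g i)) {p : ℝ} (hp : 1 ≤ p) :
    (∫⁻ x, (∑' i, g i x) ^ p ∂μ) ^ (1 / p) ≤ ∑' i, (∫⁻ x, g i x ^ p ∂μ) ^ (1 / p) := by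
  rw [lintegral_tsum_rpow hg (by positivity), iSup_rpow _ (by positivity)]
  exact iSup_le fun s => (lintegral_Lp_finset_sum_le s hg hp).trans (ENNReal.sum_le_tsum s)

theorem tsum_rpow_antitone (g : ι → ℝ≥0∞) {p q : ℝ} (hp : 0 < p) (hpq : p ≤ q) :
    (∑' k, g k ^ q) ^ (1 / q) ≤ (∑' k, g k ^ p) ^ (1 / p) := by
  have hq : 0 < q := hp.trans_le hpq
  have hqp : 0 ≤ q - p := sub_nonneg.2 hpq
  set S := (∑' k, g k ^ p) ^ (1 / p) with hS
  have hSp : S ^ p = ∑' k, g k ^ p := by rw [hS, one_div, ENNReal.rpow_inv_rpow hp.ne']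
  have le_S (k) : g k ≤ S := by
    rw [← ENNReal.rpow_le_rpow_iff hp, hSp]
    exact ENNReal.le_tsum k
  rw [one_div, ENNReal.rpow_inv_le_iff hq]
  calc ∑' k, g k ^ q = ∑' k, g k ^ p * g k ^ (q - p) := by
        simp_rw [← ENNReal.rpow_add_of_nonneg _ _ hp.le hqp, add_sub_cancel]
    _ ≤ ∑' k, g k ^ p * S ^ (q - p) := by gcongr with k; exact le_S k
    _ = S ^ q := by
        rw [ENNReal.tsum_mul_right, ← hSp, ← ENNReal.rpow_add_of_nonneg _ _ hp.le hqp,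
          add_sub_cancel]

end Inequalities

/-! ### Strong variation -/

section Variation

variable {ι E : Type*} [Preorder ι] [LocallyFiniteOrder ι] [NormedAddCommGroup E]

/-- The strong `t`-variation of the sequence of partial sums of `a`: the supremum over increasing
sequences `N` of the `ℓ^t` norm of the increments `∑_{N_k ≤ i < N_{k+1}} a_i`. -/
def variation (t : ℝ) (a : ι → E) : ℝ≥0∞ :=
  ⨆ N : ℕ →o ι, (∑' k, ‖∑ i ∈ Finset.Ico (N k) (N (k + 1)), a i‖ₑ ^ t) ^ (1 / t)

theorem le_variation (t : ℝ) (a : ι → E) {N : ℕ → ι} (hN : Monotone N) :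
    (∑' k, ‖∑ i ∈ Finset.Ico (N k) (N (k + 1)), a i‖ₑ ^ t) ^ (1 / t) ≤ variation t a :=
  le_iSup (fun N : ℕ →o ι =>
    (∑' k, ‖∑ i ∈ Finset.Ico (N k) (N (k + 1)), a i‖ₑ ^ t) ^ (1 / t)) ⟨N, hN⟩

theorem variation_le_tsum_variation {κ : Type*} [Countable κ] {t : ℝ} (ht : 1 ≤ t) {a : ι → E}
    {b : κ → ι → E} (hab : ∀ s : Finset ι, ‖∑ i ∈ s, a i‖ₑ ≤ ∑' j, ‖∑ i ∈ s, b j i‖ₑ) :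
    variation t a ≤ ∑' j, variation t (b j) := by
  refine iSup_le fun N => ?_
  calc (∑' k, ‖∑ i ∈ Finset.Ico (N k) (N (k + 1)), a i‖ₑ ^ t) ^ (1 / t)
      ≤ (∑' k, (∑' j, ‖∑ i ∈ Finset.Ico (N k) (N (k + 1)), b j i‖ₑ) ^ t) ^ (1 / t) := by
        gcongr with k
        exact hab _
    _ ≤ ∑' j, (∑' k, ‖∑ i ∈ Finset.Ico (N k) (N (k + 1)), b j i‖ₑ ^ t) ^ (1 / t) := by
        simpa only [lintegral_count] using lintegral_Lp_tsum_le (μ := (.count : Measure ℕ))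
          (g := fun j k => ‖∑ i ∈ Finset.Ico (N k) (N (k + 1)), b j i‖ₑ)
          (fun _ => .of_discrete) ht
    _ ≤ ∑' j, variation t (b j) := ENNReal.tsum_le_tsum fun j => le_variation t (b j) N.monotone

theorem variation_add_le {t : ℝ} (ht : 1 ≤ t) (a b : ι → E) :
    variation t (a + b) ≤ variation t a + variation t b := by
  have h := variation_le_tsum_variation (κ := Bool) (b := fun j => bif j then a else b)
    (a := a + b) ht fun s => by
      simpa [Finset.sum_add_distrib, tsum_bool, add_comm] using
        enorm_add_le (∑ i ∈ s, a i) (∑ i ∈ s, b i)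
  simpa [tsum_bool, add_comm] using h

theorem variation_const_smul {𝕜 : Type*} [NormedField 𝕜] [NormedSpace 𝕜 E] {t : ℝ} (ht : 0 < t)
    (c : 𝕜) (a : ι → E) : variation t (c • a) = ‖c‖ₑ * variation t a := by
  simp_rw [variation, ENNReal.mul_iSup, Pi.smul_apply, ← Finset.smul_sum, enorm_smul,
    ENNReal.mul_rpow_of_nonneg _ _ ht.le, ENNReal.tsum_mul_left]
  simp_rw [one_div, ENNReal.mul_rpow_of_nonneg _ _ (inv_nonneg.2 ht.le),
    ENNReal.rpow_rpow_inv ht.ne']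

end Variation

section VariationLinearOrder

variable {ι E : Type*} [LinearOrder ι] [LocallyFiniteOrder ι] [NormedAddCommGroup E]

theorem sum_sum_Ico_le_tsum (N : ℕ →o ι) (g : ι → ℝ≥0∞) (K : ℕ) :
    ∑ k ∈ Finset.range K, ∑ i ∈ Finset.Ico (N k) (N (k + 1)), g i ≤ ∑' i, g i := by
  rw [← Finset.sum_biUnion]
  · exact ENNReal.sum_le_tsum _
  · intro k _ l _ hkl
    rw [Function.onFun, ← Finset.disjoint_coe, Finset.coe_Ico, Finset.coe_Ico]
    exact N.monotone.pairwise_disjoint_on_Ico_succ hkl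

theorem variation_le_tsum {t : ℝ} (ht : 1 ≤ t) (a : ι → E) : variation t a ≤ ∑' i, ‖a i‖ₑ := by
  refine iSup_le fun N => ?_
  calc (∑' k, ‖∑ i ∈ Finset.Ico (N k) (N (k + 1)), a i‖ₑ ^ t) ^ (1 / t)
      ≤ ∑' k, ‖∑ i ∈ Finset.Ico (N k) (N (k + 1)), a i‖ₑ := by
        simpa using tsum_rpow_antitone
          (fun k => ‖∑ i ∈ Finset.Ico (N k) (N (k + 1)), a i‖ₑ) one_pos ht
    _ ≤ ∑' i, ‖a i‖ₑ := ENNReal.tsum_le_of_sum_range_le fun K =>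
        (Finset.sum_le_sum fun k _ => enorm_sum_le _ _).trans (sum_sum_Ico_le_tsum N _ K)

theorem variation_indicator_Iio_le (t : ℝ) (m : ι) (a : ι → E) :
    variation t ((Set.Iio m).indicator a) ≤ variation t a := by
  refine iSup_le fun N => ?_
  have sum_clamp (k : ℕ) : ∑ i ∈ Finset.Ico (N k) (N (k + 1)), (Set.Iio m).indicator a i
      = ∑ i ∈ Finset.Ico (min (N k) m) (min (N (k + 1)) m), a i := by
    classical
    simp_rw [Set.indicator_apply, ← Finset.sum_filter]
    congr 1
    ext i
    simp only [Finset.mem_filter, Finset.mem_Ico, Set.mem_Iio, lt_min_iff, min_le_iff]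
    refine ⟨fun h => ⟨.inl h.1.1, h.1.2, h.2⟩, fun h => ⟨⟨?_, h.2.1⟩, h.2.2⟩⟩
    exact h.1.resolve_right h.2.2.not_ge
  simp_rw [sum_clamp]
  exact le_variation t a fun _ _ h => min_le_min_right m (N.monotone h)

theorem variation_indicator_Iio_mono (t : ℝ) (a : ι → E) :
    Monotone fun m => variation t ((Set.Iio m).indicator a) := by
  intro m m' h
  have := variation_indicator_Iio_le t m ((Set.Iio m').indicator a)
  rwa [Set.indicator_indicator, Set.inter_eq_left.2 (Set.Iio_subset_Iio h)] at this

end VariationLinearOrder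

section GreedyJumps

variable {E : Type*} [SeminormedAddCommGroup E] {lam : ℝ≥0} {g g' : ℕ → E} {m n : ℕ}

/-- Greedy counting of the jumps of size `lam` of the partial sums of `g`: the state after reading
`g 0, …, g (n - 1)` consists of the deviation from the current anchor and of the number of jumps
so far. A jump is recorded, and the anchor moved, as soon as the deviation reaches `lam`. -/
def greedyJumps (lam : ℝ≥0) (g : ℕ → E) : ℕ → E × ℕ
  | 0 => (0, 0)
  | n + 1 =>
    if lam ≤ ‖(greedyJumps lam g n).1 + g n‖₊ then (0, (greedyJumps lam g n).2 + 1)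
    else ((greedyJumps lam g n).1 + g n, (greedyJumps lam g n).2)

/-- The deviation component of `greedyJumps`. -/
def jumpDeviation (lam : ℝ≥0) (g : ℕ → E) (n : ℕ) : E := (greedyJumps lam g n).1

/-- The counting component of `greedyJumps`. -/
def jumpCount (lam : ℝ≥0) (g : ℕ → E) (n : ℕ) : ℕ := (greedyJumps lam g n).2

@[simp] theorem jumpDeviation_zero : jumpDeviation lam g 0 = 0 := rfl

@[simp] theorem jumpCount_zero : jumpCount lam g 0 = 0 := rfl

theorem jumpDeviation_succ : jumpDeviation lam g (n + 1) =
    if lam ≤ ‖jumpDeviation lam g n + g n‖₊ then 0 else jumpDeviation lam g n + g n := by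
  rw [jumpDeviation, greedyJumps]
  exact apply_ite Prod.fst _ _ _

theorem jumpCount_succ : jumpCount lam g (n + 1) =
    if lam ≤ ‖jumpDeviation lam g n + g n‖₊ then jumpCount lam g n + 1 else jumpCount lam g n := by
  rw [jumpCount, greedyJumps]
  exact apply_ite Prod.snd _ _ _

theorem greedyJumps_congr (h : ∀ i < n, g i = g' i) :
    greedyJumps lam g n = greedyJumps lam g' n := by
  induction n with
  | zero => rfl
  | succ n ih => simp only [greedyJumps, ih fun i hi => h i (by omega), h n n.lt_succ_self]

theorem jumpCount_mono (lam : ℝ≥0) (g : ℕ → E) : Monotone (jumpCount lam g) :=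
  monotone_nat_of_le_succ fun n => by rw [jumpCount_succ]; split_ifs <;> simp

theorem nnnorm_jumpDeviation_lt (hlam : 0 < lam) (g : ℕ → E) (n : ℕ) :
    ‖jumpDeviation lam g n‖₊ < lam := by
  induction n with
  | zero => simpa
  | succ n _ =>
    rw [jumpDeviation_succ]
    split_ifs with h
    · simpa
    · exact not_le.1 h

theorem jumpDeviation_eq_add_sum (hmn : m ≤ n) (h : jumpCount lam g n = jumpCount lam g m) :
    jumpDeviation lam g n = jumpDeviation lam g m + ∑ i ∈ Finset.Ico m n, g i := by
  induction n, hmn using Nat.le_induction with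
  | base => simp
  | succ n hmn ih =>
    have hm : jumpCount lam g m ≤ jumpCount lam g n := jumpCount_mono lam g hmn
    have hn : jumpCount lam g n ≤ jumpCount lam g (n + 1) := jumpCount_mono lam g n.le_succ
    rw [Finset.sum_Ico_succ_top hmn, ← add_assoc, ← ih (by omega), jumpDeviation_succ, if_neg]
    intro hjump
    rw [jumpCount_succ, if_pos hjump] at h
    omega

theorem jumpCount_add_one_le (hlam : 0 < lam) (hmn : m ≤ n)
    (h : 2 * lam ≤ ‖∑ i ∈ Finset.Ico m n, g i‖₊) :
    jumpCount lam g m + 1 ≤ jumpCount lam g n := by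
  by_contra hcount
  have heq : jumpCount lam g n = jumpCount lam g m :=
    le_antisymm (by omega) (jumpCount_mono lam g hmn)
  refine h.not_gt ?_
  calc ‖∑ i ∈ Finset.Ico m n, g i‖₊ = ‖jumpDeviation lam g n - jumpDeviation lam g m‖₊ := by
        rw [jumpDeviation_eq_add_sum hmn heq, add_sub_cancel_left]
    _ ≤ ‖jumpDeviation lam g n‖₊ + ‖jumpDeviation lam g m‖₊ := nnnorm_sub_le _ _
    _ < lam + lam := by gcongr <;> exact nnnorm_jumpDeviation_lt hlam g _
    _ = 2 * lam := (two_mul lam).symm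

theorem enorm_jumpDeviation_sq_add_le (lam : ℝ≥0) (g : ℕ → E) (n : ℕ) :
    ‖jumpDeviation lam g (n + 1)‖ₑ ^ 2 + (lam : ℝ≥0∞) ^ 2 * jumpCount lam g (n + 1)
      ≤ ‖jumpDeviation lam g n + g n‖ₑ ^ 2 + (lam : ℝ≥0∞) ^ 2 * jumpCount lam g n := by
  rw [jumpDeviation_succ, jumpCount_succ]
  split_ifs with h
  · have hlam : (lam : ℝ≥0∞) ≤ ‖jumpDeviation lam g n + g n‖ₑ := by
      rw [enorm_eq_nnnorm]
      exact_mod_cast h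
    calc ‖(0 : E)‖ₑ ^ 2 + (lam : ℝ≥0∞) ^ 2 * ((jumpCount lam g n + 1 : ℕ) : ℝ≥0∞)
        = (lam : ℝ≥0∞) ^ 2 + (lam : ℝ≥0∞) ^ 2 * jumpCount lam g n := by
          rw [enorm_eq_nnnorm, nnnorm_zero]
          push_cast
          ring
      _ ≤ _ := by gcongr
  · exact le_rfl

end GreedyJumps

/-! ### Martingale differences of dyadic type -/

section SwapFiltration

variable {α κ : Type*}

/-- A sequence of martingale differences of dyadic type: `d n` is constant on the fibres of
`q (n + 1)`, changes sign under the swap `σ n`, and has constant norm on the fibres of `q n`. -/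
structure IsSwapDifference {E : Type*} [NormedAddCommGroup E] (q : ℕ → α → κ) (σ : ℕ → α → α)
    (d : ℕ → α → E) : Prop where
  adapted (n : ℕ) : (d n).FactorsThrough (q (n + 1))
  anti (n : ℕ) (x : α) : d n (σ n x) = -d n x
  norm_predictable (n : ℕ) : (fun x => ‖d n x‖).FactorsThrough (q n)

theorem IsSwapDifference.enorm_predictable {E : Type*} [NormedAddCommGroup E] {q : ℕ → α → κ}
    {σ : ℕ → α → α} {d : ℕ → α → E} (D : IsSwapDifference q σ d) (n : ℕ) :
    (fun x => ‖d n x‖ₑ).FactorsThrough (q n) := fun x y hxy => by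
  simpa only [ofReal_norm] using congrArg ENNReal.ofReal (D.norm_predictable n hxy)

variable [MeasurableSpace α] [MeasurableSpace κ]

/-- An increasing sequence of countable partitions of a measure space, the `n`-th one being into
the fibres of `q n`, together with measure preserving maps `σ n` respecting the `n`-th partition.
The model is the dyadic filtration of the line, `σ n` exchanging the two halves of every dyadic
interval of generation `n`. -/
structure SwapFiltration (q : ℕ → α → κ) (σ : ℕ → α → α) (μ : Measure α) : Prop where
  measurable (n : ℕ) : Measurable (q n)
  nested (n : ℕ) : (q n).FactorsThrough (q (n + 1))
  measurePreserving (n : ℕ) : MeasurePreserving (σ n) μ μ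
  apply_swap (n : ℕ) (x : α) : q n (σ n x) = q n x

variable {q : ℕ → α → κ} {σ : ℕ → α → α} {μ : Measure α}

namespace SwapFiltration

theorem factorsThrough_of_le (H : SwapFiltration q σ μ) {m n : ℕ} (h : m ≤ n) :
    (q m).FactorsThrough (q n) := by
  induction n, h using Nat.le_induction with
  | base => exact fun _ _ hxy => hxy
  | succ n _ ih => exact fun _ _ hxy => ih (H.nested n hxy)

theorem measurable_of_factorsThrough [DiscreteMeasurableSpace κ] (H : SwapFiltration q σ μ)
    {β : Type*} [MeasurableSpace β] {n : ℕ} {h : α → β} (hh : h.FactorsThrough (q n)) :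
    Measurable h := by
  rcases isEmpty_or_nonempty α with _ | ⟨⟨x⟩⟩
  · exact measurable_of_empty h
  · rw [← hh.extend_comp fun _ => h x]
    exact Measurable.of_discrete.comp (H.measurable n)

end SwapFiltration

namespace IsSwapDifference

variable {E : Type*} [NormedAddCommGroup E] {d : ℕ → α → E}

theorem adapted_of_lt (D : IsSwapDifference q σ d) (H : SwapFiltration q σ μ) {i n : ℕ}
    (h : i < n) : (d i).FactorsThrough (q n) :=
  fun _ _ hxy => D.adapted i (H.factorsThrough_of_le h hxy)

theorem smul_of_predictable (D : IsSwapDifference q σ d) (H : SwapFiltration q σ μ)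
    {𝕜 : Type*} [NormedField 𝕜] [NormedSpace 𝕜 E] {c : ℕ → α → 𝕜}
    (hc : ∀ n, (c n).FactorsThrough (q n)) : IsSwapDifference q σ fun n x => c n x • d n x where
  adapted n x y h := by simp only [hc n (H.nested n h), D.adapted n h]
  anti n x := by rw [D.anti, hc n (H.apply_swap n x), smul_neg]
  norm_predictable n x y h := by
    have hd : ‖d n x‖ = ‖d n y‖ := D.norm_predictable n h
    simp only [norm_smul, hc n h, hd]

theorem greedyJumps_factorsThrough (D : IsSwapDifference q σ d) (H : SwapFiltration q σ μ)
    (lam : ℝ≥0) (n : ℕ) : (fun x => greedyJumps lam (d · x) n).FactorsThrough (q n) :=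
  fun _ _ hxy => greedyJumps_congr fun _ hi => D.adapted_of_lt H hi hxy

variable [DiscreteMeasurableSpace κ]

theorem measurable_enorm (D : IsSwapDifference q σ d) (H : SwapFiltration q σ μ) (n : ℕ) :
    Measurable fun x => ‖d n x‖ₑ :=
  H.measurable_of_factorsThrough (D.enorm_predictable n)

theorem measurable_jumpCount (D : IsSwapDifference q σ d) (H : SwapFiltration q σ μ) (lam : ℝ≥0)
    (n : ℕ) : Measurable fun x => (jumpCount lam (d · x) n : ℝ≥0∞) :=
  H.measurable_of_factorsThrough fun _ _ hxy =>
    congrArg (fun s => (s.2 : ℝ≥0∞)) (D.greedyJumps_factorsThrough H lam n hxy)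

end IsSwapDifference

section InnerProduct

variable {E : Type*} [NormedAddCommGroup E] [InnerProductSpace ℝ E] {d : ℕ → α → E}

theorem enorm_add_sq_add_enorm_sub_sq (u v : E) :
    ‖u + v‖ₑ ^ 2 + ‖u - v‖ₑ ^ 2 = 2 * (‖u‖ₑ ^ 2 + ‖v‖ₑ ^ 2) := by
  simp only [enorm_eq_nnnorm]
  exact_mod_cast by simpa only [sq] using parallelogram_law_with_nnnorm ℝ u v

namespace IsSwapDifference

variable [DiscreteMeasurableSpace κ]

theorem lintegral_enorm_add_sq (D : IsSwapDifference q σ d) (H : SwapFiltration q σ μ) {n : ℕ}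
    {u : α → E} (hu : u.FactorsThrough (q n)) :
    ∫⁻ x, ‖u x + d n x‖ₑ ^ 2 ∂μ = ∫⁻ x, ‖u x‖ₑ ^ 2 ∂μ + ∫⁻ x, ‖d n x‖ₑ ^ 2 ∂μ := by
  have hplus : Measurable fun x => ‖u x + d n x‖ₑ ^ 2 :=
    H.measurable_of_factorsThrough (n := n + 1) fun x y hxy => by
      simp only [hu (H.nested n hxy), D.adapted n hxy]
  have hu_meas : Measurable fun x => ‖u x‖ₑ ^ 2 :=
    H.measurable_of_factorsThrough (n := n) fun x y hxy => by simp only [hu hxy]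
  have swap : ∫⁻ x, ‖u x + d n x‖ₑ ^ 2 ∂μ = ∫⁻ x, ‖u x - d n x‖ₑ ^ 2 ∂μ := by
    rw [← (H.measurePreserving n).lintegral_comp hplus]
    simp only [hu (H.apply_swap n _), D.anti, ← sub_eq_add_neg]
  refine (ENNReal.mul_right_inj two_ne_zero ofNat_ne_top).1 ?_
  calc 2 * ∫⁻ x, ‖u x + d n x‖ₑ ^ 2 ∂μ
      = ∫⁻ x, ‖u x + d n x‖ₑ ^ 2 + ‖u x - d n x‖ₑ ^ 2 ∂μ := by
        rw [lintegral_add_left hplus, ← swap, two_mul]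
    _ = 2 * (∫⁻ x, ‖u x‖ₑ ^ 2 ∂μ + ∫⁻ x, ‖d n x‖ₑ ^ 2 ∂μ) := by
        simp only [enorm_add_sq_add_enorm_sub_sq]
        rw [lintegral_const_mul' _ _ ofNat_ne_top, lintegral_add_left hu_meas]

theorem lintegral_jumpDeviation_sq_add_le (D : IsSwapDifference q σ d) (H : SwapFiltration q σ μ)
    (lam : ℝ≥0) (n : ℕ) :
    ∫⁻ x, ‖jumpDeviation lam (d · x) n‖ₑ ^ 2 + (lam : ℝ≥0∞) ^ 2 * jumpCount lam (d · x) n ∂μ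
      ≤ ∑ i ∈ Finset.range n, ∫⁻ x, ‖d i x‖ₑ ^ 2 ∂μ := by
  induction n with
  | zero => simp
  | succ n ih =>
    have hcount : Measurable fun x => (lam : ℝ≥0∞) ^ 2 * jumpCount lam (d · x) n :=
      (D.measurable_jumpCount H lam n).const_mul _
    have hdev : (fun x => jumpDeviation lam (d · x) n).FactorsThrough (q n) := fun _ _ hxy =>
      congrArg Prod.fst (D.greedyJumps_factorsThrough H lam n hxy)
    calc _ ≤ ∫⁻ x, ‖jumpDeviation lam (d · x) n + d n x‖ₑ ^ 2
            + (lam : ℝ≥0∞) ^ 2 * jumpCount lam (d · x) n ∂μ :=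
          lintegral_mono fun x => enorm_jumpDeviation_sq_add_le lam _ n
      _ = ∫⁻ x, ‖jumpDeviation lam (d · x) n‖ₑ ^ 2
            + (lam : ℝ≥0∞) ^ 2 * jumpCount lam (d · x) n ∂μ + ∫⁻ x, ‖d n x‖ₑ ^ 2 ∂μ := by
          rw [lintegral_add_right _ hcount, lintegral_add_right _ hcount,
            D.lintegral_enorm_add_sq H hdev, add_right_comm]
      _ ≤ ∑ i ∈ Finset.range (n + 1), ∫⁻ x, ‖d i x‖ₑ ^ 2 ∂μ := by
          rw [Finset.sum_range_succ]
          gcongr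

theorem lintegral_jumpCount_le (D : IsSwapDifference q σ d) (H : SwapFiltration q σ μ)
    {lam : ℝ≥0} (hlam : 0 < lam) (n : ℕ) :
    ∫⁻ x, jumpCount lam (d · x) n ∂μ ≤ ∑ i ∈ Finset.range n, ∫⁻ x, (‖d i x‖ₑ / lam) ^ 2 ∂μ := by
  have hlam2 : (lam : ℝ≥0∞) ^ 2 ≠ 0 := by exact_mod_cast (pow_pos hlam 2).ne'
  have hlam2' : (lam : ℝ≥0∞) ^ 2 ≠ ∞ := by finiteness
  have hdiv (i : ℕ) : ∫⁻ x, (‖d i x‖ₑ / lam) ^ 2 ∂μ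
      = (∫⁻ x, ‖d i x‖ₑ ^ 2 ∂μ) * ((lam : ℝ≥0∞) ^ 2)⁻¹ := by
    simp only [div_eq_mul_inv, mul_pow, ENNReal.inv_pow]
    exact lintegral_mul_const' _ _ (by finiteness)
  simp only [hdiv, ← Finset.sum_mul]
  rw [← div_eq_mul_inv, ENNReal.le_div_iff_mul_le (.inl hlam2) (.inl hlam2'), mul_comm,
    ← lintegral_const_mul' _ _ hlam2']
  exact (lintegral_mono fun x => le_add_self).trans (D.lintegral_jumpDeviation_sq_add_le H lam n)

end IsSwapDifference

end InnerProduct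

end SwapFiltration

section DyadicDecay

/-- The two-sided geometric weight `2 ^ (-δ |m|)`. -/
def dyadicDecay (δ : ℝ) (m : ℤ) : ℝ≥0∞ := 2 ^ (-(δ * |(m : ℝ)|))

theorem dyadicDecay_ne_top (δ : ℝ) (m : ℤ) : dyadicDecay δ m ≠ ∞ := by
  simp [dyadicDecay, ENNReal.rpow_eq_top_iff]

theorem tsum_two_rpow_neg_mul_ne_top {δ : ℝ} (hδ : 0 < δ) :
    ∑' n : ℕ, (2 : ℝ≥0∞) ^ (-(δ * n)) ≠ ∞ := by
  have hlt : (2 : ℝ≥0∞) ^ (-δ) < 1 :=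
    ENNReal.rpow_lt_one_of_one_lt_of_neg one_lt_two (neg_lt_zero.2 hδ)
  simp_rw [← neg_mul, ENNReal.rpow_mul, ENNReal.rpow_natCast, ENNReal.tsum_geometric]
  exact ENNReal.inv_ne_top.2 (tsub_pos_of_lt hlt).ne'

theorem tsum_dyadicDecay_ne_top {δ : ℝ} (hδ : 0 < δ) : ∑' m, dyadicDecay δ m ≠ ∞ := by
  rw [tsum_of_nat_of_neg_add_one ENNReal.summable ENNReal.summable, ENNReal.add_ne_top]
  refine ⟨by simpa [dyadicDecay] using tsum_two_rpow_neg_mul_ne_top hδ, ?_⟩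
  refine ne_top_of_le_ne_top (tsum_two_rpow_neg_mul_ne_top hδ) (ENNReal.tsum_le_tsum fun n => ?_)
  refine ENNReal.rpow_le_rpow_of_exponent_le one_le_two (neg_le_neg ?_)
  gcongr
  rw [Int.cast_neg, abs_neg]
  push_cast
  linarith [le_abs_self ((n : ℝ) + 1)]

end DyadicDecay

section Exponents

/-- The exponents for which the variational inequality is proved through weak type estimates. -/
structure Admissible (r t : ℝ) : Prop where
  one_lt : 1 < r
  le_two : r ≤ 2
  le : r ≤ t
  lt_or_lt : r < 2 ∨ r < t

namespace Admissible

variable {r t : ℝ} (h : Admissible r t)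
include h

theorem pos : 0 < r := one_pos.trans h.one_lt

theorem one_le_right : 1 ≤ t := h.one_lt.le.trans h.le

end Admissible

theorem min_sq_self_le_rpow {r : ℝ} (hr1 : 1 ≤ r) (hr2 : r ≤ 2) (x : ℝ≥0∞) :
    min (x ^ 2) x ≤ x ^ r := by
  rcases le_total x 1 with hx | hx
  · refine (min_le_left _ _).trans ?_
    rw [← ENNReal.rpow_two]
    exact ENNReal.rpow_le_rpow_of_exponent_ge hx hr2
  · refine (min_le_right _ _).trans ?_
    simpa using ENNReal.rpow_le_rpow_of_exponent_le hx hr1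

theorem min_sq_self_le_dyadicDecay {r : ℝ} (hr1 : 1 ≤ r) (hr2 : r ≤ 2) {x : ℝ≥0∞} {m : ℤ}
    (hx : x ∈ Set.Ico ((2 : ℝ≥0∞) ^ m) (2 ^ (m + 1))) :
    min (x ^ 2) x ≤ x ^ r * (2 * dyadicDecay (min (2 - r) (r - 1)) m) := by
  set δ := min (2 - r) (r - 1)
  have hδ2 : δ ≤ 2 - r := min_le_left _ _
  have hδ1 : δ ≤ r - 1 := min_le_right _ _
  rcases le_or_gt 0 m with hm | hm
  · have hm' : (0 : ℝ) ≤ m := by exact_mod_cast hm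
    have hx0 : x ≠ 0 := ((ENNReal.zpow_pos two_ne_zero ofNat_ne_top m).trans_le hx.1).ne'
    calc min (x ^ 2) x ≤ x ^ (r + -(r - 1)) := by simp
      _ = x ^ r * x ^ (-(r - 1)) := ENNReal.rpow_add _ _ hx0 (ne_top_of_lt hx.2)
      _ ≤ x ^ r * (2 ^ m) ^ (-(r - 1)) := by
          rw [ENNReal.rpow_neg, ENNReal.rpow_neg]
          gcongr
          exact hx.1
      _ ≤ x ^ r * dyadicDecay δ m := by
          rw [← ENNReal.rpow_intCast, ← ENNReal.rpow_mul, dyadicDecay, abs_of_nonneg hm']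
          gcongr
          · exact one_le_two
          · nlinarith
      _ ≤ x ^ r * (2 * dyadicDecay δ m) := by
          gcongr
          exact le_mul_of_one_le_left' one_le_two
  · have hm' : (m : ℝ) + 1 ≤ 0 := by exact_mod_cast hm
    calc min (x ^ 2) x ≤ x ^ (r + (2 - r)) := by simp
      _ = x ^ r * x ^ (2 - r) := ENNReal.rpow_add_of_nonneg _ _ (by linarith) (by linarith)
      _ ≤ x ^ r * (2 ^ (m + 1)) ^ (2 - r) := by
          gcongr
          exact hx.2.le
      _ ≤ x ^ r * 2 ^ (1 + -(δ * |(m : ℝ)|)) := by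
          rw [← ENNReal.rpow_intCast, ← ENNReal.rpow_mul, abs_of_nonpos (by linarith)]
          gcongr
          · exact one_le_two
          · push_cast
            nlinarith [min_le_right (2 - r) (r - 1)]
      _ = x ^ r * (2 * dyadicDecay δ m) := by
          rw [ENNReal.rpow_add _ _ two_ne_zero ofNat_ne_top, ENNReal.rpow_one, dyadicDecay]

theorem tsum_rpow_mul_min_le_of_lt_two {r t : ℝ} (hr1 : 1 < r) (hr2 : r < 2) (hrt : r ≤ t)
    {u : ℝ≥0∞} (hu : u ≠ ∞) :
    ∑' l : ℕ, ((2 : ℝ≥0∞)⁻¹ ^ l) ^ t * min ((2 ^ l * u) ^ 2) (2 ^ l * u)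
      ≤ 2 * (∑' m, dyadicDecay (min (2 - r) (r - 1)) m) * u ^ r := by
  rcases eq_or_ne u 0 with rfl | hu0
  · simp
  obtain ⟨k, hk⟩ := ENNReal.exists_mem_Ico_zpow hu0 hu one_lt_two ofNat_ne_top
  set δ := min (2 - r) (r - 1)
  have hl (l : ℕ) : 2 ^ l * u ∈ Set.Ico ((2 : ℝ≥0∞) ^ (l + k)) (2 ^ (l + k + 1)) := by
    rw [add_assoc, ENNReal.zpow_add two_ne_zero ofNat_ne_top,
      ENNReal.zpow_add two_ne_zero ofNat_ne_top, zpow_natCast]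
    exact ⟨mul_le_mul_right hk.1 _, ENNReal.mul_lt_mul_right (by simp) (by simp) hk.2⟩
  calc ∑' l : ℕ, ((2 : ℝ≥0∞)⁻¹ ^ l) ^ t * min ((2 ^ l * u) ^ 2) (2 ^ l * u)
      ≤ ∑' l : ℕ, 2 * u ^ r * dyadicDecay δ (l + k) := by
        refine ENNReal.tsum_le_tsum fun l => ?_
        calc ((2 : ℝ≥0∞)⁻¹ ^ l) ^ t * min ((2 ^ l * u) ^ 2) (2 ^ l * u)
            ≤ ((2 : ℝ≥0∞)⁻¹ ^ l) ^ r * ((2 ^ l * u) ^ r * (2 * dyadicDecay δ (l + k))) := by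
              gcongr ?_ * ?_
              · exact ENNReal.rpow_le_rpow_of_exponent_ge
                  (pow_le_one₀ zero_le (by simp)) hrt
              · exact min_sq_self_le_dyadicDecay hr1.le hr2.le (hl l)
          _ = ((2 : ℝ≥0∞)⁻¹ ^ l * 2 ^ l * u) ^ r * (2 * dyadicDecay δ (l + k)) := by
              rw [← mul_assoc, ← ENNReal.mul_rpow_of_nonneg _ _ (by linarith),
                ← mul_assoc (2⁻¹ ^ l)]
          _ = 2 * u ^ r * dyadicDecay δ (l + k) := by
              rw [← mul_pow, ENNReal.inv_mul_cancel two_ne_zero ofNat_ne_top, one_pow, one_mul]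
              ring
    _ ≤ 2 * u ^ r * ∑' m, dyadicDecay δ m := by
        rw [ENNReal.tsum_mul_left]
        gcongr
        exact ENNReal.tsum_comp_le_tsum_of_injective (f := fun l : ℕ => (l + k : ℤ))
          (fun a b h => by simpa using h) _
    _ = 2 * (∑' m, dyadicDecay δ m) * u ^ r := by ring

theorem tsum_rpow_mul_min_le_of_lt {r t : ℝ} (hr1 : 1 ≤ r) (hr2 : r ≤ 2) (u : ℝ≥0∞) :
    ∑' l : ℕ, ((2 : ℝ≥0∞)⁻¹ ^ l) ^ t * min ((2 ^ l * u) ^ 2) (2 ^ l * u)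
      ≤ (∑' l : ℕ, 2 ^ (-((t - r) * l))) * u ^ r := by
  rw [← ENNReal.tsum_mul_right]
  refine ENNReal.tsum_le_tsum fun l => ?_
  calc ((2 : ℝ≥0∞)⁻¹ ^ l) ^ t * min ((2 ^ l * u) ^ 2) (2 ^ l * u)
      ≤ ((2 : ℝ≥0∞)⁻¹ ^ l) ^ t * (2 ^ l * u) ^ r := by
        gcongr
        exact min_sq_self_le_rpow hr1 hr2 _
    _ = 2 ^ (-(l * t)) * 2 ^ (l * r) * u ^ r := by
        rw [ENNReal.mul_rpow_of_nonneg _ _ (by linarith), ← mul_assoc, ← ENNReal.inv_pow,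
          ENNReal.inv_rpow, ← ENNReal.rpow_natCast, ← ENNReal.rpow_mul, ← ENNReal.rpow_mul,
          ENNReal.rpow_neg]
    _ = 2 ^ (-((t - r) * l)) * u ^ r := by
        rw [← ENNReal.rpow_add _ _ two_ne_zero ofNat_ne_top]
        ring_nf

theorem Admissible.exists_tsum_rpow_mul_min_le {r t : ℝ} (h : Admissible r t) :
    ∃ C : ℝ≥0, ∀ u : ℝ≥0∞, u ≠ ∞ →
      ∑' l : ℕ, ((2 : ℝ≥0∞)⁻¹ ^ l) ^ t * min ((2 ^ l * u) ^ 2) (2 ^ l * u) ≤ C * u ^ r := by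
  rcases h.lt_or_lt with hr | hr
  · have hδ : 0 < min (2 - r) (r - 1) := lt_min (by linarith) (by linarith [h.one_lt])
    lift ∑' m, dyadicDecay (min (2 - r) (r - 1)) m to ℝ≥0 using tsum_dyadicDecay_ne_top hδ
      with S hS
    refine ⟨2 * S, fun u hu => ?_⟩
    simpa [hS] using tsum_rpow_mul_min_le_of_lt_two h.one_lt hr h.le hu
  · lift ∑' l : ℕ, (2 : ℝ≥0∞) ^ (-((t - r) * l)) to ℝ≥0
      using tsum_two_rpow_neg_mul_ne_top (sub_pos.2 hr) with S hS
    refine ⟨S, fun u _ => ?_⟩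
    rw [hS]
    exact tsum_rpow_mul_min_le_of_lt h.one_lt.le h.le_two u

end Exponents

section JumpBudget

variable {E : Type*} [NormedAddCommGroup E] {h : ℝ≥0}

/-- The terms of `a` of norm at most `h`, the others being replaced by zero. -/
def lowPart (h : ℝ≥0) (a : ℕ → E) : ℕ → E := {i | ‖a i‖₊ ≤ h}.indicator a

/-- The terms of `a` of norm larger than `h`, the others being replaced by zero. -/
def highPart (h : ℝ≥0) (a : ℕ → E) : ℕ → E := {i | ‖a i‖₊ ≤ h}ᶜ.indicator a

/-- A majorant of the number of jumps of size `h / 2` made by the partial sums of `a` up to time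
`n`: jumps due to the small terms are counted greedily, those due to the large terms are bounded
by the sum of the norms. -/
def jumpBudget (h : ℝ≥0) (a : ℕ → E) (n : ℕ) : ℝ≥0∞ :=
  jumpCount (h / 8) (lowPart h a) n + (4 / h : ℝ≥0) * ∑ i ∈ Finset.range n, ‖highPart h a i‖ₑ

theorem lowPart_add_highPart (h : ℝ≥0) (a : ℕ → E) : lowPart h a + highPart h a = a :=
  Set.indicator_self_add_compl _ _

theorem jumpBudget_mono (h : ℝ≥0) (a : ℕ → E) : Monotone (jumpBudget h a) := fun m n hmn => by
  unfold jumpBudget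
  gcongr
  exact jumpCount_mono _ _ hmn

theorem jumpBudget_add_one_le (hh : 0 < h) (a : ℕ → E) {m n : ℕ} (hmn : m ≤ n)
    (hjump : h / 2 ≤ ‖∑ i ∈ Finset.Ico m n, a i‖₊) :
    jumpBudget h a m + 1 ≤ jumpBudget h a n := by
  have hcount : jumpCount (h / 8) (lowPart h a) m ≤ jumpCount (h / 8) (lowPart h a) n :=
    jumpCount_mono _ _ hmn
  have hsum : ‖∑ i ∈ Finset.Ico m n, a i‖₊
      ≤ ‖∑ i ∈ Finset.Ico m n, lowPart h a i‖₊ + ‖∑ i ∈ Finset.Ico m n, highPart h a i‖₊ := by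
    nth_rw 1 [← lowPart_add_highPart h a]
    simpa only [Pi.add_apply, Finset.sum_add_distrib] using nnnorm_add_le _ _
  simp only [jumpBudget, ← Finset.sum_range_add_sum_Ico _ hmn, mul_add]
  rcases le_or_gt (2 * (h / 8)) ‖∑ i ∈ Finset.Ico m n, lowPart h a i‖₊ with hlow | hlow
  · have hone : (jumpCount (h / 8) (lowPart h a) m : ℝ≥0∞) + 1
        ≤ jumpCount (h / 8) (lowPart h a) n := by
      exact_mod_cast jumpCount_add_one_le (by positivity) hmn hlow
    rw [add_right_comm]
    exact add_le_add hone le_self_add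
  · have hhigh : h / 4 ≤ ‖∑ i ∈ Finset.Ico m n, highPart h a i‖₊ := by
      rw [← NNReal.coe_le_coe] at hjump hsum ⊢
      rw [← NNReal.coe_lt_coe] at hlow
      push_cast at *
      linarith
    have hone : 1 ≤ ((4 / h : ℝ≥0) : ℝ≥0∞) * ∑ i ∈ Finset.Ico m n, ‖highPart h a i‖ₑ := by
      calc (1 : ℝ≥0∞) = ((4 / h * (h / 4) : ℝ≥0) : ℝ≥0∞) := by
            rw [div_mul_div_cancel₀' (by norm_num), div_self hh.ne', ENNReal.coe_one]
        _ ≤ (4 / h : ℝ≥0) * ‖∑ i ∈ Finset.Ico m n, highPart h a i‖ₑ := by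
            rw [ENNReal.coe_mul, enorm_eq_nnnorm]
            gcongr
        _ ≤ _ := by
            gcongr
            exact enorm_sum_le _ _
    rw [add_assoc]
    gcongr

theorem tsum_jumps_le_iSup_jumpBudget (hh : 0 < h) (a : ℕ → E) (N : ℕ →o ℕ) :
    ∑' k, (if h / 2 ≤ ‖∑ i ∈ Finset.Ico (N k) (N (k + 1)), a i‖₊ then (1 : ℝ≥0∞) else 0)
      ≤ ⨆ n, jumpBudget h a n := by
  refine ENNReal.tsum_le_of_sum_range_le fun K => le_trans ?_ (le_iSup _ (N K))
  induction K with
  | zero => simp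
  | succ K ih =>
    rw [Finset.sum_range_succ]
    split_ifs with hjump
    · exact (add_le_add_left ih 1).trans
        (jumpBudget_add_one_le hh a (N.monotone K.le_succ) hjump)
    · rw [add_zero]
      exact ih.trans (jumpBudget_mono h a (N.monotone K.le_succ))

theorem enorm_rpow_le_tsum_dyadic {t : ℝ} (ht : 0 < t) {z : E} (hz : ‖z‖₊ ≤ 1) :
    ‖z‖ₑ ^ t ≤ ∑' l : ℕ, (((2 : ℝ≥0)⁻¹ ^ l : ℝ≥0) : ℝ≥0∞) ^ t
      * (if (2 : ℝ≥0)⁻¹ ^ l / 2 ≤ ‖z‖₊ then 1 else 0) := by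
  rcases eq_or_ne z 0 with rfl | hz0
  · simp [ht]
  obtain ⟨l, hl, hl'⟩ := exists_nat_pow_near_of_lt_one (nnnorm_pos.2 hz0) hz
    (show (0 : ℝ≥0) < 2⁻¹ by positivity) (by rw [inv_lt_one₀ two_pos]; exact one_lt_two)
  refine le_trans ?_ (ENNReal.le_tsum l)
  rw [if_pos (by rw [div_eq_mul_inv, ← pow_succ]; exact hl.le), mul_one, enorm_eq_nnnorm]
  gcongr

theorem one_le_tsum_jumpBudget_of_one_lt_variation {t : ℝ} (ht : 0 < t) {a : ℕ → E}
    (ha : 1 < variation t a) :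
    1 ≤ ∑' l : ℕ, (((2 : ℝ≥0)⁻¹ ^ l : ℝ≥0) : ℝ≥0∞) ^ t
      * ⨆ n, jumpBudget ((2 : ℝ≥0)⁻¹ ^ l) a n := by
  by_contra! hW
  refine ha.not_ge (iSup_le fun N => ?_)
  have hJ (k : ℕ) : ‖∑ i ∈ Finset.Ico (N k) (N (k + 1)), a i‖₊ ≤ 1 := by
    by_contra! hk
    refine hW.not_ge ?_
    calc (1 : ℝ≥0∞) ≤ jumpBudget 1 a (N k) + 1 := le_add_self
      _ ≤ jumpBudget 1 a (N (k + 1)) := by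
          refine jumpBudget_add_one_le one_pos a (N.monotone k.le_succ) (le_trans ?_ hk.le)
          exact div_le_self zero_le one_le_two
      _ ≤ ⨆ n, jumpBudget 1 a n := le_iSup _ _
      _ ≤ _ := by simpa using ENNReal.le_tsum (f := fun l : ℕ =>
          (((2 : ℝ≥0)⁻¹ ^ l : ℝ≥0) : ℝ≥0∞) ^ t * ⨆ n, jumpBudget ((2 : ℝ≥0)⁻¹ ^ l) a n) 0
  have hsum : ∑' k, ‖∑ i ∈ Finset.Ico (N k) (N (k + 1)), a i‖ₑ ^ t ≤ 1 := by
    refine (ENNReal.tsum_le_tsum fun k => enorm_rpow_le_tsum_dyadic ht (hJ k)).trans ?_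
    rw [ENNReal.tsum_comm]
    simp_rw [ENNReal.tsum_mul_left]
    refine le_trans (ENNReal.tsum_le_tsum fun l => ?_) hW.le
    gcongr
    exact tsum_jumps_le_iSup_jumpBudget (by positivity) a N
  exact ENNReal.rpow_le_one hsum (by positivity)

theorem enorm_lowPart_add_enorm_highPart_le (hh : 0 < h) (a : ℕ → E) (i : ℕ) :
    64 * (‖lowPart h a i‖ₑ / h) ^ 2 + 4 * (‖highPart h a i‖ₑ / h)
      ≤ 64 * min ((‖a i‖ₑ / h) ^ 2) (‖a i‖ₑ / h) := by
  have hh0 : (h : ℝ≥0∞) ≠ 0 := by exact_mod_cast hh.ne'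
  by_cases hi : ‖a i‖₊ ≤ h
  · have hle : ‖a i‖ₑ / h ≤ 1 :=
      ENNReal.div_le_of_le_mul (by rw [one_mul, enorm_eq_nnnorm]; exact_mod_cast hi)
    have hmin : min ((‖a i‖ₑ / h) ^ 2) (‖a i‖ₑ / h) = (‖a i‖ₑ / h) ^ 2 :=
      min_eq_left (pow_le_of_le_one zero_le hle two_ne_zero)
    simp [lowPart, highPart, hi, hmin]
  · have hle : 1 ≤ ‖a i‖ₑ / h := by
      rw [ENNReal.le_div_iff_mul_le (.inl hh0) (.inl coe_ne_top), one_mul, enorm_eq_nnnorm]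
      exact_mod_cast (not_le.1 hi).le
    have hmin : min ((‖a i‖ₑ / h) ^ 2) (‖a i‖ₑ / h) = ‖a i‖ₑ / h :=
      min_eq_right (le_self_pow₀ hle two_ne_zero)
    have hlow : lowPart h a i = 0 := Set.indicator_of_notMem (s := {i | ‖a i‖₊ ≤ h}) hi a
    have hhigh : highPart h a i = a i := Set.indicator_of_mem (s := {i | ‖a i‖₊ ≤ h}ᶜ) hi a
    rw [hlow, hhigh, hmin, enorm_zero, ENNReal.zero_div, zero_pow two_ne_zero, mul_zero, zero_add]
    gcongr
    norm_num

end JumpBudget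

/-! ### Weak type estimate and good-`λ` inequality -/

section WeakType

variable {α κ E : Type*} [MeasurableSpace α] [MeasurableSpace κ] {q : ℕ → α → κ} {σ : ℕ → α → α}
  {μ : Measure α}

namespace IsSwapDifference

variable [NormedAddCommGroup E] {d : ℕ → α → E}

theorem lowPart [NormedSpace ℝ E] (D : IsSwapDifference q σ d) (H : SwapFiltration q σ μ)
    (h : ℝ≥0) :
    IsSwapDifference q σ fun n x => lowPart h (d · x) n := by
  have hc (n : ℕ) : (fun x => if ‖d n x‖ₑ ≤ h then (1 : ℝ) else 0).FactorsThrough (q n) :=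
    fun x y hxy => by simp only [D.enorm_predictable n hxy]
  convert D.smul_of_predictable H hc using 3 with n x
  simp [Lepingle.lowPart, Set.indicator_apply, enorm_eq_nnnorm]

variable [DiscreteMeasurableSpace κ]

theorem measurable_enorm_highPart (D : IsSwapDifference q σ d) (H : SwapFiltration q σ μ)
    (h : ℝ≥0) (n : ℕ) : Measurable fun x => ‖highPart h (d · x) n‖ₑ :=
  H.measurable_of_factorsThrough (n := n + 1) fun x y hxy => by
    simp [highPart, Set.indicator_apply, D.adapted n hxy]

variable [InnerProductSpace ℝ E] {h : ℝ≥0}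

theorem measurable_jumpBudget (D : IsSwapDifference q σ d) (H : SwapFiltration q σ μ) (h : ℝ≥0)
    (n : ℕ) : Measurable fun x => jumpBudget h (d · x) n :=
  ((D.lowPart H h).measurable_jumpCount H _ n).add
    ((Finset.measurable_sum _ fun i _ => D.measurable_enorm_highPart H h i).const_mul _)

theorem lintegral_jumpBudget_le (D : IsSwapDifference q σ d) (H : SwapFiltration q σ μ)
    (hh : 0 < h) (n : ℕ) : ∫⁻ x, jumpBudget h (d · x) n ∂μ
      ≤ ∑ i ∈ Finset.range n, ∫⁻ x, 64 * min ((‖d i x‖ₑ / h) ^ 2) (‖d i x‖ₑ / h) ∂μ := by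
  have hhigh := D.measurable_enorm_highPart H h
  have hlow (i : ℕ) (x : α) : (‖Lepingle.lowPart h (d · x) i‖ₑ / (h / 8 : ℝ≥0)) ^ 2
      = 64 * (‖Lepingle.lowPart h (d · x) i‖ₑ / h) ^ 2 := by
    rw [ENNReal.coe_div (by norm_num), div_eq_mul_inv, ENNReal.inv_div (by simp) (by simp),
      div_eq_mul_inv, div_eq_mul_inv, ENNReal.coe_ofNat]
    ring
  calc ∫⁻ x, jumpBudget h (d · x) n ∂μ
      = ∫⁻ x, jumpCount (h / 8) (Lepingle.lowPart h (d · x)) n ∂μ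
        + ∑ i ∈ Finset.range n, ∫⁻ x, (4 / h : ℝ≥0) * ‖highPart h (d · x) i‖ₑ ∂μ := by
        simp only [jumpBudget, Finset.mul_sum]
        rw [lintegral_add_left ((D.lowPart H h).measurable_jumpCount H _ n),
          lintegral_finsetSum _ fun i _ => (hhigh i).const_mul _]
    _ ≤ ∑ i ∈ Finset.range n, (∫⁻ x, 64 * (‖Lepingle.lowPart h (d · x) i‖ₑ / h) ^ 2 ∂μ
        + ∫⁻ x, 4 * (‖highPart h (d · x) i‖ₑ / h) ∂μ) := by
        rw [Finset.sum_add_distrib]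
        refine add_le_add ?_ (Finset.sum_le_sum fun i _ => lintegral_mono fun x => le_of_eq ?_)
        · simpa only [hlow] using (D.lowPart H h).lintegral_jumpCount_le H (lam := h / 8)
            (by positivity) n
        · rw [ENNReal.coe_div hh.ne', div_eq_mul_inv, div_eq_mul_inv, mul_assoc,
            mul_comm (h : ℝ≥0∞)⁻¹, ENNReal.coe_ofNat]
    _ ≤ ∑ i ∈ Finset.range n, ∫⁻ x, 64 * min ((‖d i x‖ₑ / h) ^ 2) (‖d i x‖ₑ / h) ∂μ := by
        gcongr with i
        rw [← lintegral_add_right _ (((hhigh i).div_const _).const_mul _)]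
        exact lintegral_mono fun x => enorm_lowPart_add_enorm_highPart_le hh (d · x) i

theorem lintegral_iSup_jumpBudget_le (D : IsSwapDifference q σ d) (H : SwapFiltration q σ μ)
    (hh : 0 < h) : ∫⁻ x, ⨆ n, jumpBudget h (d · x) n ∂μ
      ≤ ∑' i, ∫⁻ x, 64 * min ((‖d i x‖ₑ / h) ^ 2) (‖d i x‖ₑ / h) ∂μ := by
  rw [lintegral_iSup (D.measurable_jumpBudget H h) fun m n hmn x => jumpBudget_mono h _ hmn]
  exact iSup_le fun n => (D.lintegral_jumpBudget_le H hh n).trans (ENNReal.sum_le_tsum _)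

theorem meas_one_lt_variation_le (D : IsSwapDifference q σ d) (H : SwapFiltration q σ μ)
    {r t : ℝ} (ht : 0 < t) {C : ℝ≥0} (hC : ∀ u : ℝ≥0∞, u ≠ ∞ →
      ∑' l : ℕ, ((2 : ℝ≥0∞)⁻¹ ^ l) ^ t * min ((2 ^ l * u) ^ 2) (2 ^ l * u) ≤ C * u ^ r) :
    μ {x | 1 < variation t (d · x)} ≤ 64 * C * ∑' i, ∫⁻ x, ‖d i x‖ₑ ^ r ∂μ := by
  set h : ℕ → ℝ≥0 := fun l => 2⁻¹ ^ l
  have hcoe (l : ℕ) : (h l : ℝ≥0∞) = 2⁻¹ ^ l := by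
    rw [ENNReal.coe_pow, ENNReal.coe_inv two_ne_zero, ENNReal.coe_ofNat]
  have hdiv (l : ℕ) (u : ℝ≥0∞) : u / h l = 2 ^ l * u := by
    rw [hcoe, div_eq_mul_inv, ENNReal.inv_pow, inv_inv, mul_comm]
  have hmeas (l : ℕ) : Measurable fun x => ⨆ n, jumpBudget (h l) (d · x) n :=
    .iSup fun n => D.measurable_jumpBudget H _ n
  have hmin (l i : ℕ) : Measurable fun x => (h l : ℝ≥0∞) ^ t
      * (64 * min ((‖d i x‖ₑ / h l) ^ 2) (‖d i x‖ₑ / h l)) := by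
    have := (D.measurable_enorm H i).div_const (h l : ℝ≥0∞)
    fun_prop
  calc μ {x | 1 < variation t (d · x)}
      ≤ μ {x | 1 ≤ ∑' l, (h l : ℝ≥0∞) ^ t * ⨆ n, jumpBudget (h l) (d · x) n} :=
        measure_mono fun x hx => one_le_tsum_jumpBudget_of_one_lt_variation ht hx
    _ ≤ ∫⁻ x, ∑' l, (h l : ℝ≥0∞) ^ t * ⨆ n, jumpBudget (h l) (d · x) n ∂μ := by
        simpa using mul_meas_ge_le_lintegral (μ := μ)
          (.tsum fun l => (hmeas l).const_mul ((h l : ℝ≥0∞) ^ t)) 1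
    _ = ∑' l, (h l : ℝ≥0∞) ^ t * ∫⁻ x, ⨆ n, jumpBudget (h l) (d · x) n ∂μ := by
        rw [lintegral_tsum fun l => ((hmeas l).const_mul _).aemeasurable]
        simp_rw [lintegral_const_mul _ (hmeas _)]
    _ ≤ ∑' l, (h l : ℝ≥0∞) ^ t
          * ∑' i, ∫⁻ x, 64 * min ((‖d i x‖ₑ / h l) ^ 2) (‖d i x‖ₑ / h l) ∂μ := by
        gcongr with l
        exact D.lintegral_iSup_jumpBudget_le H (by positivity)
    _ = ∑' i, ∫⁻ x, ∑' l, (h l : ℝ≥0∞) ^ t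
          * (64 * min ((‖d i x‖ₑ / h l) ^ 2) (‖d i x‖ₑ / h l)) ∂μ := by
        simp_rw [lintegral_tsum fun l => (hmin l _).aemeasurable, ← ENNReal.tsum_mul_left]
        rw [ENNReal.tsum_comm]
        refine tsum_congr fun i => tsum_congr fun l => (lintegral_const_mul' _ _ ?_).symm
        finiteness
    _ ≤ ∑' i, ∫⁻ x, 64 * C * ‖d i x‖ₑ ^ r ∂μ := by
        gcongr with i x
        simp_rw [hdiv, hcoe, mul_left_comm _ (64 : ℝ≥0∞), ENNReal.tsum_mul_left, mul_assoc]
        gcongr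
        exact hC _ enorm_ne_top
    _ = 64 * C * ∑' i, ∫⁻ x, ‖d i x‖ₑ ^ r ∂μ := by
        simp_rw [lintegral_const_mul' _ _ (show (64 * C : ℝ≥0∞) ≠ ∞ by finiteness),
          ENNReal.tsum_mul_left]

end IsSwapDifference

end WeakType

section LayerCake

variable {α : Type*} [MeasurableSpace α] {μ : Measure α} {V S : α → ℝ≥0∞}

theorem measurable_meas_ofReal_lt (μ : Measure α) (F : α → ℝ≥0∞) :
    Measurable fun t : ℝ => μ {x | ENNReal.ofReal t < F x} :=
  Antitone.measurable fun _ _ hst =>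
    measure_mono fun _ hx => (ENNReal.ofReal_le_ofReal hst).trans_lt hx

theorem lintegral_rpow_eq_lintegral_meas_ofReal_lt_mul_of_ne_top {F : α → ℝ≥0∞} (hF : Measurable F)
    (hFtop : ∀ x, F x ≠ ∞) {p : ℝ} (hp : 0 < p) :
    ∫⁻ x, F x ^ p ∂μ = ENNReal.ofReal p *
      ∫⁻ t in Set.Ioi (0 : ℝ), μ {x | ENNReal.ofReal t < F x} * ENNReal.ofReal (t ^ (p - 1)) := by
  have hrpow (x : α) : F x ^ p = ENNReal.ofReal ((F x).toReal ^ p) := by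
    rw [← ENNReal.ofReal_rpow_of_nonneg ENNReal.toReal_nonneg hp.le,
      ENNReal.ofReal_toReal (hFtop x)]
  simp_rw [hrpow]
  rw [lintegral_rpow_eq_lintegral_meas_lt_mul μ (.of_forall fun _ => ENNReal.toReal_nonneg)
    hF.ennreal_toReal.aemeasurable hp]
  congr 1
  refine setLIntegral_congr_fun measurableSet_Ioi fun t ht => ?_
  simp only [ENNReal.ofReal_lt_iff_lt_toReal (le_of_lt ht) (hFtop _)]

theorem lintegral_rpow_eq_lintegral_meas_ofReal_lt_mul {F : α → ℝ≥0∞} (hF : Measurable F) {p : ℝ}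
    (hp : 0 < p) : ∫⁻ x, F x ^ p ∂μ = ENNReal.ofReal p *
      ∫⁻ t in Set.Ioi (0 : ℝ), μ {x | ENNReal.ofReal t < F x} * ENNReal.ofReal (t ^ (p - 1)) := by
  have hmin (x : α) : F x = ⨆ n : ℕ, min (F x) n := by
    rw [← inf_iSup_eq, ENNReal.iSup_natCast, inf_top_eq]
  have hmono : Monotone fun (n : ℕ) x => min (F x) n := fun m n hmn x => by
    simp only
    gcongr
  have hpow (x : α) : F x ^ p = ⨆ n : ℕ, min (F x) n ^ p := by
    rw [← iSup_rpow _ hp, ← hmin x]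
  have hmeas (t : ℝ) : μ {x | ENNReal.ofReal t < F x}
      = ⨆ n : ℕ, μ {x | ENNReal.ofReal t < min (F x) n} := by
    have hset : Monotone fun n : ℕ => {x | ENNReal.ofReal t < min (F x) n} :=
      fun m n hmn x hx => lt_of_lt_of_le hx (hmono hmn x)
    rw [← hset.measure_iUnion]
    congr 1
    ext x
    simp only [Set.mem_ofPred_eq, Set.mem_iUnion, ← lt_iSup_iff, ← hmin x]
  have htrunc (n : ℕ) := lintegral_rpow_eq_lintegral_meas_ofReal_lt_mul_of_ne_top (μ := μ)
    (hF.min (measurable_const (a := (n : ℝ≥0∞))))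
    (fun x => ne_top_of_le_ne_top (natCast_ne_top n) (min_le_right _ _)) hp
  have hmeas_mul (n : ℕ) : Measurable fun t : ℝ =>
      μ {x | ENNReal.ofReal t < min (F x) n} * ENNReal.ofReal (t ^ (p - 1)) :=
    (measurable_meas_ofReal_lt μ _).mul (by fun_prop)
  simp_rw [hpow, hmeas, ENNReal.iSup_mul]
  rw [lintegral_iSup (fun n => (hF.min measurable_const).pow_const p)
      fun m n hmn x => ENNReal.rpow_le_rpow (hmono hmn x) hp.le,
    lintegral_iSup hmeas_mul
      fun m n hmn t => mul_le_mul_left (measure_mono fun x hx => lt_of_lt_of_le hx (hmono hmn x)) _,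
    ENNReal.mul_iSup]
  exact iSup_congr htrunc

theorem lintegral_div_rpow_le_of_meas_lt_le (hV : Measurable V) (hS : Measurable S) {p : ℝ}
    (hp : 0 < p) {a b : ℝ≥0} (ha : 0 < a) (hb : 0 < b) {K : ℝ≥0∞}
    (h : ∀ lam : ℝ≥0, 0 < lam →
      μ {x | a * lam < V x} ≤ μ {x | b * lam < S x} + K * μ {x | lam < V x}) :
    ∫⁻ x, (V x / a) ^ p ∂μ ≤ ∫⁻ x, (S x / b) ^ p ∂μ + K * ∫⁻ x, V x ^ p ∂μ := by
  have hdiv {c : ℝ≥0} (hc : 0 < c) (F : α → ℝ≥0∞) (s : ℝ) :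
      {x | ENNReal.ofReal s < F x / c} = {x | c * (s.toNNReal : ℝ≥0∞) < F x} := by
    ext x
    rw [Set.mem_ofPred_eq, Set.mem_ofPred_eq, mul_comm,
      ENNReal.lt_div_iff_mul_lt (.inl (by exact_mod_cast hc.ne')) (.inl coe_ne_top)]
    rfl
  have hpow : Measurable fun s : ℝ => ENNReal.ofReal (s ^ (p - 1)) := by fun_prop
  have hVm : Measurable fun s : ℝ =>
      μ {x | ENNReal.ofReal s < V x} * ENNReal.ofReal (s ^ (p - 1)) :=
    (measurable_meas_ofReal_lt μ V).mul hpow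
  have hSm : Measurable fun s : ℝ =>
      μ {x | ENNReal.ofReal s < S x / b} * ENNReal.ofReal (s ^ (p - 1)) :=
    (measurable_meas_ofReal_lt μ fun x => S x / b).mul hpow
  rw [lintegral_rpow_eq_lintegral_meas_ofReal_lt_mul (hV.div_const _) hp,
    lintegral_rpow_eq_lintegral_meas_ofReal_lt_mul (hS.div_const _) hp,
    lintegral_rpow_eq_lintegral_meas_ofReal_lt_mul hV hp, mul_left_comm, ← mul_add]
  gcongr
  rw [← lintegral_const_mul _ hVm, ← lintegral_add_left hSm]
  refine setLIntegral_mono' measurableSet_Ioi fun s hs => ?_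
  rw [← mul_assoc, ← add_mul, hdiv ha, hdiv hb]
  gcongr
  exact h _ (Real.toNNReal_pos.2 hs)

theorem lintegral_rpow_le_of_good_lambda (hV : Measurable V) (hS : Measurable S) {p : ℝ}
    (hp : 0 < p) {ε : ℝ≥0} (hε : 0 < ε) {K : ℝ≥0∞} (hK : K * 3 ^ p ≤ 2⁻¹)
    (h : ∀ lam : ℝ≥0, 0 < lam →
      μ {x | 3 * lam < V x} ≤ μ {x | ε * lam < S x} + K * μ {x | lam < V x})
    (hfin : ∫⁻ x, V x ^ p ∂μ ≠ ∞) :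
    ∫⁻ x, V x ^ p ∂μ ≤ 2 * (3 / ε) ^ p * ∫⁻ x, S x ^ p ∂μ := by
  set I := ∫⁻ x, V x ^ p ∂μ
  set J := ∫⁻ x, S x ^ p ∂μ
  have hdiv {c : ℝ≥0} (hc : 0 < c) (F : α → ℝ≥0∞) :
      ∫⁻ x, (F x / c) ^ p ∂μ = (∫⁻ x, F x ^ p ∂μ) / (c : ℝ≥0∞) ^ p := by
    have hc0 : (c : ℝ≥0∞) ^ p ≠ 0 := by simp [hc.ne']
    simp_rw [ENNReal.div_rpow_of_nonneg _ _ hp.le, div_eq_mul_inv]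
    exact lintegral_mul_const' _ _ (ENNReal.inv_ne_top.2 hc0)
  have hIJ : I ≤ (3 / ε) ^ p * J + 2⁻¹ * I := by
    have key := lintegral_div_rpow_le_of_meas_lt_le hV hS hp (a := 3) three_pos hε (K := K) h
    rw [hdiv three_pos, hdiv hε, ENNReal.div_le_iff (by simp) (by finiteness)] at key
    calc I ≤ (J / ε ^ p + K * I) * 3 ^ p := key
      _ = 3 ^ p / ε ^ p * J + K * 3 ^ p * I := by
        rw [div_eq_mul_inv, div_eq_mul_inv]
        ring
      _ ≤ _ := by
        rw [ENNReal.div_rpow_of_nonneg _ _ hp.le]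
        gcongr
  have half_le : 2⁻¹ * I ≤ (3 / ε) ^ p * J := by
    have hhalf : 2⁻¹ * I ≠ ∞ := ENNReal.mul_ne_top (by simp) hfin
    rw [← ENNReal.add_le_add_iff_right hhalf, ← add_mul,
      ENNReal.inv_two_add_inv_two, one_mul]
    exact hIJ
  calc I = 2 * (2⁻¹ * I) := by
        rw [← mul_assoc, ENNReal.mul_inv_cancel two_ne_zero ofNat_ne_top, one_mul]
    _ ≤ 2 * ((3 / ε) ^ p * J) := by gcongr
    _ = _ := (mul_assoc _ _ _).symm

end LayerCake

section GoodLambda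

variable {E : Type*} [NormedAddCommGroup E] {r t : ℝ}

theorem variation_eq_iSup_indicator_Iio (ht : 0 < t) (a : ℕ → E) :
    variation t a = ⨆ m, variation t ((Set.Iio m).indicator a) := by
  refine le_antisymm (iSup_le fun N => ?_) (iSup_le fun m => variation_indicator_Iio_le t m a)
  rw [one_div, ENNReal.rpow_inv_le_iff ht]
  refine ENNReal.tsum_le_of_sum_range_le fun K => ?_
  calc ∑ k ∈ Finset.range K, ‖∑ i ∈ Finset.Ico (N k) (N (k + 1)), a i‖ₑ ^ t
      = ∑ k ∈ Finset.range K,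
          ‖∑ i ∈ Finset.Ico (N k) (N (k + 1)), (Set.Iio (N K)).indicator a i‖ₑ ^ t := by
        refine Finset.sum_congr rfl fun k hk => ?_
        congr 2
        refine Finset.sum_congr rfl fun i hi => (Set.indicator_of_mem ?_ a).symm
        exact (Finset.mem_Ico.1 hi).2.trans_le (N.monotone (Finset.mem_range.1 hk))
    _ ≤ ∑' k, ‖∑ i ∈ Finset.Ico (N k) (N (k + 1)), (Set.Iio (N K)).indicator a i‖ₑ ^ t :=
        ENNReal.sum_le_tsum _
    _ ≤ variation t ((Set.Iio (N K)).indicator a) ^ t := by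
        rw [← ENNReal.rpow_inv_le_iff ht, ← one_div]
        exact le_variation t _ N.monotone
    _ ≤ (⨆ m, variation t ((Set.Iio m).indicator a)) ^ t := by
        gcongr
        exact le_iSup (fun m => variation t ((Set.Iio m).indicator a)) (N K)

theorem variation_indicator_Iio_rpow_le (hr : 0 < r) (ht : 1 ≤ t) {p : ℝ} (hp : 0 ≤ p)
    (a : ℕ → E) (n : ℕ) :
    variation t ((Set.Iio n).indicator a) ^ p ≤ (n : ℝ≥0∞) ^ p * (∑' i, ‖a i‖ₑ ^ r) ^ (p / r) := by
  have hle (i : ℕ) : ‖a i‖ₑ ≤ (∑' i, ‖a i‖ₑ ^ r) ^ (1 / r) := by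
    rw [one_div, ENNReal.le_rpow_inv_iff hr]
    exact ENNReal.le_tsum i
  rw [← one_div_mul_eq_div, ENNReal.rpow_mul, ← ENNReal.mul_rpow_of_nonneg _ _ hp]
  gcongr
  calc variation t ((Set.Iio n).indicator a)
      ≤ ∑' i, ‖(Set.Iio n).indicator a i‖ₑ := variation_le_tsum ht _
    _ = ∑ i ∈ Finset.range n, ‖a i‖ₑ := by
        rw [tsum_eq_sum (s := Finset.range n) fun _ hi => by
          simp [Finset.mem_range.not.1 hi]]
        refine Finset.sum_congr rfl fun _ hi => ?_
        rw [Set.indicator_of_mem (Set.mem_Iio.2 (Finset.mem_range.1 hi))]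
    _ ≤ ∑ _i ∈ Finset.range n, (∑' i, ‖a i‖ₑ ^ r) ^ (1 / r) := Finset.sum_le_sum fun _ _ => hle _
    _ = n * (∑' i, ‖a i‖ₑ ^ r) ^ (1 / r) := by simp

variable {lam e : ℝ≥0∞} {a : ℕ → E}

/-- The times `i` before which the partial sums of `a` already have `t`-variation more than `lam`,
while the terms up to and including `i` still have `ℓ^r` norm at most `e`. -/
def goodTimes (r t : ℝ) (lam e : ℝ≥0∞) (a : ℕ → E) : Set ℕ :=
  {i | lam < variation t ((Set.Iio i).indicator a) ∧ ∑ j ∈ Finset.range (i + 1), ‖a j‖ₑ ^ r ≤ e ^ r}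

theorem goodTimes_eq_empty (h : variation t a ≤ lam) : goodTimes r t lam e a = ∅ :=
  Set.eq_empty_of_forall_notMem fun i hi =>
    hi.1.not_ge ((variation_indicator_Iio_le t i a).trans h)

theorem mem_goodTimes_congr {a b : ℕ → E} {i : ℕ} (hlt : ∀ j < i, a j = b j)
    (hi : ‖a i‖ₑ = ‖b i‖ₑ) : i ∈ goodTimes r t lam e a ↔ i ∈ goodTimes r t lam e b := by
  have hind : (Set.Iio i).indicator a = (Set.Iio i).indicator b := Set.indicator_congr hlt
  have hsum : ∑ j ∈ Finset.range i, ‖a j‖ₑ ^ r = ∑ j ∈ Finset.range i, ‖b j‖ₑ ^ r :=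
    Finset.sum_congr rfl fun j hj => by rw [hlt j (Finset.mem_range.1 hj)]
  simp only [goodTimes, Set.mem_ofPred_eq, hind, Finset.sum_range_succ, hsum, hi]

theorem tsum_enorm_indicator_goodTimes_rpow_le (hr : 0 < r) :
    ∑' i, ‖(goodTimes r t lam e a).indicator a i‖ₑ ^ r ≤ e ^ r := by
  classical
  refine ENNReal.tsum_le_of_sum_range_le fun n => ?_
  induction n with
  | zero => simp
  | succ n ih =>
    by_cases hn : n ∈ goodTimes r t lam e a
    · refine le_trans (Finset.sum_le_sum fun i _ => ?_) hn.2
      gcongr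
      rw [enorm_indicator_eq_indicator_enorm]
      exact Set.indicator_le_self _ _ i
    · rwa [Finset.sum_range_succ, Set.indicator_of_notMem hn, enorm_zero,
        ENNReal.zero_rpow_of_pos hr, add_zero]

theorem indicator_Iio_add_single_add_indicator_Ici (a : ℕ → E) (m : ℕ) :
    (Set.Iio m).indicator a + Pi.single m (a m) + (Set.Ici (m + 1)).indicator a = a := by
  classical
  ext i
  rcases lt_trichotomy i m with h | rfl | h
  · simp [h, h.ne, h.not_gt]
  · simp
  · simp [h.ne', h.not_gt, Nat.succ_le_of_lt h]

theorem lt_variation_indicator_goodTimes (hr : 0 < r) (ht : 1 ≤ t) (he : e ≤ lam)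
    (hsum : ∑' i, ‖a i‖ₑ ^ r ≤ e ^ r) (hvar : 3 * lam < variation t a) :
    lam < variation t ((goodTimes r t lam e a).indicator a) := by
  classical
  have exists_lt : ∃ i, lam < variation t ((Set.Iio i).indicator a) := by
    rw [variation_eq_iSup_indicator_Iio (by positivity), lt_iSup_iff] at hvar
    obtain ⟨i, hi⟩ := hvar
    exact ⟨i, lt_of_le_of_lt (le_mul_of_one_le_left' (by norm_num)) hi⟩
  obtain ⟨m, hm⟩ : ∃ m, Nat.find exists_lt = m + 1 := Nat.exists_eq_succ_of_ne_zero fun h0 => by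
    have := (Nat.find_spec exists_lt).trans_le (variation_le_tsum ht _)
    simp [h0] at this
  have hbefore : variation t ((Set.Iio m).indicator a) ≤ lam :=
    not_lt.1 (Nat.find_min exists_lt (by omega))
  have hgood : goodTimes r t lam e a = Set.Ici (m + 1) := by
    ext i
    refine ⟨fun hi => hm ▸ Nat.find_min' exists_lt hi.1, fun hi => ⟨?_, ?_⟩⟩
    · exact (hm ▸ Nat.find_spec exists_lt).trans_le (variation_indicator_Iio_mono t a hi)
    · exact (ENNReal.sum_le_tsum _).trans hsum
  have hsingle : variation t (Pi.single m (a m) : ℕ → E) ≤ lam :=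
    calc variation t (Pi.single m (a m) : ℕ → E)
        ≤ ∑' i, ‖(Pi.single m (a m) : ℕ → E) i‖ₑ := variation_le_tsum ht _
      _ = ‖a m‖ₑ := by
        rw [tsum_eq_single m fun i hi => by simp [hi], Pi.single_eq_same]
      _ ≤ e := (ENNReal.rpow_le_rpow_iff hr).1 ((ENNReal.le_tsum m).trans hsum)
      _ ≤ lam := he
  by_contra! hle
  refine hvar.not_ge ?_
  calc variation t a ≤ lam + lam + lam := by
        rw [hgood] at hle
        nth_rw 1 [← indicator_Iio_add_single_add_indicator_Ici a m]
        refine (variation_add_le ht _ _).trans (add_le_add ?_ hle)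
        exact (variation_add_le ht _ _).trans (add_le_add hbefore hsingle)
    _ = 3 * lam := by ring

end GoodLambda

namespace IsSwapDifference

variable {α κ E : Type*} [MeasurableSpace α] [MeasurableSpace κ]
  {q : ℕ → α → κ} {σ : ℕ → α → α} {μ : Measure α} [NormedAddCommGroup E] {d : ℕ → α → E}

theorem indicator_of_predictable (D : IsSwapDifference q σ d) (H : SwapFiltration q σ μ)
    {s : α → Set ℕ} (hs : ∀ n, (fun x => n ∈ s x).FactorsThrough (q n)) :
    IsSwapDifference q σ fun n x => (s x).indicator (d · x) n := by
  classical
  simp only [Set.indicator_apply]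
  refine ⟨fun n x y hxy => ?_, fun n x => ?_, fun n x y hxy => ?_⟩
  · simp only [hs n (H.nested n hxy), D.adapted n hxy]
  · simp only [hs n (H.apply_swap n x), D.anti, neg_ite, neg_zero]
  · simp only [apply_ite norm, norm_zero, hs n hxy, D.norm_predictable n hxy]

theorem indicator_Iio (D : IsSwapDifference q σ d) (H : SwapFiltration q σ μ) (m : ℕ) :
    IsSwapDifference q σ fun n x => (Set.Iio m).indicator (d · x) n :=
  D.indicator_of_predictable H fun _ _ _ _ => rfl

theorem indicator_goodTimes (D : IsSwapDifference q σ d) (H : SwapFiltration q σ μ) (r t : ℝ)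
    (lam e : ℝ≥0∞) :
    IsSwapDifference q σ fun n x => (goodTimes r t lam e (d · x)).indicator (d · x) n :=
  D.indicator_of_predictable H fun n _ _ hxy => propext <| mem_goodTimes_congr
    (fun _ hj => D.adapted_of_lt H hj hxy) (D.enorm_predictable n hxy)

variable [DiscreteMeasurableSpace κ]

theorem measurable_variation (D : IsSwapDifference q σ d) (H : SwapFiltration q σ μ) {t : ℝ}
    (ht : 0 < t) : Measurable fun x => variation t (d · x) := by
  simp_rw [variation_eq_iSup_indicator_Iio ht (d · _)]
  refine .iSup fun n => H.measurable_of_factorsThrough (n := n) fun x y hxy => ?_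
  have : (Set.Iio n).indicator (d · x) = (Set.Iio n).indicator (d · y) :=
    Set.indicator_congr fun i hi => D.adapted_of_lt H hi hxy
  simp only [this]

theorem measurable_tsum_enorm_rpow (D : IsSwapDifference q σ d) (H : SwapFiltration q σ μ)
    (r : ℝ) : Measurable fun x => ∑' i, ‖d i x‖ₑ ^ r :=
  .tsum fun i => (D.measurable_enorm H i).pow_const r

variable [InnerProductSpace ℝ E] {r t : ℝ} {C : ℝ≥0}

theorem meas_lt_variation_le (D : IsSwapDifference q σ d) (H : SwapFiltration q σ μ)
    (hr : 0 < r) (ht : 0 < t) (hC : ∀ u : ℝ≥0∞, u ≠ ∞ →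
      ∑' l : ℕ, ((2 : ℝ≥0∞)⁻¹ ^ l) ^ t * min ((2 ^ l * u) ^ 2) (2 ^ l * u) ≤ C * u ^ r)
    {lam : ℝ≥0} (hlam : 0 < lam) :
    μ {x | lam < variation t (d · x)} ≤ 64 * C * ∫⁻ x, (∑' i, ‖d i x‖ₑ ^ r) / lam ^ r ∂μ := by
  set c : ℝ := (lam : ℝ)⁻¹
  have hc : ‖c‖ₑ = (lam : ℝ≥0∞)⁻¹ := by
    rw [enorm_inv (by exact_mod_cast hlam.ne'), Real.enorm_of_nonneg lam.coe_nonneg]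
    simp
  have Dc : IsSwapDifference q σ fun n x => c • d n x := D.smul_of_predictable H fun _ _ _ _ => rfl
  have hset : {x | lam < variation t (d · x)} = {x | 1 < variation t fun n => c • d n x} := by
    ext x
    have hsmul : (variation t fun n => c • d n x) = (lam : ℝ≥0∞)⁻¹ * variation t (d · x) := by
      rw [← hc, ← variation_const_smul ht]
      rfl
    rw [Set.mem_ofPred_eq, Set.mem_ofPred_eq, hsmul, mul_comm, ← div_eq_mul_inv,
      ENNReal.lt_div_iff_mul_lt (.inl (by simpa using hlam.ne')) (.inl coe_ne_top), one_mul]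
  rw [hset]
  refine (Dc.meas_one_lt_variation_le H ht hC).trans_eq ?_
  rw [← lintegral_tsum fun i => ((Dc.measurable_enorm H i).pow_const r).aemeasurable]
  simp_rw [enorm_smul, hc, ENNReal.mul_rpow_of_nonneg _ _ hr.le, ENNReal.tsum_mul_left,
    ENNReal.inv_rpow, div_eq_mul_inv, mul_comm]

theorem meas_three_mul_lt_variation_le (D : IsSwapDifference q σ d) (H : SwapFiltration q σ μ)
    (hr : 0 < r) (ht : 1 ≤ t) (hC : ∀ u : ℝ≥0∞, u ≠ ∞ →
      ∑' l : ℕ, ((2 : ℝ≥0∞)⁻¹ ^ l) ^ t * min ((2 ^ l * u) ^ 2) (2 ^ l * u) ≤ C * u ^ r)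
    {lam ε : ℝ≥0} (hlam : 0 < lam) (hε : ε ≤ 1) :
    μ {x | 3 * lam < variation t (d · x)} ≤ μ {x | ε * lam < (∑' i, ‖d i x‖ₑ ^ r) ^ (1 / r)}
      + 64 * C * ε ^ r * μ {x | lam < variation t (d · x)} := by
  set b : ℕ → α → E := fun n x => (goodTimes r t lam (ε * lam) (d · x)).indicator (d · x) n
  have hsubset : {x | 3 * lam < variation t (d · x)} ⊆
      {x | ε * lam < (∑' i, ‖d i x‖ₑ ^ r) ^ (1 / r)} ∪ {x | lam < variation t (b · x)} := by
    intro x hx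
    refine or_iff_not_imp_left.2 fun hS => ?_
    rw [Set.mem_ofPred_eq, not_lt, one_div, ENNReal.rpow_inv_le_iff hr] at hS
    refine lt_variation_indicator_goodTimes hr ht (mul_le_of_le_one_left' ?_) hS hx
    exact_mod_cast hε
  have hb (x : α) : (∑' i, ‖b i x‖ₑ ^ r) / lam ^ r
      ≤ {x | lam < variation t (d · x)}.indicator (fun _ => (ε : ℝ≥0∞) ^ r) x := by
    by_cases hx : lam < variation t (d · x)
    · rw [Set.indicator_of_mem (show x ∈ {y | lam < variation t (d · y)} from hx),
        ENNReal.div_le_iff (by simp [hlam.ne']) (by finiteness),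
        ← ENNReal.mul_rpow_of_nonneg _ _ hr.le]
      exact tsum_enorm_indicator_goodTimes_rpow_le hr
    · simp [b, goodTimes_eq_empty (not_lt.1 hx), hr]
  have hmeas : MeasurableSet {x | lam < variation t (d · x)} :=
    measurableSet_lt measurable_const (D.measurable_variation H (by positivity))
  calc μ {x | 3 * lam < variation t (d · x)}
      ≤ μ {x | ε * lam < (∑' i, ‖d i x‖ₑ ^ r) ^ (1 / r)} + μ {x | lam < variation t (b · x)} :=
        (measure_mono hsubset).trans (measure_union_le _ _)
    _ ≤ _ := by
        gcongr
        refine ((D.indicator_goodTimes H r t lam (ε * lam)).meas_lt_variation_le H hr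
          (by positivity) hC hlam).trans ?_
        rw [mul_assoc _ (_ ^ r), ← lintegral_indicator_const hmeas]
        gcongr
        exact hb _

theorem lintegral_variation_rpow_le_of_ne_top (D : IsSwapDifference q σ d)
    (H : SwapFiltration q σ μ) (hr : 0 < r) (ht : 1 ≤ t) (hC : ∀ u : ℝ≥0∞, u ≠ ∞ →
      ∑' l : ℕ, ((2 : ℝ≥0∞)⁻¹ ^ l) ^ t * min ((2 ^ l * u) ^ 2) (2 ^ l * u) ≤ C * u ^ r)
    {p : ℝ} (hp : 0 < p) {ε : ℝ≥0} (hε : 0 < ε) (hε1 : ε ≤ 1)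
    (hCε : 64 * C * (ε : ℝ≥0∞) ^ r * 3 ^ p ≤ 2⁻¹)
    (hfin : ∫⁻ x, variation t (d · x) ^ p ∂μ ≠ ∞) :
    ∫⁻ x, variation t (d · x) ^ p ∂μ
      ≤ 2 * (3 / ε) ^ p * ∫⁻ x, (∑' i, ‖d i x‖ₑ ^ r) ^ (p / r) ∂μ := by
  have hS : Measurable fun x => (∑' i, ‖d i x‖ₑ ^ r) ^ (1 / r) :=
    (D.measurable_tsum_enorm_rpow H r).pow_const _
  simpa only [← ENNReal.rpow_mul, one_div_mul_eq_div] using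
    lintegral_rpow_le_of_good_lambda (D.measurable_variation H (by positivity)) hS hp hε hCε
      (fun lam hlam => D.meas_three_mul_lt_variation_le H hr ht hC hlam hε1) hfin

theorem lintegral_variation_rpow_le (D : IsSwapDifference q σ d)
    (H : SwapFiltration q σ μ) (hr : 0 < r) (ht : 1 ≤ t) (hC : ∀ u : ℝ≥0∞, u ≠ ∞ →
      ∑' l : ℕ, ((2 : ℝ≥0∞)⁻¹ ^ l) ^ t * min ((2 ^ l * u) ^ 2) (2 ^ l * u) ≤ C * u ^ r)
    {p : ℝ} (hp : 0 < p) {ε : ℝ≥0} (hε : 0 < ε) (hε1 : ε ≤ 1)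
    (hCε : 64 * C * (ε : ℝ≥0∞) ^ r * 3 ^ p ≤ 2⁻¹) :
    ∫⁻ x, variation t (d · x) ^ p ∂μ
      ≤ 2 * (3 / ε) ^ p * ∫⁻ x, (∑' i, ‖d i x‖ₑ ^ r) ^ (p / r) ∂μ := by
  set J := ∫⁻ x, (∑' i, ‖d i x‖ₑ ^ r) ^ (p / r) ∂μ
  rcases eq_or_ne J ∞ with hJ | hJ
  · have : 2 * (3 / (ε : ℝ≥0∞)) ^ p ≠ 0 := by simp [hp.le]
    simp [hJ, this]
  have hind (n : ℕ) : IsSwapDifference q σ fun i x => (Set.Iio n).indicator (d · x) i :=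
    D.indicator_Iio H n
  have hpow (x : α) : variation t (d · x) ^ p
      = ⨆ n, variation t ((Set.Iio n).indicator (d · x)) ^ p := by
    rw [variation_eq_iSup_indicator_Iio (by positivity), iSup_rpow _ hp]
  simp_rw [hpow]
  rw [lintegral_iSup (fun n => ((hind n).measurable_variation H (by positivity)).pow_const p)
    fun m n hmn x => ENNReal.rpow_le_rpow (variation_indicator_Iio_mono t _ hmn) hp.le]
  refine iSup_le fun n => ?_
  have hfin : ∫⁻ x, variation t ((Set.Iio n).indicator (d · x)) ^ p ∂μ ≠ ∞ := by
    refine ne_top_of_le_ne_top (b := (n : ℝ≥0∞) ^ p * J) (by finiteness) ?_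
    rw [← lintegral_const_mul' _ _ (by finiteness)]
    exact lintegral_mono fun x => variation_indicator_Iio_rpow_le hr ht hp.le _ n
  refine ((hind n).lintegral_variation_rpow_le_of_ne_top H hr ht hC hp hε hε1 hCε hfin).trans ?_
  gcongr 2 * (3 / ε) ^ p * ?_
  refine lintegral_mono fun x => ?_
  gcongr with i
  exact enorm_indicator_le_enorm_self _ _

end IsSwapDifference

theorem Admissible.exists_lintegral_variation_rpow_le {r t : ℝ} (h : Admissible r t) {p : ℝ}
    (hp : 0 < p) (α κ E : Type*) [MeasurableSpace α] [MeasurableSpace κ]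
    [DiscreteMeasurableSpace κ] [NormedAddCommGroup E] [InnerProductSpace ℝ E] :
    ∃ C : ℝ≥0, ∀ {q : ℕ → α → κ} {σ : ℕ → α → α} {μ : Measure α} {d : ℕ → α → E},
      IsSwapDifference q σ d → SwapFiltration q σ μ →
        ∫⁻ x, variation t (d · x) ^ p ∂μ ≤ C * ∫⁻ x, (∑' i, ‖d i x‖ₑ ^ r) ^ (p / r) ∂μ := by
  obtain ⟨C, hC⟩ := h.exists_tsum_rpow_mul_min_le
  set B : ℝ≥0 := (64 * C + 1) * 3 ^ p * 2
  have hB : 1 ≤ B := by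
    have h3 : (1 : ℝ≥0) ≤ 3 ^ p := NNReal.one_le_rpow (by norm_num) hp.le
    exact one_le_mul (one_le_mul le_add_self h3) one_le_two
  set ε : ℝ≥0 := B⁻¹ ^ r⁻¹
  have hε : 0 < ε := NNReal.rpow_pos (inv_pos.2 (one_pos.trans_le hB))
  have hε1 : ε ≤ 1 := NNReal.rpow_le_one (inv_le_one_of_one_le₀ hB) (by simp [h.pos.le])
  have hCε : 64 * C * ε ^ r * 3 ^ p ≤ 2⁻¹ := by
    rw [NNReal.rpow_inv_rpow h.pos.ne', mul_right_comm, ← div_eq_mul_inv,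
      div_le_iff₀ (one_pos.trans_le hB), mul_comm 2⁻¹, mul_inv_cancel_right₀ two_ne_zero]
    gcongr
    exact le_self_add
  refine ⟨2 * (3 / ε) ^ p, fun D H => ?_⟩
  have h3ε : ((2 * (3 / ε) ^ p : ℝ≥0) : ℝ≥0∞) = 2 * (3 / ε) ^ p := by
    rw [ENNReal.coe_mul, ENNReal.coe_rpow_of_nonneg _ hp.le, ENNReal.coe_div hε.ne']
    rfl
  rw [h3ε]
  refine D.lintegral_variation_rpow_le H h.pos h.one_le_right hC hp hε hε1 ?_
  calc (64 * C * (ε : ℝ≥0∞) ^ r * 3 ^ p : ℝ≥0∞) = (64 * C * ε ^ r * 3 ^ p : ℝ≥0) := by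
        push_cast [ENNReal.coe_rpow_of_nonneg _ h.pos.le, ENNReal.coe_rpow_of_nonneg _ hp.le]
        rfl
    _ ≤ (2⁻¹ : ℝ≥0) := by exact_mod_cast hCε
    _ = 2⁻¹ := by simp

/-! ### Dyadic differences of an antiderivative -/

section DyadicIntervals

/-- The integer `k` such that `x` lies in the dyadic interval `[k 2⁻ʲ, (k + 1) 2⁻ʲ)`. -/
def dyadicIndex (j : ℤ) (x : ℝ) : ℤ := ⌊x * 2 ^ j⌋

/-- The left endpoint of the dyadic interval of length `2⁻ʲ` containing `x`. -/
def dyadicLeft (j : ℤ) (x : ℝ) : ℝ := dyadicIndex j x * 2 ^ (-j)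

/-- The translation exchanging the two halves of every dyadic interval of length `2⁻ʲ`. -/
def dyadicSwap (j : ℤ) (x : ℝ) : ℝ :=
  if Even (dyadicIndex (j + 1) x) then x + 2 ^ (-(j + 1)) else x - 2 ^ (-(j + 1))

variable (j : ℤ) (x : ℝ)

theorem two_zpow_neg_eq_add : (2 : ℝ) ^ (-j) = 2 ^ (-(j + 1)) + 2 ^ (-(j + 1)) := by
  rw [← two_mul, ← zpow_one_add₀ two_ne_zero]
  congr 1
  ring

theorem dyadicIndex_eq_div : dyadicIndex j x = dyadicIndex (j + 1) x / 2 := by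
  have h : x * 2 ^ j = x * 2 ^ (j + 1) / (2 : ℕ) := by
    rw [zpow_add_one₀ two_ne_zero]
    push_cast
    ring
  rw [dyadicIndex, h, Int.floor_div_natCast]
  rfl

theorem dyadicIndex_add : dyadicIndex j (x + 2 ^ (-j)) = dyadicIndex j x + 1 := by
  rw [dyadicIndex, add_mul, ← zpow_add₀ two_ne_zero]
  simp [dyadicIndex]

theorem dyadicIndex_sub : dyadicIndex j (x - 2 ^ (-j)) = dyadicIndex j x - 1 := by
  rw [dyadicIndex, sub_mul, ← zpow_add₀ two_ne_zero]
  simp [dyadicIndex]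

theorem even_dyadicIndex_add :
    Even (dyadicIndex j (x + 2 ^ (-j))) ↔ ¬Even (dyadicIndex j x) := by
  rw [dyadicIndex_add, Int.even_add_one]

theorem even_dyadicIndex_sub :
    Even (dyadicIndex j (x - 2 ^ (-j))) ↔ ¬Even (dyadicIndex j x) := by
  rw [dyadicIndex_sub, Int.even_sub_one]

theorem even_dyadicIndex_swap :
    Even (dyadicIndex (j + 1) (dyadicSwap j x)) ↔ ¬Even (dyadicIndex (j + 1) x) := by
  rw [dyadicSwap]
  split_ifs
  exacts [even_dyadicIndex_add _ _, even_dyadicIndex_sub _ _]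

theorem dyadicIndex_swap : dyadicIndex j (dyadicSwap j x) = dyadicIndex j x := by
  rw [dyadicIndex_eq_div, dyadicIndex_eq_div j x, dyadicSwap]
  split_ifs with h
  · rw [dyadicIndex_add]
    obtain ⟨k, hk⟩ := h
    omega
  · rw [dyadicIndex_sub]
    obtain ⟨k, hk⟩ := Int.not_even_iff_odd.1 h
    omega

theorem measurable_dyadicIndex : Measurable (dyadicIndex j) :=
  (measurable_id.mul_const _).floor

theorem measurableSet_even_dyadicIndex : MeasurableSet {x | Even (dyadicIndex j x)} :=
  measurable_dyadicIndex j (MeasurableSet.of_discrete (s := {k | Even k}))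

theorem measurable_dyadicSwap : Measurable (dyadicSwap j) :=
  Measurable.ite (measurableSet_even_dyadicIndex _) (measurable_id.add_const _)
    (measurable_id.sub_const _)

theorem measurePreserving_dyadicSwap : MeasurePreserving (dyadicSwap j) := by
  refine ⟨measurable_dyadicSwap j, Measure.ext fun s hs => ?_⟩
  rw [Measure.map_apply (measurable_dyadicSwap j) hs]
  set S : Set ℝ := {x | Even (dyadicIndex (j + 1) x)}
  have hS : MeasurableSet S := measurableSet_even_dyadicIndex _
  have hmem (x : ℝ) : x ∈ S ↔ Even (dyadicIndex (j + 1) x) := Iff.rfl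
  have hleft : dyadicSwap j ⁻¹' s ∩ S = (fun x => x + 2 ^ (-(j + 1))) ⁻¹' (s \ S) := by
    ext x
    by_cases hx : Even (dyadicIndex (j + 1) x) <;>
      simp [hmem, dyadicSwap, even_dyadicIndex_add _ x, hx, -zpow_neg, -neg_add_rev]
  have hright : dyadicSwap j ⁻¹' s \ S = (fun x => x - 2 ^ (-(j + 1))) ⁻¹' (s ∩ S) := by
    ext x
    by_cases hx : Even (dyadicIndex (j + 1) x) <;>
      simp [hmem, dyadicSwap, even_dyadicIndex_sub _ x, hx, -zpow_neg, -neg_add_rev]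
  rw [← measure_inter_add_sdiff _ hS, hleft, hright,
    (measurePreserving_add_right volume _).measure_preimage (hs.diff hS).nullMeasurableSet,
    (measurePreserving_sub_right volume _).measure_preimage (hs.inter hS).nullMeasurableSet,
    add_comm, measure_inter_add_sdiff _ hS]

theorem dyadicIndex_factorsThrough_succ :
    (dyadicIndex j).FactorsThrough (dyadicIndex (j + 1)) := fun x y h => by
  rw [dyadicIndex_eq_div, dyadicIndex_eq_div j y, h]

theorem swapFiltration_dyadic (j₀ : ℤ) :
    SwapFiltration (fun n : ℕ => dyadicIndex (n + j₀)) (fun n => dyadicSwap (n + j₀)) volume where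
  measurable _ := measurable_dyadicIndex _
  nested n := by
    simpa [add_right_comm] using dyadicIndex_factorsThrough_succ (n + j₀)
  measurePreserving _ := measurePreserving_dyadicSwap _
  apply_swap _ := dyadicIndex_swap _

theorem dyadicLeft_le : dyadicLeft j x ≤ x := by
  rw [dyadicLeft, zpow_neg, ← div_eq_mul_inv, div_le_iff₀ (by positivity)]
  exact Int.floor_le _

theorem lt_dyadicLeft_add : x < dyadicLeft j x + 2 ^ (-j) := by
  rw [dyadicLeft, ← add_one_mul, zpow_neg, ← div_eq_mul_inv, lt_div_iff₀ (by positivity)]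
  exact Int.lt_floor_add_one _

theorem abs_sub_le_of_mem_dyadic {z : ℝ}
    (hz : z ∈ Set.Icc (dyadicLeft j x) (dyadicLeft j x + 2 ^ (-j))) : |z - x| ≤ 2 ^ (-j) := by
  have := dyadicLeft_le j x
  have := lt_dyadicLeft_add j x
  obtain ⟨h₁, h₂⟩ := hz
  rw [abs_le]
  constructor <;> linarith

theorem dyadicLeft_succ : dyadicLeft (j + 1) x =
    if Even (dyadicIndex (j + 1) x) then dyadicLeft j x
    else dyadicLeft j x + 2 ^ (-(j + 1)) := by
  simp only [dyadicLeft, two_zpow_neg_eq_add j, dyadicIndex_eq_div j]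
  split_ifs with h
  · obtain ⟨k, hk⟩ := h
    rw [hk, show (k + k) / 2 = k by omega]
    push_cast
    ring
  · obtain ⟨k, hk⟩ := Int.not_even_iff_odd.1 h
    rw [hk, show (2 * k + 1) / 2 = k by omega]
    push_cast
    ring

end DyadicIntervals

section DyadicDifference

variable {E : Type*} [NormedAddCommGroup E]

/-- The second difference of `G` over the dyadic interval of length `2⁻ʲ` containing `x`. -/
def dyadicSecondDifference (j : ℤ) (G : ℝ → E) (x : ℝ) : E :=
  (G (dyadicLeft j x + 2 ^ (-(j + 1)) + 2 ^ (-(j + 1))) - G (dyadicLeft j x + 2 ^ (-(j + 1)))) -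
    (G (dyadicLeft j x + 2 ^ (-(j + 1))) - G (dyadicLeft j x))

theorem dyadicSecondDifference_factorsThrough (j : ℤ) (G : ℝ → E) :
    (dyadicSecondDifference j G).FactorsThrough (dyadicIndex j) := fun x y h => by
  simp only [dyadicSecondDifference, dyadicLeft, h]

variable [NormedSpace ℝ E]

/-- The slope of `G` over the dyadic interval of length `2⁻ʲ` containing `x`, which is the average
of the derivative of `G` over this interval. -/
def dyadicSlope (j : ℤ) (G : ℝ → E) (x : ℝ) : E :=
  (2 : ℝ) ^ j • (G (dyadicLeft j x + 2 ^ (-j)) - G (dyadicLeft j x))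

/-- The dyadic martingale difference of generation `j` of the derivative of `G`. -/
def dyadicDifference (j : ℤ) (G : ℝ → E) (x : ℝ) : E :=
  dyadicSlope (j + 1) G x - dyadicSlope j G x

theorem dyadicDifference_eq_ite (j : ℤ) (G : ℝ → E) (x : ℝ) : dyadicDifference j G x =
    if Even (dyadicIndex (j + 1) x) then -((2 : ℝ) ^ j • dyadicSecondDifference j G x)
    else (2 : ℝ) ^ j • dyadicSecondDifference j G x := by
  rw [dyadicDifference, dyadicSlope, dyadicSlope, dyadicLeft_succ, dyadicSecondDifference,
    two_zpow_neg_eq_add j, zpow_add_one₀ two_ne_zero, ← add_assoc]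
  split_ifs <;> module

theorem norm_dyadicDifference (j : ℤ) (G : ℝ → E) (x : ℝ) :
    ‖dyadicDifference j G x‖ = 2 ^ j * ‖dyadicSecondDifference j G x‖ := by
  rw [dyadicDifference_eq_ite]
  split_ifs <;> simp [norm_smul]

theorem isSwapDifference_dyadicDifference (j₀ : ℤ) (G : ℕ → ℝ → E) :
    IsSwapDifference (fun n : ℕ => dyadicIndex (n + j₀)) (fun n => dyadicSwap (n + j₀))
      (fun n => dyadicDifference (n + j₀) (G n)) where
  adapted n x y h := by
    replace h : dyadicIndex (n + j₀ + 1) x = dyadicIndex (n + j₀ + 1) y := by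
      simpa [add_right_comm] using h
    simp only [dyadicDifference_eq_ite, h,
      dyadicSecondDifference_factorsThrough _ _ (dyadicIndex_factorsThrough_succ _ h)]
  anti n x := by
    simp only [dyadicDifference_eq_ite, even_dyadicIndex_swap,
      dyadicSecondDifference_factorsThrough _ _ (dyadicIndex_swap (n + j₀) x)]
    split_ifs <;> simp_all
  norm_predictable n x y h := by
    simp only [norm_dyadicDifference, dyadicSecondDifference_factorsThrough _ _ h]

variable {j : ℤ} {G G' G'' : ℝ → E} {x M : ℝ}

theorem norm_dyadicDifference_le_of_norm_le (hM : ∀ z, |z - x| ≤ 2 ^ (-j) → ‖G z‖ ≤ M) :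
    ‖dyadicDifference j G x‖ ≤ 2 ^ j * (4 * M) := by
  rw [norm_dyadicDifference]
  gcongr
  have hh : (0 : ℝ) < 2 ^ (-(j + 1)) := by positivity
  have hadd := two_zpow_neg_eq_add j
  have hM (z) (h₁ : dyadicLeft j x ≤ z) (h₂ : z ≤ dyadicLeft j x + 2 ^ (-j)) : ‖G z‖ ≤ M :=
    hM z (abs_sub_le_of_mem_dyadic j x ⟨h₁, h₂⟩)
  have hleft := hM (dyadicLeft j x) le_rfl (by linarith)
  have hmid := hM (dyadicLeft j x + 2 ^ (-(j + 1))) (by linarith) (by linarith)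
  have hright := hM (dyadicLeft j x + 2 ^ (-(j + 1)) + 2 ^ (-(j + 1))) (by linarith) (by linarith)
  refine (norm_sub_le _ _).trans ((add_le_add (norm_sub_le _ _) (norm_sub_le _ _)).trans ?_)
  linarith

theorem norm_second_difference_le {a h : ℝ} (hh : 0 ≤ h)
    (hG : ∀ z, HasDerivAt G (G' z) z) (hG' : ∀ z, HasDerivAt G' (G'' z) z)
    (hM : ∀ z ∈ Set.Icc a (a + h + h), ‖G'' z‖ ≤ M) :
    ‖(G (a + h + h) - G (a + h)) - (G (a + h) - G a)‖ ≤ M * h * h := by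
  have hincrement : ∀ y ∈ Set.Icc a (a + h), ‖G' (y + h) - G' y‖ ≤ M * h := fun y hy => by
    simpa using norm_image_sub_le_of_norm_deriv_le_segment' (b := y + h)
      (fun z _ => (hG' z).hasDerivWithinAt)
      (fun z hz => hM z ⟨hy.1.trans hz.1, by linarith [hz.2, hy.2]⟩) (y + h) ⟨by linarith, le_rfl⟩
  simpa using norm_image_sub_le_of_norm_deriv_le_segment' (f := fun y => G (y + h) - G y)
    (fun z _ => (((hG (z + h)).comp_add_const z h).sub (hG z)).hasDerivWithinAt)
    (fun z hz => hincrement z ⟨hz.1, hz.2.le⟩) (a + h) ⟨by linarith, le_rfl⟩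

theorem norm_dyadicDifference_le_of_norm_deriv_deriv_le (hG : ∀ z, HasDerivAt G (G' z) z)
    (hG' : ∀ z, HasDerivAt G' (G'' z) z) (hM : ∀ z, |z - x| ≤ 2 ^ (-j) → ‖G'' z‖ ≤ M) :
    ‖dyadicDifference j G x‖ ≤ 2 ^ (-j) * M := by
  have hM0 : 0 ≤ M := (norm_nonneg _).trans (hM x (by rw [sub_self, abs_zero]; positivity))
  have hh : (2 : ℝ) ^ (-(j + 1)) = 2 ^ (-j) / 2 := by linarith [two_zpow_neg_eq_add j]
  have hsecond : ‖dyadicSecondDifference j G x‖ ≤ M * 2 ^ (-(j + 1)) * 2 ^ (-(j + 1)) :=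
    norm_second_difference_le (by positivity) hG hG' fun z hz =>
      hM z (abs_sub_le_of_mem_dyadic j x (by rwa [two_zpow_neg_eq_add, ← add_assoc]))
  calc ‖dyadicDifference j G x‖
      ≤ 2 ^ j * (M * (2 ^ (-j) / 2) * (2 ^ (-j) / 2)) := by
        rw [norm_dyadicDifference]
        rw [hh] at hsecond
        gcongr
    _ = 2 ^ j * 2 ^ (-j) * (2 ^ (-j) * M / 4) := by ring
    _ = 2 ^ (-j) * M / 4 := by rw [← zpow_add₀ two_ne_zero, add_neg_cancel, zpow_zero, one_mul]
    _ ≤ 2 ^ (-j) * M := by linarith [show 0 ≤ (2 : ℝ) ^ (-j) * M by positivity]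

end DyadicDifference

section Telescoping

open Filter Topology Asymptotics

variable {E : Type*} [NormedAddCommGroup E] [NormedSpace ℝ E]

theorem tendsto_two_zpow_neg_atTop : Tendsto (fun j : ℤ => (2 : ℝ) ^ (-j)) atTop (𝓝 0) := by
  have h := (tendsto_rpow_atTop_of_base_lt_one (2⁻¹ : ℝ) (by norm_num) (by norm_num)).comp
    (tendsto_intCast_atTop_atTop (R := ℝ))
  exact h.congr fun j => by simp

theorem isLittleO_dyadic_of_hasDerivAt {G : ℝ → E} {x : ℝ} {c : E} (hG : HasDerivAt G c x)
    {z : ℤ → ℝ} (hz : ∀ j, |z j - x| ≤ 2 ^ (-j)) :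
    (fun j => G (z j) - G x - (z j - x) • c) =o[atTop] fun j : ℤ => (2 : ℝ) ^ (-j) := by
  have hzx : (fun j => z j - x) =O[atTop] fun j : ℤ => (2 : ℝ) ^ (-j) :=
    isBigO_of_le _ fun j => by simpa using hz j
  have hlim : Tendsto z atTop (𝓝 x) := by
    simpa using (hzx.trans_tendsto tendsto_two_zpow_neg_atTop).add_const x
  exact (hG.isLittleO.comp_tendsto hlim).trans_isBigO hzx

theorem tendsto_dyadicSlope_atTop {G : ℝ → E} {x : ℝ} {c : E} (hG : HasDerivAt G c x) :
    Tendsto (fun j => dyadicSlope j G x) atTop (𝓝 c) := by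
  have hpos (j : ℤ) : (0 : ℝ) ≤ 2 ^ (-j) := by positivity
  have hleft := isLittleO_dyadic_of_hasDerivAt hG (z := fun j => dyadicLeft j x)
    fun j => abs_sub_le_of_mem_dyadic j x ⟨le_rfl, le_add_of_nonneg_right (hpos j)⟩
  have hright := isLittleO_dyadic_of_hasDerivAt hG (z := fun j => dyadicLeft j x + 2 ^ (-j))
    fun j => abs_sub_le_of_mem_dyadic j x ⟨le_add_of_nonneg_right (hpos j), le_rfl⟩
  refine tendsto_sub_nhds_zero_iff.1 ((hright.sub hleft).tendsto_inv_smul_nhds_zero.congr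
    fun j => ?_)
  have hc : c = (2 : ℝ) ^ j • (2 : ℝ) ^ (-j) • c := by
    rw [smul_smul, ← zpow_add₀ two_ne_zero, add_neg_cancel, zpow_zero, one_smul]
  rw [zpow_neg, inv_inv, ← zpow_neg, dyadicSlope]
  conv_rhs => rw [hc]
  module

theorem tendsto_dyadicSlope_atBot {G : ℝ → E} (x : ℝ) {B : ℝ} (hB : ∀ z, ‖G z‖ ≤ B) :
    Tendsto (fun j => dyadicSlope j G x) atBot (𝓝 0) := by
  have hlim : Tendsto (fun j : ℤ => (2 : ℝ) ^ j * (B + B)) atBot (𝓝 0) := by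
    simpa [Function.comp_def] using
      (tendsto_two_zpow_neg_atTop.comp tendsto_neg_atBot_atTop).mul_const (B + B)
  refine squeeze_zero_norm (fun j => ?_) hlim
  rw [dyadicSlope, norm_smul, norm_zpow, Real.norm_two]
  gcongr
  exact (norm_sub_le _ _).trans (add_le_add (hB _) (hB _))

theorem sum_dyadicDifference (i : ℤ) (J : ℕ) (G : ℝ → E) (x : ℝ) :
    ∑ m ∈ Finset.Ico (-J : ℤ) J, dyadicDifference (i + m) G x =
      dyadicSlope (i + J) G x - dyadicSlope (i - J) G x := by
  induction J with
  | zero => simp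
  | succ J ih =>
    have hinsert : Finset.Ico (-(J + 1 : ℕ) : ℤ) (J + 1 : ℕ) =
        insert (-(J : ℤ) - 1) (insert (J : ℤ) (Finset.Ico (-(J : ℤ)) J)) := by
      ext m
      simp only [Finset.mem_Ico, Finset.mem_insert]
      omega
    rw [hinsert, Finset.sum_insert (by simp), Finset.sum_insert (by simp), ih,
      dyadicDifference, dyadicDifference]
    push_cast
    rw [show i + (-(J : ℤ) - 1) + 1 = i - J by ring,
      show i + (-(J : ℤ) - 1) = i - (J + 1) by ring, add_assoc i (J : ℤ) 1]
    abel

theorem enorm_sum_le_tsum_dyadicDifference {ι : Type*} (s : Finset ι) {G f : ι → ℝ → E} {x : ℝ}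
    (k : ι → ℤ) (hG : ∀ i, HasDerivAt (G i) (f i x) x) (hB : ∀ i, ∃ B, ∀ z, ‖G i z‖ ≤ B) :
    ‖∑ i ∈ s, f i x‖ₑ ≤ ∑' m : ℤ, ‖∑ i ∈ s, dyadicDifference (k i + m) (G i) x‖ₑ := by
  have hlim : Tendsto (fun J : ℕ => ∑ i ∈ s, ∑ m ∈ Finset.Ico (-J : ℤ) J,
      dyadicDifference (k i + m) (G i) x) atTop (𝓝 (∑ i ∈ s, f i x)) := by
    refine tendsto_finsetSum _ fun i _ => ?_
    obtain ⟨B, hB⟩ := hB i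
    have hcast := tendsto_natCast_atTop_atTop (R := ℤ)
    have htop := (tendsto_dyadicSlope_atTop (hG i)).comp
      (tendsto_atTop_add_const_left _ (k i) hcast)
    have hbot := (tendsto_dyadicSlope_atBot x hB).comp
      (tendsto_atBot_add_const_left _ (k i) (tendsto_neg_atTop_atBot.comp hcast))
    simpa [sum_dyadicDifference, sub_eq_add_neg (k i)] using htop.sub hbot
  refine le_of_tendsto hlim.enorm (Eventually.of_forall fun J => ?_)
  rw [Finset.sum_comm]
  exact (enorm_sum_le _ _).trans (ENNReal.sum_le_tsum _)

end Telescoping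

/-! ### The dyadic maximal function -/

section WeakTypeInterpolation

variable {α : Type*} [MeasurableSpace α] {μ : Measure α} {F g : α → ℝ≥0∞}

theorem lintegral_rpow_le_of_mul_meas_le (hF : Measurable F) (hg : Measurable g) {s : ℝ}
    (hs : 1 < s) {c : ℝ≥0∞}
    (h : ∀ t : ℝ, 0 < t → ENNReal.ofReal t * μ {x | ENNReal.ofReal t < F x} ≤
      c * ∫⁻ x in {x | ENNReal.ofReal t < g x}, g x ∂μ) :
    ∫⁻ x, F x ^ s ∂μ ≤ c * ENNReal.ofReal (s / (s - 1)) * ∫⁻ x, g x ^ s ∂μ := by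
  have hs0 : 0 < s - 1 := by linarith
  set ν := μ.withDensity g
  have hν : ∫⁻ x, g x ^ (s - 1) ∂ν = ∫⁻ x, g x ^ s ∂μ := by
    rw [lintegral_withDensity_eq_lintegral_mul μ hg (hg.pow_const _)]
    refine lintegral_congr fun x => ?_
    rw [Pi.mul_apply, show s = 1 + (s - 1) by ring,
      ENNReal.rpow_add_of_nonneg _ _ zero_le_one hs0.le, ENNReal.rpow_one, add_sub_cancel_left]
  have hpow {t : ℝ} (ht : 0 < t) :
      ENNReal.ofReal (t ^ (s - 1)) = ENNReal.ofReal t * ENNReal.ofReal (t ^ (s - 1 - 1)) := by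
    rw [← ENNReal.ofReal_mul ht.le, Real.rpow_sub_one ht.ne' (s - 1), mul_div_cancel₀ _ ht.ne']
  have hlevel {t : ℝ} (ht : t ∈ Set.Ioi (0 : ℝ)) :
      μ {x | ENNReal.ofReal t < F x} * ENNReal.ofReal (t ^ (s - 1)) ≤
        c * (ν {x | ENNReal.ofReal t < g x} * ENNReal.ofReal (t ^ (s - 1 - 1))) := by
    rw [hpow ht, withDensity_apply _ (measurableSet_lt measurable_const hg), ← mul_assoc,
      mul_comm (μ _), ← mul_assoc]
    exact mul_le_mul_left (h t ht) _
  have hmeas : Measurable fun t : ℝ =>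
      ν {x | ENNReal.ofReal t < g x} * ENNReal.ofReal (t ^ (s - 1 - 1)) :=
    (measurable_meas_ofReal_lt ν g).mul (measurable_id.pow_const _).ennreal_ofReal
  calc ∫⁻ x, F x ^ s ∂μ
      = ENNReal.ofReal s * ∫⁻ t in Set.Ioi (0 : ℝ),
          μ {x | ENNReal.ofReal t < F x} * ENNReal.ofReal (t ^ (s - 1)) :=
        lintegral_rpow_eq_lintegral_meas_ofReal_lt_mul hF (by linarith)
    _ ≤ ENNReal.ofReal s * ∫⁻ t in Set.Ioi (0 : ℝ),
          c * (ν {x | ENNReal.ofReal t < g x} * ENNReal.ofReal (t ^ (s - 1 - 1))) := by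
        gcongr _ * ?_
        exact setLIntegral_mono' measurableSet_Ioi fun t => hlevel
    _ = c * ENNReal.ofReal (s / (s - 1)) * ∫⁻ x, g x ^ s ∂μ := by
        rw [lintegral_const_mul _ hmeas, ← hν,
          lintegral_rpow_eq_lintegral_meas_ofReal_lt_mul hg hs0, ← mul_assoc, ← mul_assoc,
          mul_assoc c, ← ENNReal.ofReal_mul (by positivity), div_mul_cancel₀ _ hs0.ne', mul_comm c]

end WeakTypeInterpolation

/-- The centred Hardy–Littlewood maximal function on `ℝ` over intervals of dyadic radius. -/
def dyadicMaximal (g : ℝ → ℝ≥0∞) (x : ℝ) : ℝ≥0∞ :=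
  ⨆ k : ℤ, ⨍⁻ y in Metric.closedBall x (2 ^ k), g y ∂volume

section Maximal

open Metric

variable {g : ℝ → ℝ≥0∞}

theorem measurable_setLIntegral_closedBall (hg : Measurable g) (r : ℝ) :
    Measurable fun x => ∫⁻ y in closedBall x r, g y := by
  have hind (x : ℝ) : ∫⁻ y in closedBall x r, g y =
      ∫⁻ y, {z : ℝ × ℝ | dist z.2 z.1 ≤ r}.indicator (fun z => g z.2) (x, y) := by
    rw [← lintegral_indicator isClosed_closedBall.measurableSet]
    rfl
  simp_rw [hind]
  exact ((hg.comp measurable_snd).indicator (measurableSet_le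
    (measurable_snd.dist measurable_fst) measurable_const)).lintegral_prod_right'

theorem measurable_dyadicMaximal (hg : Measurable g) : Measurable (dyadicMaximal g) := by
  refine Measurable.iSup fun k => ?_
  simp_rw [setLAverage_eq, Real.volume_closedBall]
  exact (measurable_setLIntegral_closedBall hg _).div_const _

theorem dyadicMaximal_le_add (c : ℝ≥0∞) (x : ℝ) :
    dyadicMaximal g x ≤ c + dyadicMaximal ({y | c < g y}.indicator g) x := by
  refine iSup_le fun k => ?_
  have hball0 : volume (closedBall x ((2 : ℝ) ^ k)) ≠ 0 := (measure_closedBall_pos _ _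
    (by positivity)).ne'
  have hle (y : ℝ) : g y ≤ c + {y | c < g y}.indicator g y := by
    by_cases hy : c < g y
    · rw [Set.indicator_of_mem (show y ∈ {y | c < g y} from hy)]
      exact le_add_self
    · exact (not_lt.1 hy).trans le_self_add
  calc ⨍⁻ y in closedBall x (2 ^ k), g y ∂volume
      ≤ ⨍⁻ y in closedBall x (2 ^ k), (c + {y | c < g y}.indicator g y) ∂volume := by
        simp_rw [setLAverage_eq]
        gcongr with y
        exact hle y
    _ = c + ⨍⁻ y in closedBall x (2 ^ k), {y | c < g y}.indicator g y ∂volume := by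
        simp_rw [laverage_eq]
        rw [lintegral_add_left measurable_const, ENNReal.add_div, ← laverage_eq,
          setLAverage_const hball0 measure_closedBall_lt_top.ne]
    _ ≤ c + dyadicMaximal ({y | c < g y}.indicator g) x := by
        gcongr
        exact le_iSup (fun k : ℤ => ⨍⁻ y in closedBall x (2 ^ k), _ ∂volume) k

theorem mul_volume_le_of_forall_mul_volume_closedBall_le {S : Set ℝ} {r : ℝ → ℝ} {R : ℝ}
    (hr : ∀ x, 0 < r x) (hR : ∀ x ∈ S, r x ≤ R) {c : ℝ≥0∞}
    (hc : ∀ x ∈ S, c * volume (closedBall x (r x)) ≤ ∫⁻ y in closedBall x (r x), g y) :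
    c * volume S ≤ 5 * ∫⁻ x, g x := by
  obtain ⟨u, huS, hdisj, hcover⟩ :=
    Vitali.exists_disjoint_subfamily_covering_enlargement_closedBall S id r R hR 5 (by norm_num)
  have hu : u.Countable := hdisj.countable_of_nonempty_interior fun x _ => ⟨x, by
    rw [interior_closedBall _ (hr x).ne']
    exact mem_ball_self (hr x)⟩
  have hsub : S ⊆ ⋃ b ∈ u, closedBall b (5 * r b) := fun x hx => by
    obtain ⟨b, hb, hxb⟩ := hcover x hx
    exact Set.mem_biUnion hb (hxb (mem_closedBall_self (hr x).le))
  calc c * volume S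
      ≤ c * ∑' b : u, volume (closedBall (b : ℝ) (5 * r b)) := by
        gcongr
        exact (measure_mono hsub).trans (measure_biUnion_le _ hu _)
    _ = ∑' b : u, 5 * (c * volume (closedBall (b : ℝ) (r b))) := by
        rw [← ENNReal.tsum_mul_left]
        refine tsum_congr fun b => ?_
        rw [Real.volume_closedBall, Real.volume_closedBall, mul_left_comm 2 (5 : ℝ),
          ENNReal.ofReal_mul (by norm_num), ENNReal.ofReal_ofNat, mul_left_comm]
    _ ≤ ∑' b : u, 5 * ∫⁻ y in closedBall (b : ℝ) (r b), g y := by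
        gcongr with b
        exact hc b (huS b.2)
    _ = 5 * ∫⁻ y in ⋃ b ∈ u, closedBall b (r b), g y := by
        rw [ENNReal.tsum_mul_left]
        exact congrArg _ (lintegral_biUnion hu
          (fun b _ => isClosed_closedBall.measurableSet) hdisj _).symm
    _ ≤ 5 * ∫⁻ x, g x := by
        gcongr
        exact Measure.restrict_le_self

theorem mul_volume_lt_dyadicMaximal_le (g : ℝ → ℝ≥0∞) (c : ℝ≥0∞) :
    c * volume {x | c < dyadicMaximal g x} ≤ 5 * ∫⁻ x, g x := by
  rcases eq_or_ne c 0 with rfl | hc0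
  · simp
  rcases eq_or_ne c ∞ with rfl | hctop
  · simp
  rcases eq_or_ne (∫⁻ x, g x) ∞ with hI | hI
  · simp [hI]
  have hradius (x : ℝ) (hx : x ∈ {x | c < dyadicMaximal g x}) :
      ∃ k : ℤ, c * volume (closedBall x ((2 : ℝ) ^ k)) ≤ ∫⁻ y in closedBall x (2 ^ k), g y := by
    obtain ⟨k, hk⟩ := lt_iSup_iff.1 (show c < dyadicMaximal g x from hx)
    rw [setLAverage_eq] at hk
    exact ⟨k, ENNReal.mul_le_of_le_div hk.le⟩
  choose! k hk using hradius
  refine mul_volume_le_of_forall_mul_volume_closedBall_le (R := ((∫⁻ y, g y) / c).toReal)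
    (fun x => by positivity) (fun x hx => ?_) hk
  refine (ENNReal.ofReal_le_iff_le_toReal (ENNReal.div_ne_top hI hc0)).1 ?_
  refine (ENNReal.le_div_iff_mul_le (.inl hc0) (.inl hctop)).2 ?_
  refine le_trans ?_ ((hk x hx).trans (setLIntegral_le_lintegral _ _))
  rw [mul_comm, Real.volume_closedBall]
  gcongr
  linarith [show (0 : ℝ) < 2 ^ k x by positivity]

theorem exists_lintegral_dyadicMaximal_rpow_le {s : ℝ} (hs : 1 < s) : ∃ C : ℝ≥0,
    ∀ g : ℝ → ℝ≥0∞, Measurable g → ∫⁻ x, dyadicMaximal g x ^ s ≤ C * ∫⁻ x, g x ^ s := by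
  have hs0 : 0 < s := by linarith
  refine ⟨2 ^ s * (5 * (s / (s - 1)).toNNReal), fun g hg => ?_⟩
  have hweak (t : ℝ) (_ : 0 < t) :
      ENNReal.ofReal t * volume {x | ENNReal.ofReal t < dyadicMaximal g x / 2} ≤
        5 * ∫⁻ x in {x | ENNReal.ofReal t < g x}, g x := by
    rw [← lintegral_indicator (measurableSet_lt measurable_const hg)]
    refine le_trans ?_ (mul_volume_lt_dyadicMaximal_le _ (ENNReal.ofReal t))
    gcongr 1
    refine measure_mono fun x hx => ?_
    have hx : ENNReal.ofReal t * 2 < dyadicMaximal g x :=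
      (ENNReal.lt_div_iff_mul_lt (by simp) (by simp)).1 hx
    rw [mul_two] at hx
    exact (ENNReal.add_lt_add_iff_left ENNReal.ofReal_ne_top).1
      (hx.trans_le (dyadicMaximal_le_add _ x))
  have hhalf (a : ℝ≥0∞) : a ^ s = 2 ^ s * (a / 2) ^ s := by
    rw [← ENNReal.mul_rpow_of_nonneg _ _ hs0.le, ENNReal.mul_div_cancel (by simp) (by simp)]
  calc ∫⁻ x, dyadicMaximal g x ^ s
      = 2 ^ s * ∫⁻ x, (dyadicMaximal g x / 2) ^ s := by
        rw [← lintegral_const_mul' _ _ (by finiteness)]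
        exact lintegral_congr fun x => hhalf _
    _ ≤ 2 ^ s * (5 * ENNReal.ofReal (s / (s - 1)) * ∫⁻ x, g x ^ s) := by
        gcongr
        exact lintegral_rpow_le_of_mul_meas_le ((measurable_dyadicMaximal hg).div_const _) hg hs
          hweak
    _ = _ := by
        rw [ENNReal.coe_mul, ENNReal.coe_mul, ENNReal.coe_rpow_of_nonneg _ hs0.le]
        simp only [ENNReal.coe_ofNat, ENNReal.ofReal, mul_assoc]

end Maximal

/-! ### Poisson averages -/

section PoissonAverage

open Metric ProbabilityTheory

/-- The Poisson average of `h` at scale `2^(-j)`. Its kernel, the density of a Cauchy distribution,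
decays only quadratically, so it dominates the kernel of every Schwartz convolution operator. -/
def poissonAverage (j : ℤ) (h : ℝ → ℝ≥0∞) (x : ℝ) : ℝ≥0∞ :=
  ∫⁻ y, cauchyPDF x (2 ^ (-j)) y * h y

theorem cauchyPDF_comm (x y : ℝ) (γ : ℝ≥0) : cauchyPDF x γ y = cauchyPDF y γ x := by
  simp only [cauchyPDF, cauchyPDFReal, ← neg_sub x y, neg_sq]

theorem measurable_uncurry_cauchyPDF (γ : ℝ≥0) :
    Measurable fun z : ℝ × ℝ => cauchyPDF z.1 γ z.2 := by
  unfold cauchyPDF cauchyPDFReal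
  fun_prop

variable {h : ℝ → ℝ≥0∞} (j : ℤ)

theorem measurable_poissonAverage (hh : Measurable h) : Measurable (poissonAverage j h) := by
  have hker : Measurable fun z : ℝ × ℝ => cauchyPDF z.1 (2 ^ (-j)) z.2 * h z.2 :=
    (measurable_uncurry_cauchyPDF _).mul (hh.comp measurable_snd)
  exact hker.lintegral_prod_right'

theorem lintegral_mul_poissonAverage_comm {g : ℝ → ℝ≥0∞} (hg : Measurable g) (hh : Measurable h) :
    ∫⁻ x, g x * poissonAverage j h x = ∫⁻ x, h x * poissonAverage j g x := by
  have hexpand {g h : ℝ → ℝ≥0∞} (hh : Measurable h) (x : ℝ) :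
      g x * poissonAverage j h x = ∫⁻ y, g x * (cauchyPDF x (2 ^ (-j)) y * h y) :=
    (lintegral_const_mul _ ((measurable_cauchyPDF _ _).mul hh)).symm
  simp_rw [hexpand hh, hexpand hg]
  have hmeas : Measurable fun z : ℝ × ℝ => g z.1 * (cauchyPDF z.1 (2 ^ (-j)) z.2 * h z.2) :=
    (hg.comp measurable_fst).mul ((measurable_uncurry_cauchyPDF _).mul (hh.comp measurable_snd))
  rw [lintegral_lintegral_swap hmeas.aemeasurable]
  refine lintegral_congr fun y => lintegral_congr fun x => ?_
  rw [cauchyPDF_comm x y]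
  ring

theorem poissonAverage_one (x : ℝ) : poissonAverage j 1 x = 1 := by
  simpa [poissonAverage] using lintegral_cauchyPDF_eq_one x (γ := 2 ^ (-j)) (by positivity)

theorem poissonAverage_rpow_le (hh : Measurable h) {ρ : ℝ} (hρ : 1 ≤ ρ) (x : ℝ) :
    poissonAverage j h x ^ ρ ≤ poissonAverage j (fun y => h y ^ ρ) x := by
  have hcauchy (g : ℝ → ℝ≥0∞) (hg : Measurable g) :
      poissonAverage j g x = ∫⁻ y, g y ∂cauchyMeasure x (2 ^ (-j)) := by
    rw [cauchyMeasure_of_scale_ne_zero _ (by positivity),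
      lintegral_withDensity_eq_lintegral_mul _ (measurable_cauchyPDF _ _) hg]
    rfl
  have hjensen := eLpNorm'_le_eLpNorm'_of_exponent_le one_pos hρ (cauchyMeasure x (2 ^ (-j)))
    hh.aestronglyMeasurable
  rw [hcauchy h hh, hcauchy _ (hh.pow_const ρ), ← ENNReal.le_rpow_inv_iff (by linarith)]
  simpa [eLpNorm'] using hjensen

theorem lintegral_poissonAverage_rpow_le (hh : Measurable h) {ρ : ℝ} (hρ : 1 ≤ ρ) :
    ∫⁻ x, poissonAverage j h x ^ ρ ≤ ∫⁻ x, h x ^ ρ := by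
  calc ∫⁻ x, poissonAverage j h x ^ ρ
      ≤ ∫⁻ x, (1 : ℝ → ℝ≥0∞) x * poissonAverage j (fun y => h y ^ ρ) x := by
        simp_rw [Pi.one_apply, one_mul]
        exact lintegral_mono (poissonAverage_rpow_le j hh hρ)
    _ = ∫⁻ x, h x ^ ρ := by
        rw [lintegral_mul_poissonAverage_comm j measurable_one (hh.pow_const ρ)]
        simp_rw [poissonAverage_one, mul_one]

theorem exists_cauchyPDF_le (x y : ℝ) : ∃ k : ℕ, y ∈ closedBall x (2 ^ (k - j)) ∧
    cauchyPDF x (2 ^ (-j)) y ≤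
      8 * 2⁻¹ ^ k * (volume (closedBall x ((2 : ℝ) ^ (k - j))))⁻¹ := by
  set v := (2 : ℝ) ^ j * |y - x| with hv
  have hv0 : 0 ≤ v := by positivity
  obtain ⟨n, hnv, hvn⟩ := exists_nat_pow_near (show 1 ≤ 1 + v by linarith) one_lt_two
  have hdist : |y - x| = 2 ^ (-j) * v := by
    rw [hv, ← mul_assoc, ← zpow_add₀ two_ne_zero, neg_add_cancel, zpow_zero, one_mul]
  refine ⟨n + 1, ?_, ?_⟩
  · rw [mem_closedBall, Real.dist_eq, hdist, sub_eq_neg_add, zpow_add₀ two_ne_zero]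
    gcongr
    rw [zpow_natCast]
    linarith
  have hpdf : cauchyPDFReal x (2 ^ (-j)) y ≤ 2⁻¹ * 2 ^ j * (1 + v ^ 2)⁻¹ := by
    have hpi : Real.pi⁻¹ ≤ 2⁻¹ := inv_anti₀ two_pos Real.two_le_pi
    rw [cauchyPDFReal_def', hv, mul_pow, sq_abs, ← mul_pow]
    simp only [NNReal.coe_inv, NNReal.coe_zpow, NNReal.coe_ofNat, zpow_neg, inv_inv,
      div_inv_eq_mul, mul_comm (y - x)]
    gcongr
  have hdecay : (1 + v ^ 2)⁻¹ ≤ 2 * (2⁻¹ ^ n * 2⁻¹ ^ n) := by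
    rw [inv_pow, ← mul_inv, ← div_eq_mul_inv, inv_le_comm₀ (by positivity) (by positivity), inv_div]
    nlinarith [sq_nonneg (1 - v), mul_self_le_mul_self (by positivity) hnv]
  have hvol : (volume (closedBall x ((2 : ℝ) ^ ((n + 1 : ℕ) - j))))⁻¹ =
      ENNReal.ofReal (2⁻¹ * (2 ^ j * 2⁻¹ ^ (n + 1))) := by
    rw [Real.volume_closedBall, ← ENNReal.ofReal_inv_of_pos (by positivity), mul_inv,
      ← zpow_neg, neg_sub, zpow_sub₀ two_ne_zero, zpow_natCast, inv_pow, div_eq_mul_inv]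
  have hpow : (8 * 2⁻¹ ^ (n + 1) : ℝ≥0∞) = ENNReal.ofReal (8 * 2⁻¹ ^ (n + 1)) := by
    rw [ENNReal.ofReal_mul (by norm_num), ENNReal.ofReal_pow (by norm_num),
      ENNReal.ofReal_inv_of_pos two_pos, ENNReal.ofReal_ofNat, ENNReal.ofReal_ofNat]
  rw [hvol, hpow, ← ENNReal.ofReal_mul (by positivity)]
  refine ENNReal.ofReal_le_ofReal (hpdf.trans ?_)
  calc (2⁻¹ * 2 ^ j * (1 + v ^ 2)⁻¹ : ℝ)
      ≤ 2⁻¹ * 2 ^ j * (2 * (2⁻¹ ^ n * 2⁻¹ ^ n)) := by gcongr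
    _ = 8 * 2⁻¹ ^ (n + 1) * (2⁻¹ * (2 ^ j * 2⁻¹ ^ (n + 1))) := by ring

theorem poissonAverage_le_dyadicMaximal (hh : Measurable h) (x : ℝ) :
    poissonAverage j h x ≤ 16 * dyadicMaximal h x := by
  let B (k : ℕ) : Set ℝ := closedBall x (2 ^ (k - j))
  have hker (y : ℝ) : cauchyPDF x (2 ^ (-j)) y * h y ≤
      ∑' k : ℕ, 8 * 2⁻¹ ^ k * (volume (B k))⁻¹ * (B k).indicator h y := by
    obtain ⟨k, hy, hk⟩ := exists_cauchyPDF_le j x y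
    refine le_trans ?_ (ENNReal.le_tsum k)
    rw [Set.indicator_of_mem hy]
    gcongr
  calc poissonAverage j h x
      ≤ ∫⁻ y, ∑' k : ℕ, 8 * 2⁻¹ ^ k * (volume (B k))⁻¹ * (B k).indicator h y :=
        lintegral_mono hker
    _ = ∑' k : ℕ, 8 * 2⁻¹ ^ k * ⨍⁻ y in B k, h y ∂volume := by
        have hind (k : ℕ) : Measurable ((B k).indicator h) :=
          hh.indicator isClosed_closedBall.measurableSet
        rw [lintegral_tsum fun k => ((hind k).const_mul _).aemeasurable]
        refine tsum_congr fun k => ?_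
        rw [lintegral_const_mul _ (hind k), lintegral_indicator isClosed_closedBall.measurableSet,
          setLAverage_eq, ENNReal.div_eq_inv_mul, mul_assoc]
    _ ≤ ∑' k : ℕ, 8 * 2⁻¹ ^ k * dyadicMaximal h x := by
        gcongr with k
        exact le_iSup (fun k : ℤ => ⨍⁻ y in closedBall x (2 ^ k), h y ∂volume) (k - j)
    _ = 16 * dyadicMaximal h x := by
        rw [ENNReal.tsum_mul_right, ENNReal.tsum_mul_left, ENNReal.tsum_geometric,
          ENNReal.one_sub_inv_two, inv_inv]
        norm_num

theorem cauchyPDF_le_mul_cauchyPDF {γ δ : ℝ≥0} (hγ : γ ≠ 0) (hγδ : γ ≤ δ) {x z : ℝ}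
    (hz : |z - x| ≤ δ) (y : ℝ) :
    cauchyPDF z γ y ≤ 3 * (δ / γ : ℝ≥0) * cauchyPDF x δ y := by
  have hγ0 : (0 : ℝ) < γ := by positivity
  have hδ0 : (0 : ℝ) < δ := hγ0.trans_le hγδ
  have hle : (γ : ℝ) ≤ δ := hγδ
  have hreal : cauchyPDFReal z γ y ≤ 3 * (δ / γ) * cauchyPDFReal x δ y := by
    have hmain : (γ : ℝ) ^ 2 * ((y - x) ^ 2 + δ ^ 2) ≤ 3 * δ ^ 2 * ((y - z) ^ 2 + γ ^ 2) := by
      have hyx : (y - x) ^ 2 ≤ 2 * (y - z) ^ 2 + 2 * δ ^ 2 := by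
        nlinarith [sq_nonneg (y - z - (z - x)), sq_le_sq' (abs_le.1 hz).1 (abs_le.1 hz).2]
      have hsq : (γ : ℝ) ^ 2 ≤ δ ^ 2 := by gcongr
      nlinarith [mul_le_mul_of_nonneg_left hyx (sq_nonneg (γ : ℝ)),
        mul_le_mul_of_nonneg_right hsq (sq_nonneg (y - z)), sq_nonneg (δ * (y - z))]
    rw [cauchyPDFReal_def, cauchyPDFReal_def, mul_assoc Real.pi⁻¹, mul_assoc Real.pi⁻¹,
      mul_left_comm _ Real.pi⁻¹]
    gcongr ?_ * ?_
    rw [← div_eq_mul_inv, ← div_eq_mul_inv, ← mul_div_assoc, div_le_div_iff₀ (by positivity)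
      (by positivity), mul_assoc 3, div_mul_eq_mul_div, ← mul_div_assoc, div_mul_eq_mul_div,
      le_div_iff₀ hγ0]
    linarith
  rw [cauchyPDF, cauchyPDF, ← ENNReal.ofReal_coe_nnreal (p := δ / γ), ← ENNReal.ofReal_ofNat 3,
    ← ENNReal.ofReal_mul (by norm_num), ← ENNReal.ofReal_mul (by positivity)]
  exact ENNReal.ofReal_le_ofReal (by simpa using hreal)

theorem poissonAverage_le_mul_poissonAverage (h : ℝ → ℝ≥0∞) {l : ℤ} (hlj : l ≤ j) {x z : ℝ}
    (hz : |z - x| ≤ 2 ^ (-l)) :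
    poissonAverage j h z ≤ 3 * 2 ^ (j - l) * poissonAverage l h x := by
  have hscale : ((2 : ℝ≥0) ^ (-l) / 2 ^ (-j) : ℝ≥0) = 2 ^ (j - l) := by
    rw [← zpow_sub₀ two_ne_zero]
    congr 1
    ring
  rw [poissonAverage, poissonAverage, ← lintegral_const_mul' _ _ (by finiteness)]
  refine lintegral_mono fun y => ?_
  have hker := cauchyPDF_le_mul_cauchyPDF (γ := 2 ^ (-j)) (δ := 2 ^ (-l)) (by positivity)
    (zpow_le_zpow_right₀ one_le_two (neg_le_neg hlj)) (by simpa using hz) y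
  rw [hscale, ENNReal.coe_zpow two_ne_zero, ENNReal.coe_ofNat] at hker
  rw [← mul_assoc]
  gcongr

end PoissonAverage

/-! ### Duality for mixed norms -/

section Duality

theorem le_rpow_of_le_mul_rpow_one_div {q q' : ℝ} (hq : q.HolderConjugate q') {B D : ℝ≥0∞}
    (hB : B ≠ ∞) (h : B ≤ D * B ^ (1 / q')) : B ≤ D ^ q := by
  rcases eq_or_ne B 0 with hB0 | hB0
  · simp [hB0]
  have hq' := hq.symm.pos
  have hsplit : B ^ (1 / q) * B ^ (1 / q') = B := by
    rw [← ENNReal.rpow_add _ _ hB0 hB, one_div, one_div, hq.inv_add_inv_eq_one, ENNReal.rpow_one]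
  rw [← hsplit] at h
  nth_rewrite 2 [hsplit] at h
  have hroot : B ^ (1 / q) ≤ D := (ENNReal.mul_le_mul_iff_left
    (by simp [ENNReal.rpow_eq_zero_iff, hB0, hB])
    (ENNReal.rpow_ne_top_of_nonneg (by positivity) hB)).1 h
  rwa [one_div, ENNReal.rpow_inv_le_iff hq.pos] at hroot

variable {ι : Type*} (s : Finset ι)

/-- The sequence `a ^ (ρ - 1) * (∑ a ^ ρ) ^ (q / ρ - 1)`, which attains equality in Hölder's
inequality for the mixed norm `L^q(ℓ^ρ)`. -/
def dualSequence (ρ q : ℝ) (a : ι → ℝ≥0∞) (i : ι) : ℝ≥0∞ :=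
  a i ^ (ρ - 1) * (∑ i ∈ s, a i ^ ρ) ^ (q / ρ - 1)

theorem sum_dualSequence_mul {ρ q : ℝ} (hρ : 1 < ρ) (hq : 0 < q) {a : ι → ℝ≥0∞}
    (ha : ∑ i ∈ s, a i ^ ρ ≠ ∞) :
    ∑ i ∈ s, dualSequence s ρ q a i * a i = (∑ i ∈ s, a i ^ ρ) ^ (q / ρ) := by
  have hmul (i : ι) : dualSequence s ρ q a i * a i =
      a i ^ ρ * (∑ i ∈ s, a i ^ ρ) ^ (q / ρ - 1) := by
    have hpow : a i ^ ρ = a i ^ (ρ - 1) * a i := by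
      nth_rewrite 3 [← ENNReal.rpow_one (a i)]
      rw [← ENNReal.rpow_add_of_nonneg _ _ (by linarith) zero_le_one, sub_add_cancel]
    rw [dualSequence, mul_right_comm, hpow]
  simp_rw [hmul, ← Finset.sum_mul]
  rcases eq_or_ne (∑ i ∈ s, a i ^ ρ) 0 with h0 | h0
  · rw [h0, ENNReal.zero_rpow_of_pos (div_pos hq (by linarith)), zero_mul]
  · nth_rewrite 1 [← ENNReal.rpow_one (∑ i ∈ s, a i ^ ρ)]
    rw [← ENNReal.rpow_add _ _ h0 ha, add_sub_cancel]

theorem sum_dualSequence_rpow_le {ρ ρ' q q' : ℝ} (hρ : ρ.HolderConjugate ρ')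
    (hq : q.HolderConjugate q') (a : ι → ℝ≥0∞) :
    (∑ i ∈ s, dualSequence s ρ q a i ^ ρ') ^ (q' / ρ') ≤ (∑ i ∈ s, a i ^ ρ) ^ (q / ρ) := by
  have hρ0 := hρ.pos
  have hρ0' := hρ.symm.pos
  have hq0 := hq.pos
  have hq0' := hq.symm.pos
  have hpow (i : ι) : dualSequence s ρ q a i ^ ρ' =
      a i ^ ρ * (∑ i ∈ s, a i ^ ρ) ^ ((q / ρ - 1) * ρ') := by
    rw [dualSequence, ENNReal.mul_rpow_of_nonneg _ _ hρ0'.le, ← ENNReal.rpow_mul,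
      ← ENNReal.rpow_mul, hρ.sub_one_mul_conj]
  simp_rw [hpow, ← Finset.sum_mul]
  set X := ∑ i ∈ s, a i ^ ρ
  rcases eq_or_ne X 0 with h0 | h0
  · simp [h0, hq0', hρ0']
  rcases eq_or_ne X ∞ with htop | htop
  · simp [htop, hq0, hρ0]
  have hexp : (1 + (q / ρ - 1) * ρ') * (q' / ρ') = q / ρ := by
    have hinv := hρ.inv_add_inv_eq_one
    have hinv' := hq.inv_add_inv_eq_one
    calc (1 + (q / ρ - 1) * ρ') * (q' / ρ')
        = q' * (ρ'⁻¹ + q * ρ⁻¹ - 1) := by field_simp; ring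
      _ = q * q' * (1 - q⁻¹) * ρ⁻¹ := by
          rw [← eq_sub_iff_add_eq'] at hinv
          rw [hinv]; field_simp; ring
      _ = q / ρ := by
          rw [← eq_sub_iff_add_eq'] at hinv'
          rw [← hinv']; field_simp
  nth_rewrite 1 [← ENNReal.rpow_one X]
  rw [← ENNReal.rpow_add _ _ h0 htop, ← ENNReal.rpow_mul, hexp]

variable {α : Type*} [MeasurableSpace α] {μ : Measure α}

theorem sum_lintegral_mul_le_mixed {ρ ρ' q q' : ℝ} (hρ : ρ.HolderConjugate ρ')
    (hq : q.HolderConjugate q') {g h : ι → α → ℝ≥0∞} (hg : ∀ i, Measurable (g i))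
    (hh : ∀ i, Measurable (h i)) :
    ∑ i ∈ s, ∫⁻ x, g i x * h i x ∂μ ≤ (∫⁻ x, (∑ i ∈ s, g i x ^ ρ) ^ (q / ρ) ∂μ) ^ (1 / q) *
      (∫⁻ x, (∑ i ∈ s, h i x ^ ρ') ^ (q' / ρ') ∂μ) ^ (1 / q') := by
  have hmeas {f : ι → α → ℝ≥0∞} (hf : ∀ i, Measurable (f i)) (t : ℝ) :
      AEMeasurable (fun x => (∑ i ∈ s, f i x ^ t) ^ (1 / t)) μ :=
    ((Finset.measurable_fun_sum s fun i _ => (hf i).pow_const _).pow_const _).aemeasurable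
  have hmul (i : ι) : Measurable fun x => g i x * h i x := (hg i).mul (hh i)
  rw [← lintegral_finsetSum _ fun i _ => hmul i]
  refine (lintegral_mono fun x => ENNReal.inner_le_Lp_mul_Lq s _ _ hρ).trans ?_
  refine (ENNReal.lintegral_mul_le_Lp_mul_Lq μ hq (hmeas hg ρ) (hmeas hh ρ')).trans_eq ?_
  simp_rw [← ENNReal.rpow_mul, one_div_mul_eq_div]

variable {s}

theorem lintegral_sum_rpow_le_of_forall_sum_lintegral_mul_le {ρ ρ' q q' : ℝ}
    (hρ : ρ.HolderConjugate ρ') (hq : q.HolderConjugate q') {a : ι → α → ℝ≥0∞}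
    (ha : ∀ i, Measurable (a i)) (hfin : ∫⁻ x, (∑ i ∈ s, a i x ^ ρ) ^ (q / ρ) ∂μ ≠ ∞) {D : ℝ≥0∞}
    (h : ∀ k : ι → α → ℝ≥0∞, (∀ i, Measurable (k i)) → ∑ i ∈ s, ∫⁻ x, k i x * a i x ∂μ ≤
      D * (∫⁻ x, (∑ i ∈ s, k i x ^ ρ') ^ (q' / ρ') ∂μ) ^ (1 / q')) :
    ∫⁻ x, (∑ i ∈ s, a i x ^ ρ) ^ (q / ρ) ∂μ ≤ D ^ q := by
  have hqρ : 0 < q / ρ := div_pos hq.pos hρ.pos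
  have hsum : Measurable fun x => ∑ i ∈ s, a i x ^ ρ :=
    Finset.measurable_fun_sum _ fun i _ => (ha i).pow_const _
  let k (i : ι) (x : α) := dualSequence s ρ q (a · x) i
  have hk (i : ι) : Measurable (k i) := ((ha i).pow_const _).mul (hsum.pow_const _)
  have hka (i : ι) : Measurable fun x => k i x * a i x := (hk i).mul (ha i)
  have hattain : ∑ i ∈ s, ∫⁻ x, k i x * a i x ∂μ =
      ∫⁻ x, (∑ i ∈ s, a i x ^ ρ) ^ (q / ρ) ∂μ := by
    rw [← lintegral_finsetSum _ fun i _ => hka i]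
    refine lintegral_congr_ae ?_
    filter_upwards [ae_lt_top (hsum.pow_const _) hfin] with x hx
    refine sum_dualSequence_mul s hρ.lt hq.pos fun htop => ?_
    rw [htop, ENNReal.top_rpow_of_pos hqρ] at hx
    exact hx.false
  refine le_rpow_of_le_mul_rpow_one_div hq hfin ?_
  nth_rewrite 1 [← hattain]
  refine (h k hk).trans ?_
  have hq' := hq.symm.pos
  gcongr with x
  exact sum_dualSequence_rpow_le s hρ hq _

theorem lintegral_rpow_le_of_forall_lintegral_mul_le {q q' : ℝ} (hq : q.HolderConjugate q')
    {a : α → ℝ≥0∞} (ha : Measurable a) (hfin : ∫⁻ x, a x ^ q ∂μ ≠ ∞) {D : ℝ≥0∞}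
    (h : ∀ k : α → ℝ≥0∞, Measurable k →
      ∫⁻ x, k x * a x ∂μ ≤ D * (∫⁻ x, k x ^ q' ∂μ) ^ (1 / q')) :
    ∫⁻ x, a x ^ q ∂μ ≤ D ^ q := by
  have hmixed := lintegral_sum_rpow_le_of_forall_sum_lintegral_mul_le (μ := μ) (D := D)
    (s := {()}) (a := fun _ => a) hq hq (fun _ => ha)
  simp only [Finset.sum_singleton, div_self hq.pos.ne', div_self hq.symm.pos.ne',
    ENNReal.rpow_one] at hmixed
  exact hmixed hfin fun k hk => h _ (hk ())

variable (s)

theorem sum_rpow_rpow_div_le {ρ q : ℝ} (hρ : 0 < ρ) (hq : 0 < q) (a : ι → ℝ≥0∞) :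
    (∑ i ∈ s, a i ^ ρ) ^ (q / ρ) ≤ s.card ^ (q / ρ) * ∑ i ∈ s, a i ^ q := by
  have hterm (i : ι) (hi : i ∈ s) : a i ^ ρ ≤ (∑ i ∈ s, a i ^ q) ^ (ρ / q) := by
    calc a i ^ ρ = (a i ^ q) ^ (ρ / q) := by rw [← ENNReal.rpow_mul, mul_div_cancel₀ _ hq.ne']
      _ ≤ _ := ENNReal.rpow_le_rpow
        (Finset.single_le_sum (f := fun i => a i ^ q) (fun _ _ => zero_le) hi) (by positivity)
  calc (∑ i ∈ s, a i ^ ρ) ^ (q / ρ)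
      ≤ (s.card * (∑ i ∈ s, a i ^ q) ^ (ρ / q)) ^ (q / ρ) := by
        gcongr
        rw [← nsmul_eq_mul]
        exact Finset.sum_le_card_nsmul _ _ _ hterm
    _ = s.card ^ (q / ρ) * ∑ i ∈ s, a i ^ q := by
        rw [ENNReal.mul_rpow_of_nonneg _ _ (by positivity), ← ENNReal.rpow_mul,
          div_mul_div_cancel₀ hq.ne', div_self hρ.ne', ENNReal.rpow_one]

theorem lintegral_sum_rpow_ne_top {ρ q : ℝ} (hρ : 0 < ρ) (hq : 0 < q) {a : ι → α → ℝ≥0∞}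
    (ha : ∀ i, Measurable (a i)) (hfin : ∀ i ∈ s, ∫⁻ x, a i x ^ q ∂μ ≠ ∞) :
    ∫⁻ x, (∑ i ∈ s, a i x ^ ρ) ^ (q / ρ) ∂μ ≠ ∞ := by
  refine ne_top_of_le_ne_top ?_ (lintegral_mono fun x => sum_rpow_rpow_div_le s hρ hq (a · x))
  rw [lintegral_const_mul' _ _ (by finiteness),
    lintegral_finsetSum _ fun i _ => (ha i).pow_const _]
  exact ENNReal.mul_ne_top (by finiteness) (ENNReal.sum_ne_top.2 hfin)

end Duality

section VectorValued

theorem conjExponent_le_conjExponent {p q : ℝ} (hp : 1 < p) (hpq : p ≤ q) :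
    q.conjExponent ≤ p.conjExponent := by
  have hconjp := Real.HolderConjugate.conjExponent hp
  have hconjq := Real.HolderConjugate.conjExponent (hp.trans_le hpq)
  rw [← inv_le_inv₀ hconjp.symm.pos hconjq.symm.pos]
  linarith [hconjp.inv_add_inv_eq_one, hconjq.inv_add_inv_eq_one, inv_anti₀ hconjp.pos hpq]

variable (ι : Type*)

theorem lintegral_sum_poissonAverage_rpow_ne_top {ι : Type*} {s : Finset ι} (l : ι → ℤ)
    {h : ι → ℝ → ℝ≥0∞} (hh : ∀ i, Measurable (h i)) {ρ q : ℝ} (hρ : 0 < ρ) (hq : 1 ≤ q)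
    (hfin : ∫⁻ x, (∑ i ∈ s, h i x ^ ρ) ^ (q / ρ) ≠ ∞) :
    ∫⁻ x, (∑ i ∈ s, poissonAverage (l i) (h i) x ^ ρ) ^ (q / ρ) ≠ ∞ := by
  have hq0 : 0 < q := by linarith
  refine lintegral_sum_rpow_ne_top s hρ hq0 (fun i => measurable_poissonAverage _ (hh i))
    fun i hi => ne_top_of_le_ne_top hfin ?_
  refine (lintegral_poissonAverage_rpow_le (l i) (hh i) hq).trans (lintegral_mono fun x => ?_)
  calc h i x ^ q = (h i x ^ ρ) ^ (q / ρ) := by rw [← ENNReal.rpow_mul, mul_div_cancel₀ _ hρ.ne']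
    _ ≤ _ := ENNReal.rpow_le_rpow
      (Finset.single_le_sum (f := fun i => h i x ^ ρ) (fun _ _ => zero_le) hi) (by positivity)

theorem lintegral_mul_sum_poissonAverage_le {ι : Type*} (s : Finset ι) (l : ι → ℤ)
    {k : ℝ → ℝ≥0∞} (hk : Measurable k) {h : ι → ℝ → ℝ≥0∞} (hh : ∀ i, Measurable (h i)) :
    ∫⁻ x, k x * ∑ i ∈ s, poissonAverage (l i) (h i) x ≤
      16 * ∫⁻ x, (∑ i ∈ s, h i x) * dyadicMaximal k x := by
  have hkA (i : ι) : Measurable fun x => k x * poissonAverage (l i) (h i) x :=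
    hk.mul (measurable_poissonAverage _ (hh i))
  have hhA (i : ι) : Measurable fun x => h i x * poissonAverage (l i) k x :=
    (hh i).mul (measurable_poissonAverage _ hk)
  calc ∫⁻ x, k x * ∑ i ∈ s, poissonAverage (l i) (h i) x
      = ∫⁻ x, ∑ i ∈ s, h i x * poissonAverage (l i) k x := by
        simp_rw [Finset.mul_sum]
        rw [lintegral_finsetSum _ fun i _ => hkA i, lintegral_finsetSum _ fun i _ => hhA i]
        exact Finset.sum_congr rfl fun i _ => lintegral_mul_poissonAverage_comm _ hk (hh i)
    _ ≤ ∫⁻ x, 16 * ((∑ i ∈ s, h i x) * dyadicMaximal k x) := by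
        gcongr with x
        rw [mul_left_comm, Finset.sum_mul]
        gcongr
        exact poissonAverage_le_dyadicMaximal _ hk x
    _ = 16 * ∫⁻ x, (∑ i ∈ s, h i x) * dyadicMaximal k x := lintegral_const_mul' _ _ (by simp)

theorem lintegral_sum_poissonAverage_le (s : Finset ι) (l : ι → ℤ) {h : ι → ℝ → ℝ≥0∞}
    (hh : ∀ i, Measurable (h i)) :
    ∫⁻ x, ∑ i ∈ s, poissonAverage (l i) (h i) x ≤ ∫⁻ x, ∑ i ∈ s, h i x := by
  rw [lintegral_finsetSum _ fun i _ => measurable_poissonAverage _ (hh i),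
    lintegral_finsetSum _ fun i _ => hh i]
  exact Finset.sum_le_sum fun i _ => by
    simpa using lintegral_poissonAverage_rpow_le (l i) (hh i) le_rfl

theorem exists_lintegral_sum_poissonAverage_rpow_le_of_one_le {q : ℝ} (hq : 1 ≤ q) :
    ∃ C : ℝ≥0, ∀ (s : Finset ι) (l : ι → ℤ) (h : ι → ℝ → ℝ≥0∞), (∀ i, Measurable (h i)) →
      ∫⁻ x, (∑ i ∈ s, poissonAverage (l i) (h i) x) ^ q ≤ C * ∫⁻ x, (∑ i ∈ s, h i x) ^ q := by
  rcases hq.eq_or_lt with rfl | hq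
  · exact ⟨1, fun s l h hh => by simpa using lintegral_sum_poissonAverage_le ι s l hh⟩
  have hconj := Real.HolderConjugate.conjExponent hq
  set q' := q.conjExponent
  have hq0 := hconj.pos
  have hq0' := hconj.symm.pos
  obtain ⟨C, hC⟩ := exists_lintegral_dyadicMaximal_rpow_le hconj.symm.lt
  refine ⟨(16 * C ^ (1 / q')) ^ q + 1, fun s l h hh => ?_⟩
  have hA (i : ι) : Measurable (poissonAverage (l i) (h i)) := measurable_poissonAverage _ (hh i)
  have hS : Measurable fun x => ∑ i ∈ s, h i x := Finset.measurable_fun_sum _ fun i _ => hh i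
  set I := ∫⁻ x, (∑ i ∈ s, h i x) ^ q
  rcases eq_or_ne I ∞ with htop | hfin
  · rw [htop, ENNReal.mul_top (by simp)]
    exact le_top
  have hdual (k : ℝ → ℝ≥0∞) (hk : Measurable k) :
      ∫⁻ x, k x * ∑ i ∈ s, poissonAverage (l i) (h i) x ≤
        16 * C ^ (1 / q') * I ^ (1 / q) * (∫⁻ x, k x ^ q') ^ (1 / q') := by
    refine (lintegral_mul_sum_poissonAverage_le s l hk hh).trans ?_
    calc 16 * ∫⁻ x, (∑ i ∈ s, h i x) * dyadicMaximal k x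
        ≤ 16 * (I ^ (1 / q) * (C * ∫⁻ x, k x ^ q') ^ (1 / q')) := by
          gcongr
          refine (ENNReal.lintegral_mul_le_Lp_mul_Lq volume hconj hS.aemeasurable
            (measurable_dyadicMaximal hk).aemeasurable).trans ?_
          gcongr
          exact hC k hk
      _ = 16 * C ^ (1 / q') * I ^ (1 / q) * (∫⁻ x, k x ^ q') ^ (1 / q') := by
          rw [ENNReal.mul_rpow_of_nonneg _ _ (by positivity)]
          ring
  have hfinA := lintegral_sum_poissonAverage_rpow_ne_top (s := s) l hh one_pos hq.le
    (by simpa using hfin)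
  refine (lintegral_rpow_le_of_forall_lintegral_mul_le hconj
    (Finset.measurable_fun_sum _ fun i _ => hA i) (by simpa using hfinA) hdual).trans ?_
  rw [ENNReal.mul_rpow_of_nonneg _ _ hq0.le, ← ENNReal.rpow_mul, one_div_mul_cancel hq0.ne',
    ENNReal.rpow_one, ENNReal.coe_add, ENNReal.coe_rpow_of_nonneg _ hq0.le, ENNReal.coe_mul,
    ENNReal.coe_rpow_of_nonneg _ (by positivity)]
  gcongr
  exact le_self_add

variable {ρ q : ℝ}

theorem exists_lintegral_sum_poissonAverage_rpow_le_of_le (hρ : 1 < ρ) (hρq : ρ ≤ q) :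
    ∃ C : ℝ≥0, ∀ (s : Finset ι) (l : ι → ℤ) (h : ι → ℝ → ℝ≥0∞), (∀ i, Measurable (h i)) →
      ∫⁻ x, (∑ i ∈ s, poissonAverage (l i) (h i) x ^ ρ) ^ (q / ρ) ≤
        C * ∫⁻ x, (∑ i ∈ s, h i x ^ ρ) ^ (q / ρ) := by
  have hqρ : 1 ≤ q / ρ := (one_le_div (by linarith)).2 hρq
  obtain ⟨C, hC⟩ := exists_lintegral_sum_poissonAverage_rpow_le_of_one_le ι hqρ
  refine ⟨C, fun s l h hh => le_trans ?_ (hC s l _ fun i => (hh i).pow_const ρ)⟩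
  gcongr with x i
  exact poissonAverage_rpow_le _ (hh i) hρ.le x

theorem exists_lintegral_sum_poissonAverage_rpow_le_of_lt (hq : 1 < q) (hqρ : q < ρ) :
    ∃ C : ℝ≥0, ∀ (s : Finset ι) (l : ι → ℤ) (h : ι → ℝ → ℝ≥0∞), (∀ i, Measurable (h i)) →
      ∫⁻ x, (∑ i ∈ s, poissonAverage (l i) (h i) x ^ ρ) ^ (q / ρ) ≤
        C * ∫⁻ x, (∑ i ∈ s, h i x ^ ρ) ^ (q / ρ) := by
  have hconj := Real.HolderConjugate.conjExponent hq
  have hconjρ := Real.HolderConjugate.conjExponent (hq.trans hqρ)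
  set q' := q.conjExponent
  set ρ' := ρ.conjExponent
  have hq0 := hconj.pos
  have hq0' := hconj.symm.pos
  have hρq' : ρ' ≤ q' := conjExponent_le_conjExponent hq hqρ.le
  obtain ⟨C, hC⟩ := exists_lintegral_sum_poissonAverage_rpow_le_of_le ι hconjρ.symm.lt hρq'
  refine ⟨(C ^ (1 / q')) ^ q + 1, fun s l h hh => ?_⟩
  have hA (i : ι) : Measurable (poissonAverage (l i) (h i)) := measurable_poissonAverage _ (hh i)
  set I := ∫⁻ x, (∑ i ∈ s, h i x ^ ρ) ^ (q / ρ)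
  rcases eq_or_ne I ∞ with htop | hfin
  · rw [htop, ENNReal.mul_top (by simp)]
    exact le_top
  have hdual (k : ι → ℝ → ℝ≥0∞) (hk : ∀ i, Measurable (k i)) :
      ∑ i ∈ s, ∫⁻ x, k i x * poissonAverage (l i) (h i) x ≤
        C ^ (1 / q') * I ^ (1 / q) *
          (∫⁻ x, (∑ i ∈ s, k i x ^ ρ') ^ (q' / ρ')) ^ (1 / q') := by
    calc ∑ i ∈ s, ∫⁻ x, k i x * poissonAverage (l i) (h i) x
        = ∑ i ∈ s, ∫⁻ x, h i x * poissonAverage (l i) (k i) x :=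
          Finset.sum_congr rfl fun i _ => lintegral_mul_poissonAverage_comm _ (hk i) (hh i)
      _ ≤ I ^ (1 / q) * (∫⁻ x, (∑ i ∈ s, poissonAverage (l i) (k i) x ^ ρ') ^ (q' / ρ')) ^
            (1 / q') :=
          sum_lintegral_mul_le_mixed s hconjρ hconj hh
            fun i => measurable_poissonAverage _ (hk i)
      _ ≤ I ^ (1 / q) * (C * ∫⁻ x, (∑ i ∈ s, k i x ^ ρ') ^ (q' / ρ')) ^ (1 / q') := by
          gcongr
          exact hC s l k hk
      _ = _ := by
          rw [ENNReal.mul_rpow_of_nonneg _ _ (by positivity)]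
          ring
  have hfinA := lintegral_sum_poissonAverage_rpow_ne_top l hh hconjρ.pos hq.le hfin
  refine (lintegral_sum_rpow_le_of_forall_sum_lintegral_mul_le hconjρ hconj hA hfinA
    hdual).trans ?_
  rw [ENNReal.mul_rpow_of_nonneg _ _ hq0.le, ← ENNReal.rpow_mul I, one_div_mul_cancel hq0.ne',
    ENNReal.rpow_one, ENNReal.coe_add, ENNReal.coe_rpow_of_nonneg _ hq0.le,
    ENNReal.coe_rpow_of_nonneg _ (by positivity)]
  gcongr
  exact le_self_add

theorem exists_lintegral_sum_poissonAverage_rpow_le (hρ : 1 < ρ) (hq : 1 < q) :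
    ∃ C : ℝ≥0, ∀ (s : Finset ι) (l : ι → ℤ) (h : ι → ℝ → ℝ≥0∞), (∀ i, Measurable (h i)) →
      ∫⁻ x, (∑ i ∈ s, poissonAverage (l i) (h i) x ^ ρ) ^ (q / ρ) ≤
        C * ∫⁻ x, (∑ i ∈ s, h i x ^ ρ) ^ (q / ρ) := by
  rcases le_or_gt ρ q with hρq | hqρ
  · exact exists_lintegral_sum_poissonAverage_rpow_le_of_le ι hρ hρq
  · exact exists_lintegral_sum_poissonAverage_rpow_le_of_lt ι hq hqρ

end VectorValued

/-! ### Bernstein inequalities for band-limited Schwartz functions -/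

section Multipliers

open ProbabilityTheory SchwartzMap

variable (K F : SchwartzMap ℝ ℂ)

theorem exists_enorm_le_cauchyPDF :
    ∃ C : ℝ≥0, ∀ x y, ‖K (x - y)‖ₑ ≤ C * cauchyPDF x (2 ^ (-(0 : ℤ))) y := by
  obtain ⟨C₀, hC₀, hK₀⟩ := K.decay 0 0
  obtain ⟨C₂, hC₂, hK₂⟩ := K.decay 2 0
  refine ⟨(Real.pi * (C₀ + C₂)).toNNReal, fun x y => ?_⟩
  have hdecay : (1 + (y - x) ^ 2) * ‖K (x - y)‖ ≤ C₀ + C₂ := by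
    have h₀ := hK₀ (x - y)
    have h₂ := hK₂ (x - y)
    simp only [norm_iteratedFDeriv_zero, pow_zero, one_mul, Real.norm_eq_abs, sq_abs] at h₀ h₂
    rw [add_mul, one_mul, sub_sq_comm]
    exact add_le_add h₀ h₂
  rw [cauchyPDF, ENNReal.ofNNReal_toNNReal, ← ENNReal.ofReal_mul (by positivity), ← ofReal_norm,
    cauchyPDFReal_def']
  refine ENNReal.ofReal_le_ofReal ?_
  calc ‖K (x - y)‖ ≤ (C₀ + C₂) * (1 + (y - x) ^ 2)⁻¹ := by
        rwa [← div_eq_mul_inv, le_div_iff₀' (by positivity)]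
    _ = _ := by
        simp only [neg_zero, zpow_zero, NNReal.coe_one, inv_one, mul_one, div_one]
        field_simp

theorem exists_enorm_convolution_le_poissonAverage : ∃ C : ℝ≥0, ∀ (F : SchwartzMap ℝ ℂ) (x : ℝ),
    ‖convolution (ContinuousLinearMap.mul ℂ ℂ) K F x‖ₑ ≤
      C * poissonAverage 0 (fun y => ‖F y‖ₑ) x := by
  obtain ⟨C, hC⟩ := exists_enorm_le_cauchyPDF K
  refine ⟨C, fun F x => ?_⟩
  rw [convolution_apply, MeasureTheory.convolution]
  calc ‖∫ t, ContinuousLinearMap.mul ℂ ℂ (K t) (F (x - t))‖ₑ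
      ≤ ∫⁻ t, ‖ContinuousLinearMap.mul ℂ ℂ (K t) (F (x - t))‖ₑ :=
        enorm_integral_le_lintegral_enorm _
    _ = ∫⁻ y, ‖K (x - y)‖ₑ * ‖F y‖ₑ := by
        rw [← lintegral_sub_left_eq_self _ x]
        refine lintegral_congr fun y => ?_
        rw [ContinuousLinearMap.mul_apply', enorm_mul,
          show x - (x - y) = y from sub_sub_cancel x y]
    _ ≤ ∫⁻ y, C * (cauchyPDF x (2 ^ (-(0 : ℤ))) y * ‖F y‖ₑ) := by
        refine lintegral_mono fun y => ?_
        rw [← mul_assoc]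
        exact mul_le_mul_left (hC x y) _
    _ = C * poissonAverage 0 (fun y => ‖F y‖ₑ) x := lintegral_const_mul' _ _ (by simp)

theorem fourier_derivCLM_apply (ξ : ℝ) :
    𝓕 (derivCLM ℂ ℂ F) ξ = (2 * Real.pi * Complex.I * ξ) * 𝓕 F ξ := by
  rw [fourier_coe, fourier_coe]
  exact congrFun (Real.fourier_deriv F.integrable F.differentiable (derivCLM ℂ ℂ F).integrable) ξ

theorem fourier_convolution_fourierInv_apply (ξ : ℝ) :
    𝓕 (convolution (ContinuousLinearMap.mul ℂ ℂ) (𝓕⁻ K) F) ξ = K ξ * 𝓕 F ξ := by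
  rw [fourier_convolution, FourierTransform.fourier_fourierInv_eq]
  rfl

theorem exists_schwartzMap_eqOn_annulus {g : ℝ → ℂ} (hg : ContDiffOn ℝ (⊤ : ℕ∞) g {0}ᶜ) {a b : ℝ}
    (ha : 0 < a) (hb : 0 < b) : ∃ m : SchwartzMap ℝ ℂ, ∀ ξ, a < |ξ| → |ξ| < b → m ξ = g ξ := by
  let outer : ContDiffBump (0 : ℝ) := ⟨b, 2 * b, hb, by linarith⟩
  let inner : ContDiffBump (0 : ℝ) := ⟨a / 2, a, by linarith, by linarith⟩
  let χ (ξ : ℝ) : ℝ := outer ξ - inner ξ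
  have hχ : ContDiff ℝ (⊤ : ℕ∞) χ := outer.contDiff.sub inner.contDiff
  have hχ_supp : HasCompactSupport χ := outer.hasCompactSupport.sub inner.hasCompactSupport
  have hχ_zero : ∀ᶠ ξ in nhds 0, χ ξ = 0 := by
    filter_upwards [outer.eventuallyEq_one, inner.eventuallyEq_one] with ξ h_outer h_inner
    simp [χ, h_outer, h_inner]
  have hsmooth : ContDiff ℝ (⊤ : ℕ∞) fun ξ => χ ξ • g ξ := by
    refine contDiff_iff_contDiffAt.2 fun ξ => ?_
    rcases eq_or_ne ξ 0 with rfl | hξ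
    · refine (contDiffAt_const (c := (0 : ℂ))).congr_of_eventuallyEq ?_
      filter_upwards [hχ_zero] with ξ h
      rw [h, zero_smul]
    · exact hχ.contDiffAt.smul (hg.contDiffAt (isOpen_compl_singleton.mem_nhds hξ))
  refine ⟨HasCompactSupport.toSchwartzMap hχ_supp.smul_right hsmooth, fun ξ hξa hξb => ?_⟩
  have h_outer : outer ξ = 1 := outer.one_of_mem_closedBall (by simpa using hξb.le)
  have h_inner : inner ξ = 0 := inner.zero_of_le_dist (by simpa using hξa.le)
  change χ ξ • g ξ = g ξ
  simp [χ, h_outer, h_inner]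

end Multipliers

section FrequencyBand

open SchwartzMap

/-- The Fourier transform of `f` vanishes outside the open annulus `a < |ξ| < b`. -/
def HasFrequencyBand (a b : ℝ) (f : SchwartzMap ℝ ℂ) : Prop :=
  ∀ ξ : ℝ, 𝓕 (⇑f) ξ ≠ 0 → a < |ξ| ∧ |ξ| < b

variable {a b : ℝ}

theorem HasFrequencyBand.eq_of_fourier_eq_mul {F H H' : SchwartzMap ℝ ℂ} {m m' : ℝ → ℂ}
    (hF : HasFrequencyBand a b F) (hH : ∀ ξ, 𝓕 H ξ = m ξ * 𝓕 F ξ)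
    (hH' : ∀ ξ, 𝓕 H' ξ = m' ξ * 𝓕 F ξ) (hm : ∀ ξ, a < |ξ| → |ξ| < b → m ξ = m' ξ) : H = H' := by
  refine (FourierTransform.fourierCLE ℂ (SchwartzMap ℝ ℂ)).injective (SchwartzMap.ext fun ξ => ?_)
  rw [FourierTransform.fourierCLE_apply, FourierTransform.fourierCLE_apply, hH, hH']
  by_cases hξ : 𝓕 F ξ = 0
  · rw [hξ, mul_zero, mul_zero]
  · rw [fourier_coe] at hξ
    rw [hm ξ (hF ξ hξ).1 (hF ξ hξ).2]

theorem exists_enorm_deriv_le_poissonAverage_zero (ha : 0 < a) (hb : 0 < b) :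
    ∃ C : ℝ≥0, ∀ F, HasFrequencyBand a b F →
      ∀ x, ‖deriv F x‖ₑ ≤ C * poissonAverage 0 (fun y => ‖F y‖ₑ) x := by
  have hsymbol : ContDiff ℝ (⊤ : ℕ∞) fun ξ : ℝ => 2 * Real.pi * Complex.I * ξ :=
    contDiff_const.mul Complex.ofRealCLM.contDiff
  obtain ⟨m, hm⟩ := exists_schwartzMap_eqOn_annulus hsymbol.contDiffOn ha hb
  obtain ⟨C, hC⟩ := exists_enorm_convolution_le_poissonAverage (𝓕⁻ m)
  refine ⟨C, fun F hF x => ?_⟩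
  rw [← derivCLM_apply ℂ, ← hF.eq_of_fourier_eq_mul (fourier_convolution_fourierInv_apply m F)
    (fourier_derivCLM_apply F) hm]
  exact hC F x

theorem exists_antiderivative_enorm_le_poissonAverage_zero (ha : 0 < a) (hb : 0 < b) :
    ∃ C : ℝ≥0, ∀ F, HasFrequencyBand a b F →
      ∃ G, derivCLM ℂ ℂ G = F ∧ ∀ x, ‖G x‖ₑ ≤ C * poissonAverage 0 (fun y => ‖F y‖ₑ) x := by
  have hsymbol_ne {ξ : ℝ} (hξ : ξ ≠ 0) : 2 * Real.pi * Complex.I * ξ ≠ 0 := by simp [hξ]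
  have hsymbol : ContDiffOn ℝ (⊤ : ℕ∞) (fun ξ : ℝ => (2 * Real.pi * Complex.I * ξ)⁻¹) {0}ᶜ :=
    (contDiff_const.mul Complex.ofRealCLM.contDiff).contDiffOn.inv fun _ => hsymbol_ne
  obtain ⟨m, hm⟩ := exists_schwartzMap_eqOn_annulus hsymbol ha hb
  obtain ⟨C, hC⟩ := exists_enorm_convolution_le_poissonAverage (𝓕⁻ m)
  refine ⟨C, fun F hF =>
    ⟨convolution (ContinuousLinearMap.mul ℂ ℂ) (𝓕⁻ m) F, ?_, fun x => hC F x⟩⟩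
  refine hF.eq_of_fourier_eq_mul (m := fun ξ => 2 * Real.pi * Complex.I * ξ * m ξ) (m' := 1)
    (fun ξ => ?_) (fun ξ => (one_mul _).symm) fun ξ hξa hξb => ?_
  · rw [fourier_derivCLM_apply, fourier_convolution_fourierInv_apply, ← mul_assoc]
  · rw [hm ξ hξa hξb]
    exact mul_inv_cancel₀ (hsymbol_ne (abs_pos.1 (ha.trans hξa)))

end FrequencyBand

section Dilation

open ProbabilityTheory SchwartzMap

/-- The dilation `x ↦ f (2 ^ k * x)`. -/
def dilate (k : ℤ) (f : SchwartzMap ℝ ℂ) : SchwartzMap ℝ ℂ :=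
  compCLMOfContinuousLinearEquiv ℂ
    (ContinuousLinearEquiv.smulLeft (Units.mk0 ((2 : ℝ) ^ k) (by positivity))) f

variable (k : ℤ)

theorem dilate_apply (f : SchwartzMap ℝ ℂ) (x : ℝ) : dilate k f x = f (2 ^ k * x) :=
  rfl

theorem dilate_neg_dilate (f : SchwartzMap ℝ ℂ) : dilate k (dilate (-k) f) = f := by
  ext x
  rw [dilate_apply, dilate_apply, ← mul_assoc, ← zpow_add₀ two_ne_zero, neg_add_cancel, zpow_zero,
    one_mul]

theorem derivCLM_dilate (f : SchwartzMap ℝ ℂ) :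
    derivCLM ℂ ℂ (dilate k f) = (2 : ℂ) ^ k • dilate k (derivCLM ℂ ℂ f) := by
  ext x
  refine (deriv_comp_mul_left ((2 : ℝ) ^ k) (⇑f) x).trans ?_
  rw [Complex.real_smul]
  push_cast
  rfl

theorem enorm_two_zpow_smul (z : ℂ) : ‖(2 : ℂ) ^ k • z‖ₑ = 2 ^ k * ‖z‖ₑ := by
  rw [enorm_smul, enorm_eq_nnnorm, nnnorm_zpow, Complex.nnnorm_ofNat,
    ENNReal.coe_zpow (by simp), ENNReal.coe_ofNat]

theorem mul_cauchyPDF_mul {c : ℝ≥0} (hc : 0 < c) (x y : ℝ) (γ : ℝ≥0) :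
    c * cauchyPDF (c * x) (c * γ) (c * y) = cauchyPDF x γ y := by
  rw [cauchyPDF, cauchyPDF, ← ENNReal.ofReal_coe_nnreal, ← ENNReal.ofReal_mul c.coe_nonneg,
    cauchyPDFReal_def', cauchyPDFReal_def', ← mul_sub, NNReal.coe_mul,
    mul_div_mul_left _ _ (NNReal.coe_ne_zero.2 hc.ne')]
  push_cast
  field_simp

theorem lintegral_comp_mul_left (h : ℝ → ℝ≥0∞) {c : ℝ≥0} (hc : 0 < c) :
    ∫⁻ y, h y = c * ∫⁻ y, h (c * y) := by
  have hc' : (c : ℝ) ≠ 0 := NNReal.coe_ne_zero.2 hc.ne'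
  conv_lhs => rw [← Real.smul_map_volume_mul_left hc']
  rw [lintegral_smul_measure, NNReal.abs_eq, ENNReal.ofReal_coe_nnreal, smul_eq_mul]
  exact congrArg _ ((Homeomorph.mulLeft₀ (c : ℝ) hc').measurableEmbedding.lintegral_map h)

theorem poissonAverage_comp_zpow_mul (j : ℤ) (h : ℝ → ℝ≥0∞) (x : ℝ) :
    poissonAverage j (fun y => h (2 ^ k * y)) x = poissonAverage (j - k) h (2 ^ k * x) := by
  have hc : (0 : ℝ≥0) < 2 ^ k := by positivity
  have hscale : (2 : ℝ≥0) ^ (-(j - k)) = 2 ^ k * 2 ^ (-j) := by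
    rw [← zpow_add₀ two_ne_zero, neg_sub, sub_eq_add_neg]
  rw [poissonAverage, poissonAverage, lintegral_comp_mul_left (fun y => _ * h y) hc,
    ← lintegral_const_mul' _ _ ENNReal.coe_ne_top]
  refine lintegral_congr fun y => ?_
  rw [← mul_cauchyPDF_mul hc x y, hscale, mul_assoc]
  push_cast
  rfl

theorem poissonAverage_zero_dilate_neg (f : SchwartzMap ℝ ℂ) (x : ℝ) :
    poissonAverage 0 (fun y => ‖dilate (-k) f y‖ₑ) (2 ^ k * x) =
      poissonAverage k (fun y => ‖f y‖ₑ) x := by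
  simp_rw [dilate_apply]
  rw [poissonAverage_comp_zpow_mul (-k) 0 fun y => ‖f y‖ₑ, zero_sub, neg_neg, ← mul_assoc,
    ← zpow_add₀ two_ne_zero, neg_add_cancel, zpow_zero, one_mul]

theorem fourier_dilate_apply (f : SchwartzMap ℝ ℂ) (ξ : ℝ) :
    𝓕 (⇑(dilate k f)) (2 ^ k * ξ) = (2 : ℝ) ^ (-k) • 𝓕 (⇑f) ξ := by
  rw [Real.fourier_eq', Real.fourier_eq', zpow_neg]
  have hscale := Measure.integral_comp_mul_left
    (fun v : ℝ => Complex.exp (↑(-2 * Real.pi * inner ℝ v ξ) * Complex.I) • f v) (2 ^ k)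
  rw [abs_of_pos (by positivity)] at hscale
  rw [← hscale]
  refine integral_congr_ae (.of_forall fun v => ?_)
  simp only [RCLike.inner_apply, conj_trivial, dilate_apply]
  ring_nf

variable {k} {a b : ℝ}

theorem HasFrequencyBand.dilate_neg {f : SchwartzMap ℝ ℂ}
    (hf : HasFrequencyBand (2 ^ k * a) (2 ^ k * b) f) : HasFrequencyBand a b (dilate (-k) f) := by
  intro ξ hξ
  have hk : (0 : ℝ) < 2 ^ k := by positivity
  have hfourier := fourier_dilate_apply (-k) f (2 ^ k * ξ)
  rw [← mul_assoc, ← zpow_add₀ two_ne_zero, neg_add_cancel, zpow_zero, one_mul] at hfourier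
  rw [hfourier] at hξ
  have hband := hf _ (right_ne_zero_of_smul hξ)
  rw [abs_mul, abs_of_pos hk] at hband
  exact ⟨lt_of_mul_lt_mul_left hband.1 hk.le, lt_of_mul_lt_mul_left hband.2 hk.le⟩

theorem exists_enorm_deriv_le_poissonAverage (ha : 0 < a) (hb : 0 < b) :
    ∃ C : ℝ≥0, ∀ (k : ℤ) (f : SchwartzMap ℝ ℂ), HasFrequencyBand (2 ^ k * a) (2 ^ k * b) f →
      ∀ x, ‖deriv f x‖ₑ ≤ C * 2 ^ k * poissonAverage k (fun y => ‖f y‖ₑ) x := by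
  obtain ⟨C, hC⟩ := exists_enorm_deriv_le_poissonAverage_zero ha hb
  refine ⟨C, fun k f hf x => ?_⟩
  have hbound := hC _ hf.dilate_neg (2 ^ k * x)
  rw [poissonAverage_zero_dilate_neg] at hbound
  rw [← derivCLM_apply ℂ, ← dilate_neg_dilate k f, derivCLM_dilate, smul_apply, dilate_apply,
    enorm_two_zpow_smul, derivCLM_apply, dilate_neg_dilate, mul_comm (C : ℝ≥0∞), mul_assoc]
  gcongr

theorem exists_antiderivative_enorm_le_poissonAverage (ha : 0 < a) (hb : 0 < b) :
    ∃ C : ℝ≥0, ∀ (k : ℤ) (f : SchwartzMap ℝ ℂ), HasFrequencyBand (2 ^ k * a) (2 ^ k * b) f →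
      ∃ G : SchwartzMap ℝ ℂ, derivCLM ℂ ℂ G = f ∧
        ∀ x, ‖G x‖ₑ ≤ C * 2 ^ (-k) * poissonAverage k (fun y => ‖f y‖ₑ) x := by
  obtain ⟨C, hC⟩ := exists_antiderivative_enorm_le_poissonAverage_zero ha hb
  refine ⟨C, fun k f hf => ?_⟩
  obtain ⟨G, hG, hbound⟩ := hC _ hf.dilate_neg
  refine ⟨(2 : ℂ) ^ (-k) • dilate k G, ?_, fun x => ?_⟩
  · rw [map_smul, derivCLM_dilate, hG, dilate_neg_dilate, smul_smul, ← zpow_add₀ two_ne_zero,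
      neg_add_cancel, zpow_zero, one_smul]
  · have hbound := hbound (2 ^ k * x)
    rw [poissonAverage_zero_dilate_neg] at hbound
    rw [smul_apply, dilate_apply, enorm_two_zpow_smul, mul_comm (C : ℝ≥0∞), mul_assoc]
    gcongr

end Dilation

/-! ### Decay of the dyadic pieces -/

section DyadicDifferenceDecay

variable {E : Type*} [NormedAddCommGroup E] [NormedSpace ℝ E] {G G' G'' : ℝ → E} {x : ℝ} {j : ℤ}

theorem enorm_dyadicDifference_le_of_enorm_le {M : ℝ≥0∞}
    (hM : ∀ z, |z - x| ≤ 2 ^ (-j) → ‖G z‖ₑ ≤ M) :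
    ‖dyadicDifference j G x‖ₑ ≤ 2 ^ j * (4 * M) := by
  rcases eq_or_ne M ∞ with rfl | hM'
  · simp [ENNReal.mul_top, (ENNReal.zpow_pos two_ne_zero ENNReal.ofNat_ne_top j).ne']
  lift M to ℝ≥0 using hM'
  have hnorm := norm_dyadicDifference_le_of_norm_le fun z hz =>
    enorm_le_coe.1 (hM z hz)
  rw [← ENNReal.coe_ofNat, ← ENNReal.coe_zpow two_ne_zero]
  exact_mod_cast hnorm

theorem enorm_dyadicDifference_le_of_enorm_deriv_deriv_le {M : ℝ≥0∞}
    (hG : ∀ z, HasDerivAt G (G' z) z) (hG' : ∀ z, HasDerivAt G' (G'' z) z)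
    (hM : ∀ z, |z - x| ≤ 2 ^ (-j) → ‖G'' z‖ₑ ≤ M) :
    ‖dyadicDifference j G x‖ₑ ≤ 2 ^ (-j) * M := by
  rcases eq_or_ne M ∞ with rfl | hM'
  · simp [ENNReal.mul_top, (ENNReal.zpow_pos two_ne_zero ENNReal.ofNat_ne_top (-j)).ne', -zpow_neg]
  lift M to ℝ≥0 using hM'
  have hnorm := norm_dyadicDifference_le_of_norm_deriv_deriv_le hG hG' fun z hz =>
    enorm_le_coe.1 (hM z hz)
  rw [← ENNReal.coe_ofNat, ← ENNReal.coe_zpow two_ne_zero]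
  exact_mod_cast hnorm

variable {h : ℝ → ℝ≥0∞} {s : ℝ} {C : ℝ≥0} {i m : ℤ}

theorem poissonAverage_le_poissonAverage_rpow (hh : Measurable h) (hs : 1 ≤ s) (hij : i ≤ j) {z : ℝ}
    (hz : |z - x| ≤ 2 ^ (-i)) :
    poissonAverage j h z ≤
      3 * 2 ^ (((j - i : ℤ) : ℝ) * s⁻¹) * poissonAverage i (fun y => h y ^ s) x ^ s⁻¹ := by
  have hs0 : 0 < s := by linarith
  calc poissonAverage j h z
      ≤ poissonAverage j (fun y => h y ^ s) z ^ s⁻¹ :=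
        (ENNReal.le_rpow_inv_iff hs0).2 (poissonAverage_rpow_le j hh hs z)
    _ ≤ (3 * 2 ^ (j - i) * poissonAverage i (fun y => h y ^ s) x) ^ s⁻¹ := by
        gcongr
        exact poissonAverage_le_mul_poissonAverage j _ hij hz
    _ = 3 ^ s⁻¹ * 2 ^ (((j - i : ℤ) : ℝ) * s⁻¹) *
          poissonAverage i (fun y => h y ^ s) x ^ s⁻¹ := by
        rw [ENNReal.mul_rpow_of_nonneg _ _ (by positivity),
          ENNReal.mul_rpow_of_nonneg _ _ (by positivity), ENNReal.rpow_mul, ENNReal.rpow_intCast]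
    _ ≤ _ := by
        gcongr
        simpa using ENNReal.rpow_le_rpow_of_exponent_le (x := 3) (by norm_num)
          (inv_le_one_of_one_le₀ hs)

theorem enorm_dyadicDifference_le_of_enorm_le_poissonAverage (hh : Measurable h) (hs : 1 ≤ s)
    (hm : m ≤ 0) (hbound : ∀ z, ‖G z‖ₑ ≤ C * 2 ^ (-i) * poissonAverage i h z) :
    ‖dyadicDifference (i + m) G x‖ₑ ≤
      12 * C * dyadicDecay (1 - s⁻¹) m * poissonAverage (i + m) (fun y => h y ^ s) x ^ s⁻¹ := by
  set W := poissonAverage (i + m) (fun y => h y ^ s) x ^ s⁻¹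
  have hdecay : (2 : ℝ≥0∞) ^ (i + m) * 2 ^ (-i) * 2 ^ (((i - (i + m) : ℤ) : ℝ) * s⁻¹) =
      dyadicDecay (1 - s⁻¹) m := by
    rw [dyadicDecay, ← ENNReal.rpow_intCast, ← ENNReal.rpow_intCast, ← ENNReal.rpow_add,
      ← ENNReal.rpow_add, abs_of_nonpos (by exact_mod_cast hm)]
    · congr 1
      push_cast
      ring
    all_goals simp
  calc ‖dyadicDifference (i + m) G x‖ₑ
      ≤ 2 ^ (i + m) * (4 * (C * 2 ^ (-i) * (3 * 2 ^ (((i - (i + m) : ℤ) : ℝ) * s⁻¹) * W))) :=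
        enorm_dyadicDifference_le_of_enorm_le fun z hz => (hbound z).trans <| by
          gcongr
          exact poissonAverage_le_poissonAverage_rpow hh hs (by linarith) hz
    _ = (4 * 3) * C *
          (2 ^ (i + m) * 2 ^ (-i) * 2 ^ (((i - (i + m) : ℤ) : ℝ) * s⁻¹)) * W := by ring
    _ = _ := by rw [hdecay]; norm_num

theorem enorm_dyadicDifference_le_of_enorm_deriv_le_poissonAverage (hh : Measurable h) (hs : 1 ≤ s)
    (hm : 0 ≤ m) (hG : ∀ z, HasDerivAt G (G' z) z) (hG' : ∀ z, HasDerivAt G' (G'' z) z)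
    (hbound : ∀ z, ‖G'' z‖ₑ ≤ C * 2 ^ i * poissonAverage i h z) :
    ‖dyadicDifference (i + m) G x‖ₑ ≤
      3 * C * dyadicDecay (1 - s⁻¹) m * poissonAverage i (fun y => h y ^ s) x ^ s⁻¹ := by
  set W := poissonAverage i (fun y => h y ^ s) x ^ s⁻¹
  have hdecay : (2 : ℝ≥0∞) ^ (-(i + m)) * 2 ^ i ≤ dyadicDecay (1 - s⁻¹) m := by
    have hm' : (0 : ℝ) ≤ m := by exact_mod_cast hm
    have hs' : 0 ≤ s⁻¹ := by positivity
    rw [← ENNReal.zpow_add two_ne_zero ENNReal.ofNat_ne_top, dyadicDecay, ← ENNReal.rpow_intCast,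
      abs_of_nonneg hm']
    refine ENNReal.rpow_le_rpow_of_exponent_le one_le_two ?_
    push_cast
    nlinarith
  calc ‖dyadicDifference (i + m) G x‖ₑ
      ≤ 2 ^ (-(i + m)) * (C * 2 ^ i * (3 * 2 ^ (((i - i : ℤ) : ℝ) * s⁻¹) * W)) :=
        enorm_dyadicDifference_le_of_enorm_deriv_deriv_le hG hG' fun z hz => (hbound z).trans <| by
          gcongr
          refine poissonAverage_le_poissonAverage_rpow hh hs le_rfl (hz.trans ?_)
          exact zpow_le_zpow_right₀ one_le_two (by linarith)
    _ = 3 * C * (2 ^ (-(i + m)) * 2 ^ i) * W := by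
        rw [sub_self, Int.cast_zero, zero_mul, ENNReal.rpow_zero]
        ring
    _ ≤ _ := by gcongr

open SchwartzMap in
theorem exists_antiderivative_enorm_dyadicDifference_le {a b : ℝ} (ha : 0 < a) (hb : 0 < b)
    (hs : 1 ≤ s) : ∃ C : ℝ≥0, ∀ (i : ℤ) (f : SchwartzMap ℝ ℂ),
      HasFrequencyBand (2 ^ i * a) (2 ^ i * b) f →
      ∃ G : SchwartzMap ℝ ℂ, (∀ x, HasDerivAt G (f x) x) ∧ ∀ (m : ℤ) x,
        ‖dyadicDifference (i + m) G x‖ₑ ≤ C * dyadicDecay (1 - s⁻¹) m *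
          poissonAverage (i + min m 0) (fun y => ‖f y‖ₑ ^ s) x ^ s⁻¹ := by
  obtain ⟨C₁, hC₁⟩ := exists_enorm_deriv_le_poissonAverage ha hb
  obtain ⟨C₂, hC₂⟩ := exists_antiderivative_enorm_le_poissonAverage ha hb
  refine ⟨3 * C₁ + 12 * C₂, fun i f hf => ?_⟩
  obtain ⟨G, hGf, hG⟩ := hC₂ i f hf
  have hderiv (x : ℝ) : HasDerivAt G (f x) x := by
    rw [← hGf]
    exact G.differentiableAt.hasDerivAt
  have hmeas : Measurable fun y => ‖f y‖ₑ := f.continuous.measurable.enorm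
  refine ⟨G, hderiv, fun m x => ?_⟩
  rw [ENNReal.coe_add, ENNReal.coe_mul, ENNReal.coe_mul, ENNReal.coe_ofNat, ENNReal.coe_ofNat]
  rcases le_total 0 m with hm | hm
  · rw [min_eq_right hm, add_zero]
    refine (enorm_dyadicDifference_le_of_enorm_deriv_le_poissonAverage hmeas hs hm hderiv
      (fun z => f.differentiableAt.hasDerivAt) (hC₁ i f hf)).trans ?_
    gcongr
    exact le_self_add
  · rw [min_eq_left hm]
    refine (enorm_dyadicDifference_le_of_enorm_le_poissonAverage hmeas hs hm hG).trans ?_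
    gcongr
    exact le_add_self

end DyadicDifferenceDecay

/-! ### Variation of band-limited families -/

section IntegerVariation

variable {E : Type*} [NormedAddCommGroup E] (b : ℤ → E)

theorem sum_Ico_natCast_sub (A B M : ℕ) :
    ∑ n ∈ Finset.Ico A B, b (n - M) = ∑ i ∈ Finset.Ico (A - M : ℤ) (B - M), b i := by
  refine Finset.sum_nbij (fun n : ℕ => (n - M : ℤ)) (fun n hn => ?_) (fun n _ k _ h => ?_)
    (fun i hi => ⟨(i + M).toNat, ?_⟩) fun _ _ => rfl
  · simp only [Finset.mem_Ico] at hn ⊢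
    omega
  · simpa using h
  · simp only [Finset.coe_Ico, Set.mem_Ico] at hi ⊢
    omega

theorem variation_natCast_sub_mono (t : ℝ) :
    Monotone fun M : ℕ => variation t fun n : ℕ => b (n - M) := by
  refine fun M M' hM => iSup_le fun N => ?_
  have hmono : Monotone fun k => N k + (M' - M) := N.monotone.add_const _
  have hshift (k : ℕ) : ((N k + (M' - M) : ℕ) : ℤ) - M' = N k - M := by omega
  simpa only [sum_Ico_natCast_sub, hshift] using le_variation t (fun n : ℕ => b (n - M')) hmono

theorem variation_eq_iSup_natCast_sub (t : ℝ) :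
    variation t b = ⨆ M : ℕ, variation t fun n : ℕ => b (n - M) := by
  refine le_antisymm (iSup_le fun N => ?_) (iSup_le fun M => iSup_le fun N => ?_)
  · set M := (N 0).natAbs
    have hmono : Monotone fun k => (N k + M).toNat :=
      fun _ _ h => Int.toNat_le_toNat (add_le_add_left (N.monotone h) _)
    have hshift (k : ℕ) : ((N k + M).toNat : ℤ) - M = N k := by
      have := N.monotone k.zero_le
      omega
    refine le_iSup_of_le M ?_
    simpa only [sum_Ico_natCast_sub, hshift] using le_variation t (fun n : ℕ => b (n - M)) hmono
  · have hmono : Monotone fun k => (N k - M : ℤ) :=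
      fun _ _ h => sub_le_sub_right (Int.ofNat_le.2 (N.monotone h)) _
    simpa only [sum_Ico_natCast_sub] using le_variation t b hmono

theorem tsum_sum_Ioc_le_variation (t : ℝ) {N : ℕ → ℤ} (hN : Monotone N) :
    (∑' k, ‖∑ i ∈ Finset.Ioc (N k) (N (k + 1)), b i‖ₑ ^ t) ^ (1 / t) ≤ variation t b := by
  have hIoc (k : ℕ) : Finset.Ioc (N k) (N (k + 1)) = Finset.Ico (N k + 1) (N (k + 1) + 1) := by
    ext i
    simp only [Finset.mem_Ioc, Finset.mem_Ico]
    omega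
  simpa only [hIoc] using le_variation t b (hN.add_const 1)

end IntegerVariation

section DyadicVariation

variable {E : Type*} [NormedAddCommGroup E] [NormedSpace ℝ E]

theorem isSwapDifference_dyadicDifference_natCast_sub (G : ℤ → ℝ → E) (m : ℤ) (M : ℕ) :
    IsSwapDifference (fun n : ℕ => dyadicIndex (n + (m - M)))
      (fun n => dyadicSwap (n + (m - M)))
      (fun n => dyadicDifference (n - M + m) (G (n - M))) := by
  simp_rw [sub_add_eq_add_sub, add_sub_assoc]
  exact isSwapDifference_dyadicDifference (m - M) fun n => G (n - M)

theorem measurable_variation_dyadicDifference_natCast_sub {t : ℝ} (ht : 0 < t) (G : ℤ → ℝ → E)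
    (m : ℤ) (M : ℕ) : Measurable fun x =>
      variation t fun n : ℕ => dyadicDifference (n - M + m) (G (n - M)) x :=
  (isSwapDifference_dyadicDifference_natCast_sub G m M).measurable_variation
    (swapFiltration_dyadic (m - M)) ht

theorem measurable_variation_dyadicDifference {t : ℝ} (ht : 0 < t) (G : ℤ → ℝ → E) (m : ℤ) :
    Measurable fun x => variation t fun i => dyadicDifference (i + m) (G i) x := by
  simp_rw [variation_eq_iSup_natCast_sub]
  exact .iSup fun M => measurable_variation_dyadicDifference_natCast_sub ht G m M

variable {p r t : ℝ}

theorem Admissible.exists_lintegral_variation_dyadicDifference_rpow_le (h : Admissible r t)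
    (hp : 0 < p) (E : Type*) [NormedAddCommGroup E] [InnerProductSpace ℝ E] :
    ∃ C : ℝ≥0, ∀ (G : ℤ → ℝ → E) (m : ℤ),
      ∫⁻ x, (variation t fun i => dyadicDifference (i + m) (G i) x) ^ p ≤
        C * ∫⁻ x, (∑' i, ‖dyadicDifference (i + m) (G i) x‖ₑ ^ r) ^ (p / r) := by
  obtain ⟨C, hC⟩ := h.exists_lintegral_variation_rpow_le hp ℝ ℤ E
  have ht : 0 < t := h.pos.trans_le h.le
  refine ⟨C, fun G m => ?_⟩
  set D : ℤ → ℝ → E := fun i => dyadicDifference (i + m) (G i)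
  have hmeas (M : ℕ) : Measurable fun x => (variation t fun n : ℕ => D (n - M) x) ^ p :=
    (measurable_variation_dyadicDifference_natCast_sub ht G m M).pow_const p
  have hmono : Monotone fun (M : ℕ) x => (variation t fun n : ℕ => D (n - M) x) ^ p :=
    fun _ _ hM x => ENNReal.rpow_le_rpow (variation_natCast_sub_mono (D · x) t hM) hp.le
  have hpow (x : ℝ) : variation t (D · x) ^ p
      = ⨆ M : ℕ, (variation t fun n : ℕ => D (n - M) x) ^ p := by
    rw [variation_eq_iSup_natCast_sub, iSup_rpow _ hp]
  change ∫⁻ x, variation t (D · x) ^ p ≤ _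
  simp_rw [hpow]
  rw [lintegral_iSup hmeas hmono]
  refine iSup_le fun M => (hC (isSwapDifference_dyadicDifference_natCast_sub G m M)
    (swapFiltration_dyadic (m - M))).trans ?_
  have hpr : 0 ≤ p / r := (div_pos hp h.pos).le
  gcongr _ * ∫⁻ x, ?_ ^ _ with x
  exact ENNReal.tsum_comp_le_tsum_of_injective (f := fun n : ℕ => (n - M : ℤ))
    (fun n k hnk => by simpa using hnk) fun i => ‖D i x‖ₑ ^ r

theorem exists_lintegral_tsum_poissonAverage_rpow_le (ι : Type*) [Countable ι] {ρ q : ℝ}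
    (hρ : 1 < ρ) (hq : 1 < q) :
    ∃ C : ℝ≥0, ∀ (l : ι → ℤ) (h : ι → ℝ → ℝ≥0∞), (∀ i, Measurable (h i)) →
      ∫⁻ x, (∑' i, poissonAverage (l i) (h i) x ^ ρ) ^ (q / ρ) ≤
        C * ∫⁻ x, (∑' i, h i x ^ ρ) ^ (q / ρ) := by
  obtain ⟨C, hC⟩ := exists_lintegral_sum_poissonAverage_rpow_le ι hρ hq
  have hqρ : 0 < q / ρ := by positivity
  refine ⟨C, fun l h hh => ?_⟩
  rw [lintegral_tsum_rpow (fun i => (measurable_poissonAverage _ (hh i)).pow_const ρ) hqρ]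
  refine iSup_le fun s => (hC s l h hh).trans ?_
  gcongr with x
  exact ENNReal.sum_le_tsum s

theorem Admissible.exists_lintegral_variation_dyadicDifference_rpow_le_of_le_poissonAverage
    (h : Admissible r t) {s : ℝ} (hs : 1 < s) (hsp : s < p) (hsr : s < r) (E : Type*)
    [NormedAddCommGroup E] [InnerProductSpace ℝ E] :
    ∃ C : ℝ≥0, ∀ (G : ℤ → ℝ → E) (m : ℤ) (l : ℤ → ℤ) (g : ℤ → ℝ → ℝ≥0∞) (κ : ℝ≥0∞), κ ≠ ∞ →
      (∀ i, Measurable (g i)) →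
      (∀ i x, ‖dyadicDifference (i + m) (G i) x‖ₑ ≤
        κ * poissonAverage (l i) (fun y => g i y ^ s) x ^ s⁻¹) →
      ∫⁻ x, (variation t fun i => dyadicDifference (i + m) (G i) x) ^ p ≤
        C * κ ^ p * ∫⁻ x, (∑' i, g i x ^ r) ^ (p / r) := by
  have hs0 : 0 < s := by positivity
  have hp : 0 < p := by linarith
  have hr : 0 < r := h.pos
  obtain ⟨C₁, hC₁⟩ := h.exists_lintegral_variation_dyadicDifference_rpow_le hp E
  obtain ⟨C₂, hC₂⟩ := exists_lintegral_tsum_poissonAverage_rpow_le ℤ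
    ((one_lt_div hs0).2 hsr) ((one_lt_div hs0).2 hsp)
  have hexp : p / s / (r / s) = p / r := by field_simp
  refine ⟨C₁ * C₂, fun G m l g κ hκ hg hD => ?_⟩
  set A : ℤ → ℝ → ℝ≥0∞ := fun i => poissonAverage (l i) fun y => g i y ^ s
  have hDr (i : ℤ) (x : ℝ) :
      ‖dyadicDifference (i + m) (G i) x‖ₑ ^ r ≤ κ ^ r * A i x ^ (r / s) := by
    refine (ENNReal.rpow_le_rpow (hD i x) hr.le).trans_eq ?_
    rw [ENNReal.mul_rpow_of_nonneg _ _ hr.le, ← ENNReal.rpow_mul, inv_mul_eq_div]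
  calc ∫⁻ x, (variation t fun i => dyadicDifference (i + m) (G i) x) ^ p
      ≤ C₁ * ∫⁻ x, (∑' i, ‖dyadicDifference (i + m) (G i) x‖ₑ ^ r) ^ (p / r) := hC₁ G m
    _ ≤ C₁ * ∫⁻ x, κ ^ p * (∑' i, A i x ^ (r / s)) ^ (p / r) := by
        gcongr with x
        refine (ENNReal.rpow_le_rpow (ENNReal.tsum_le_tsum fun i => hDr i x)
          (by positivity)).trans_eq ?_
        rw [ENNReal.tsum_mul_left, ENNReal.mul_rpow_of_nonneg _ _ (by positivity),
          ← ENNReal.rpow_mul, mul_div_cancel₀ _ hr.ne']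
    _ = C₁ * κ ^ p * ∫⁻ x, (∑' i, A i x ^ (r / s)) ^ (p / r) := by
        rw [lintegral_const_mul' _ _ (ENNReal.rpow_ne_top_of_nonneg hp.le hκ), mul_assoc]
    _ ≤ C₁ * κ ^ p * (C₂ * ∫⁻ x, (∑' i, g i x ^ r) ^ (p / r)) := by
        gcongr
        simpa [hexp, ← ENNReal.rpow_mul, mul_div_cancel₀ r hs0.ne'] using
          hC₂ l (fun i y => g i y ^ s) fun i => (hg i).pow_const s
    _ = (C₁ * C₂ : ℝ≥0) * κ ^ p * ∫⁻ x, (∑' i, g i x ^ r) ^ (p / r) := by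
        push_cast
        ring

end DyadicVariation

section FrequencyBands

theorem Admissible.exists_lintegral_variation_rpow_le_of_hasFrequencyBand {p r t a b : ℝ}
    (h : Admissible r t) (hp : 1 < p) (ha : 0 < a) (hb : 0 < b) :
    ∃ C : ℝ≥0, ∀ f : ℤ → SchwartzMap ℝ ℂ,
      (∀ i, HasFrequencyBand (2 ^ i * a) (2 ^ i * b) (f i)) →
      (∫⁻ x, variation t (f · x) ^ p) ^ (1 / p) ≤
        C * (∫⁻ x, (∑' i, ‖f i x‖ₑ ^ r) ^ (p / r)) ^ (1 / p) := by
  obtain ⟨s, hs, hs'⟩ := exists_between (lt_min hp h.one_lt)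
  obtain ⟨hsp, hsr⟩ := lt_min_iff.1 hs'
  obtain ⟨C, hC⟩ :=
    h.exists_lintegral_variation_dyadicDifference_rpow_le_of_le_poissonAverage hs hsp hsr ℂ
  obtain ⟨K, hK⟩ := exists_antiderivative_enorm_dyadicDifference_le ha hb hs.le
  set δ := 1 - s⁻¹
  have hδ : 0 < δ := sub_pos.2 (inv_lt_one_of_one_lt₀ hs)
  have hp0 : 0 < p := by positivity
  lift ∑' m, dyadicDecay δ m to ℝ≥0 using tsum_dyadicDecay_ne_top hδ with S hS
  refine ⟨C ^ (1 / p) * K * S, fun f hf => ?_⟩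
  choose G hG hD using fun i => hK i (f i) (hf i)
  set V : ℤ → ℝ → ℝ≥0∞ := fun m x => variation t fun i => dyadicDifference (i + m) (G i) x
  set R := (∫⁻ x, (∑' i, ‖f i x‖ₑ ^ r) ^ (p / r)) ^ (1 / p)
  have hV (m : ℤ) : (∫⁻ x, V m x ^ p) ^ (1 / p) ≤ C ^ (1 / p) * (K * dyadicDecay δ m) * R := by
    refine (ENNReal.rpow_le_rpow (hC (fun i => G i) m (fun i => i + min m 0) (fun i x => ‖f i x‖ₑ)
      (K * dyadicDecay δ m) (ENNReal.mul_ne_top coe_ne_top (dyadicDecay_ne_top δ m))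
      (fun i => (f i).continuous.measurable.enorm) fun i => hD i m)
      (by positivity)).trans_eq ?_
    rw [ENNReal.mul_rpow_of_nonneg _ _ (by positivity),
      ENNReal.mul_rpow_of_nonneg _ _ (by positivity), ← ENNReal.rpow_mul _ p,
      mul_one_div_cancel hp0.ne', ENNReal.rpow_one]
  calc (∫⁻ x, variation t (f · x) ^ p) ^ (1 / p)
      ≤ (∫⁻ x, (∑' m, V m x) ^ p) ^ (1 / p) := by
        gcongr with x
        refine variation_le_tsum_variation h.one_le_right fun u => ?_
        exact enorm_sum_le_tsum_dyadicDifference u id (fun i => hG i x)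
          fun i => ⟨_, SchwartzMap.norm_le_seminorm ℝ (G i)⟩
    _ ≤ ∑' m, (∫⁻ x, V m x ^ p) ^ (1 / p) :=
        lintegral_Lp_tsum_le (measurable_variation_dyadicDifference
          (one_pos.trans_le h.one_le_right) fun i => G i) hp.le
    _ ≤ ∑' m, C ^ (1 / p) * (K * dyadicDecay δ m) * R := ENNReal.tsum_le_tsum hV
    _ = (C ^ (1 / p) * K * S : ℝ≥0) * R := by
        rw [ENNReal.tsum_mul_right, ENNReal.tsum_mul_left, ENNReal.tsum_mul_left, ← hS]
        push_cast [ENNReal.coe_rpow_of_nonneg C (one_div_nonneg.2 hp0.le)]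
        ring

theorem hasFrequencyBand_of_isContLPFamily {N : ℝ} {f : ℤ → SchwartzMap ℝ ℂ}
    (hf : IsContLPFamily N f) (i : ℤ) :
    HasFrequencyBand (2 ^ i * 2 ^ (-N)) (2 ^ i * 2 ^ N) (f i) := by
  simpa only [HasFrequencyBand, ← Real.rpow_intCast, ← Real.rpow_add two_pos, sub_eq_add_neg]
    using hf i

end FrequencyBands

end Lepingle

theorem continuous_lepingle_pisier_xu_general (p r t Nb : ℝ) (hp : 1 < p) (hr1 : 1 ≤ r)
    (hr2 : r ≤ 2) (hrt : r ≤ t) (hcase : r < 2 ∨ r < t) :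
    ∃ C : ℝ≥0, 0 < C ∧ ∀ f : ℤ → SchwartzMap ℝ ℂ, IsContLPFamily Nb f →
      (∫⁻ x, Lepingle.variation t (f · x) ^ p) ^ (1 / p) ≤
        C * (∫⁻ x, ((∑' i, ‖f i x‖ₑ ^ r) ^ (1 / r)) ^ p) ^ (1 / p) := by
  rcases hr1.eq_or_lt with rfl | hr1
  · refine ⟨1, one_pos, fun f _ => ?_⟩
    rw [ENNReal.coe_one, one_mul]
    gcongr with x
    simpa using Lepingle.variation_le_tsum hrt (f · x)
  · obtain ⟨C, hC⟩ :=
      Lepingle.Admissible.exists_lintegral_variation_rpow_le_of_hasFrequencyBand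
        ⟨hr1, hr2, hrt, hcase⟩ hp (a := 2 ^ (-Nb)) (b := 2 ^ Nb) (by positivity) (by positivity)
    refine ⟨C + 1, by positivity, fun f hf => ?_⟩
    simp_rw [← ENNReal.rpow_mul _ (1 / r), one_div_mul_eq_div]
    refine (hC f (Lepingle.hasFrequencyBand_of_isContLPFamily hf)).trans ?_
    gcongr
    exact le_self_add

/-- Lépingle / Pisier–Xu variational inequality, continuous case. -/
theorem continuous_lepingle_pisier_xu
    (p r t Nb : ℝ) (hp : 1 < p) (hr1 : 1 ≤ r) (hr2 : r ≤ 2)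
    (hrt : r ≤ t) (hcase : r < 2 ∨ r < t) (hNb : 0 < Nb) :
    ∃ C : ℝ≥0, 0 < C ∧
      ∀ (f : ℤ → SchwartzMap ℝ ℂ), IsContLPFamily Nb f →
      ∀ (Nk : ℕ → ℝ → ℤ), IsJumpCollection Nk →
      (∫⁻ x : ℝ,
          ((∑' k : ℕ, (ENNReal.ofReal (norm
              (∑ i ∈ Finset.Ioc (Nk k x) (Nk (k + 1) x), f i x))) ^ t) ^ (1 / t)) ^ p) ^ (1 / p)
        ≤ (C : ℝ≥0∞) *
      (∫⁻ x : ℝ,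
          ((∑' i : ℤ, (ENNReal.ofReal (norm (f i x))) ^ r) ^ (1 / r)) ^ p) ^ (1 / p) := by
  simp only [ofReal_norm]
  obtain ⟨C, hC0, hC⟩ := continuous_lepingle_pisier_xu_general p r t Nb hp hr1 hr2 hrt hcase
  refine ⟨C, hC0, fun f hf Nk hNk => le_trans ?_ (hC f hf)⟩
  gcongr with x
  exact Lepingle.tsum_sum_Ioc_le_variation (f · x) t (monotone_nat_of_le_succ (hNk.2 · x))

end
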